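/- For N ∈ ℕ let R(N) be the set of reduced words w = x^{a_1}y^{b_1}···x^{a_r}y^{b_r} in F_2 whose complexity r is a prime number and whose length ℓ(w) = Σ_i(|a_i| + |b_i|) is at most N, and let S(N) ⊆ R(N) be the subset of those w for which the family of word maps P_{w,q}, q = p^n, is p-equidistributed for all but finitely many primes p. Then there exist constants C > 0 and 0 < c < 1 such that #(R(N) \ S(N)) ≤ C·c^N·#R(N) for all N ≥ 4; in particular, S is exponentially generic in R. -/

import Mathlib

open Matrix Polynomial

abbrev SL2 (K : Type) [CommRing K] : Type := Matrix.SpecialLinearGroup (Fin 2) K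

abbrev PSL2 (K : Type) [CommRing K] : Type := SL2 K ⧸ Subgroup.center (SL2 K)

/-- Evaluation of a word `w ∈ F₂` at a pair of group elements. -/
def wordEval {G : Type*} [Group G] (w : FreeGroup (Fin 2)) (g₁ g₂ : G) : G :=
  (FreeGroup.lift ![g₁, g₂]) w

/-- The word map `P_{w,G} : G × G → G` for `G = SL(2,K)`. -/
def wordMap (w : FreeGroup (Fin 2)) (K : Type) [CommRing K] :
    SL2 K × SL2 K → SL2 K := fun g => wordEval w g.1 g.2

/-- The point `(tr x, tr xy, tr y)`. -/
def trPoint {K : Type} [CommRing K] (x y : SL2 K) : Fin 3 → K :=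
  ![Matrix.trace (x : Matrix (Fin 2) (Fin 2) K),
    Matrix.trace ((x * y : SL2 K) : Matrix (Fin 2) (Fin 2) K),
    Matrix.trace (y : Matrix (Fin 2) (Fin 2) K)]

/-- `f ∈ ℤ[s,u,t]` is the trace polynomial of the word `w`. -/
def IsTracePolynomial (w : FreeGroup (Fin 2)) (f : MvPolynomial (Fin 3) ℤ) : Prop :=
  ∀ (K : Type) [CommRing K], ∀ x y : SL2 K,
    Matrix.trace ((wordEval w x y : SL2 K) : Matrix (Fin 2) (Fin 2) K) =
      MvPolynomial.eval (trPoint x y) (MvPolynomial.map (Int.castRingHom K) f)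

/-- `f : X → Y` is `ε`-equidistributed. -/
def IsEquidistributed {X Y : Type*} (f : X → Y) (ε : ℝ) : Prop :=
  ∃ Y' : Set Y,
    (1 - ε) * (Nat.card Y) < (Nat.card Y' : ℝ) ∧
    ∀ y ∈ Y',
      |(Nat.card {x : X // f x = y} : ℝ) - (Nat.card X : ℝ) / (Nat.card Y)| <
        ε * (Nat.card X) / (Nat.card Y)

/-- The family of word maps on `SL(2,p^n)` is `p`-equidistributed. -/
def IsPEquidistributed (w : FreeGroup (Fin 2)) (p : ℕ) (hp : p.Prime) : Prop :=
  letI : Fact p.Prime := ⟨hp⟩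
  ∃ ε : ℕ → ℝ,
    Filter.Tendsto (fun n : ℕ => ε (p ^ n)) Filter.atTop (nhds 0) ∧
    ∀ᶠ n : ℕ in Filter.atTop,
      IsEquidistributed (wordMap w (GaloisField p n)) (ε (p ^ n))

/-- The family of word maps on `SL(2,q)`, `q` ranging over all prime powers,
is equidistributed. -/
def IsEquidistributedFamily (w : FreeGroup (Fin 2)) : Prop :=
  ∃ ε : ℕ → ℝ,
    Filter.Tendsto ε Filter.atTop (nhds 0) ∧
    ∀ (p : ℕ) (hp : p.Prime),
      letI : Fact p.Prime := ⟨hp⟩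
      ∀ᶠ n : ℕ in Filter.atTop,
        IsEquidistributed (wordMap w (GaloisField p n)) (ε (p ^ n))

/-- Reduction of an integral polynomial mod `p`. -/
noncomputable def reduceMod (p : ℕ) (P : MvPolynomial (Fin 3) ℤ) : MvPolynomial (Fin 3) (ZMod p) :=
  MvPolynomial.map (Int.castRingHom (ZMod p)) P

/-- `P = h ∘ Q` with `deg Q ≥ 1`, `deg h ≥ 2`. -/
def IsCompositePoly (F : Type) [CommRing F] (P : MvPolynomial (Fin 3) F) : Prop :=
  ∃ (Q : MvPolynomial (Fin 3) F) (h : Polynomial F),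
    1 ≤ Q.totalDegree ∧ 2 ≤ h.natDegree ∧ P = Polynomial.aeval Q h

def IsPComposite (p : ℕ) (P : MvPolynomial (Fin 3) ℤ) : Prop :=
  IsCompositePoly (ZMod p) (reduceMod p P)

/-- `h` is a permutation polynomial of every finite extension of `F_p`. -/
def IsPermAllExt (p : ℕ) (h : Polynomial (ZMod p)) : Prop :=
  ∀ (K : Type) [Field K] [Algebra (ZMod p) K] [Finite K],
    Function.Bijective fun z : K => Polynomial.aeval z h

def IsPSpecial (p : ℕ) (P : MvPolynomial (Fin 3) ℤ) : Prop :=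
  IsPComposite p P ∧
    ∃ (Q : MvPolynomial (Fin 3) (ZMod p)) (h : Polynomial (ZMod p)),
      1 ≤ Q.totalDegree ∧ 2 ≤ h.natDegree ∧
      reduceMod p P = Polynomial.aeval Q h ∧ IsPermAllExt p h

def AlmostNoncomposite (P : MvPolynomial (Fin 3) ℤ) : Prop :=
  ∀ p : ℕ, p.Prime → ¬ IsPComposite p P ∨ IsPSpecial p P

/-- The reduced word `x^{a₁}y^{b₁} ⋯ x^{a_r}y^{b_r}`. -/
def wordOf {r : ℕ} (a b : Fin r → ℤ) : FreeGroup (Fin 2) :=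
  (List.ofFn fun i : Fin r =>
    FreeGroup.of (0 : Fin 2) ^ a i * FreeGroup.of (1 : Fin 2) ^ b i).prod

/-- The set of reduced words of prime complexity and length at most `N`. -/
def RWords (N : ℕ) : Set (FreeGroup (Fin 2)) :=
  {w | ∃ r : ℕ, r.Prime ∧ ∃ a b : Fin r → ℤ,
    (∀ i, a i ≠ 0 ∧ b i ≠ 0) ∧ w = wordOf a b ∧
    (∑ i, ((a i).natAbs + (b i).natAbs)) ≤ N}

/-- The subset of those words of `RWords N` that are `p`-equidistributed for all but
finitely many primes `p`. -/
def SWords (N : ℕ) : Set (FreeGroup (Fin 2)) :=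
  {w ∈ RWords N | {p : ℕ | ∃ hp : p.Prime, ¬ IsPEquidistributed w p hp}.Finite}

open Matrix Polynomial

namespace EqW

section curve
variable {E : Type} [Field E]

/-- the class of `s` -/
noncomputable def cs (F : E[X][X]) : AdjoinRoot F := AdjoinRoot.of F X

noncomputable def W (F : E[X][X]) (d m : ℕ) : Submodule E (AdjoinRoot F) :=
  Submodule.span E {x | ∃ i j : ℕ, i + d * j ≤ m ∧ x = cs F ^ i * AdjoinRoot.root F ^ j}

noncomputable def bas {F : E[X][X]} (hF : F.Monic) :
    Module.Basis (ℕ × Fin F.natDegree) E (AdjoinRoot F) :=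
  (Polynomial.basisMonomials E).smulTower (AdjoinRoot.powerBasisAux' hF)

lemma bas_apply {F : E[X][X]} (hF : F.Monic) (ij : ℕ × Fin F.natDegree) :
    bas hF ij = cs F ^ ij.1 * AdjoinRoot.root F ^ (ij.2 : ℕ) := by
  have h : AdjoinRoot.powerBasisAux' hF ij.2 = AdjoinRoot.root F ^ (ij.2 : ℕ) :=
    (AdjoinRoot.powerBasis' hF).basis_eq_pow ij.2
  rw [bas, Module.Basis.smulTower_apply, h, Algebra.smul_def]
  congr 1
  rw [AdjoinRoot.algebraMap_eq, cs, ← map_pow, Polynomial.coe_basisMonomials, Polynomial.X_pow_eq_monomial]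

lemma W_mono (F : E[X][X]) (d : ℕ) {m n : ℕ} (h : m ≤ n) : W F d m ≤ W F d n := by
  apply Submodule.span_mono
  rintro x ⟨i, j, hij, rfl⟩
  exact ⟨i, j, hij.trans h, rfl⟩

lemma mem_W (F : E[X][X]) (d : ℕ) {m i j : ℕ} (h : i + d * j ≤ m) :
    cs F ^ i * AdjoinRoot.root F ^ j ∈ W F d m := Submodule.subset_span ⟨i, j, h, rfl⟩

lemma W_mul {F : E[X][X]} {d m n : ℕ} {x y : AdjoinRoot F} (hx : x ∈ W F d m) (hy : y ∈ W F d n) :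
    x * y ∈ W F d (m + n) := by
  have : W F d m * W F d n ≤ W F d (m + n) := by
    rw [W, W, Submodule.span_mul_span]
    apply Submodule.span_le.2
    rintro _ ⟨_, ⟨i, j, hij, rfl⟩, _, ⟨i', j', hij', rfl⟩, rfl⟩
    have := mem_W F d (m := m + n) (i := i + i') (j := j + j') (by nlinarith)
    rw [pow_add, pow_add, mul_mul_mul_comm] at this
    exact this
  exact this (Submodule.mul_mem_mul hx hy)

lemma W_one (F : E[X][X]) (d m : ℕ) : (1 : AdjoinRoot F) ∈ W F d m := by
  have := mem_W F d (m := m) (i := 0) (j := 0) (by simp)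
  simpa using this

lemma W_pow {F : E[X][X]} {d m : ℕ} {x : AdjoinRoot F} (hx : x ∈ W F d m) (k : ℕ) :
    x ^ k ∈ W F d (k * m) := by
  induction k with
  | zero => simpa using W_one F d 0
  | succ k ih => rw [pow_succ, add_mul, one_mul]; exact W_mul ih hx

lemma W_ex {F : E[X][X]} (hF : F.Monic) (d : ℕ) (x : AdjoinRoot F) : ∃ m, x ∈ W F d m := by
  have hx : x ∈ Submodule.span E (Set.range (bas hF)) := by
    rw [Module.Basis.span_eq]; trivial
  induction hx using Submodule.span_induction with
  | mem x h =>
    obtain ⟨ij, rfl⟩ := h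
    rw [bas_apply]
    exact ⟨_, mem_W F d le_rfl⟩
  | zero => exact ⟨0, zero_mem _⟩
  | add x y _ _ hx hy =>
    obtain ⟨m, hm⟩ := hx
    obtain ⟨n, hn⟩ := hy
    exact ⟨m + n, add_mem (W_mono F d (by omega) hm) (W_mono F d (by omega) hn)⟩
  | smul a x _ hx =>
    obtain ⟨m, hm⟩ := hx
    exact ⟨m, Submodule.smul_mem _ _ hm⟩

lemma aux_red {R : Type} [CommRing R] (s z : R) (c : ℕ → R) (i : ℕ) {r j : ℕ} (hj : r ≤ j)
    (h0 : ∑ k ∈ Finset.range r, c k * z ^ k + z ^ r = 0) :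
    s ^ i * z ^ j = - ∑ k ∈ Finset.range r, c k * (s ^ i * z ^ (k + (j - r))) := by
  have h3 : z ^ j = z ^ r * z ^ (j - r) := by
    rw [← pow_add]; congr 1; omega
  rw [h3, eq_neg_of_add_eq_zero_right h0, neg_mul, mul_neg, Finset.sum_mul, Finset.mul_sum]
  congr 1
  apply Finset.sum_congr rfl
  intro k _
  ring

lemma W_red {F : E[X][X]} (hF : F.Monic) {d : ℕ}
    (hd : ∀ j, (F.coeff j).natDegree ≤ d * (F.natDegree - j)) (m : ℕ) :
    ∀ j i : ℕ, i + d * j ≤ m → cs F ^ i * AdjoinRoot.root F ^ j ∈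
      Submodule.span E (Set.range fun x : Fin (m + 1) × Fin F.natDegree =>
        cs F ^ (x.1 : ℕ) * AdjoinRoot.root F ^ (x.2 : ℕ)) := by
  intro j
  induction j using Nat.strong_induction_on with
  | _ j ih =>
  intro i hij
  by_cases hj : j < F.natDegree
  · exact Submodule.subset_span ⟨(⟨i, by omega⟩, ⟨j, hj⟩), rfl⟩
  · push Not at hj
    set r := F.natDegree with hr
    have h0 : ∑ k ∈ Finset.range r, AdjoinRoot.of F (F.coeff k) * AdjoinRoot.root F ^ k
        + AdjoinRoot.root F ^ r = 0 := by
      have := AdjoinRoot.eval₂_root F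
      rw [Polynomial.eval₂_eq_sum_range, Finset.sum_range_succ] at this
      rw [← this, hF.coeff_natDegree, map_one, one_mul]
    have h1 := aux_red (cs F) (AdjoinRoot.root F) (fun k => AdjoinRoot.of F (F.coeff k)) i hj h0
    rw [h1]
    apply neg_mem
    apply sum_mem
    intro k hk
    rw [Finset.mem_range] at hk
    rw [Polynomial.as_sum_range (F.coeff k), map_sum, Finset.sum_mul]
    apply sum_mem
    intro l hl
    rw [Finset.mem_range] at hl
    have h4 : AdjoinRoot.of F (monomial l ((F.coeff k).coeff l)) * (cs F ^ i * AdjoinRoot.root F ^ (k + (j - r)))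
       = ((F.coeff k).coeff l) • (cs F ^ (i + l) * AdjoinRoot.root F ^ (k + (j - r))) := by
      rw [← Polynomial.smul_X_eq_monomial, ← AdjoinRoot.smul_of, map_pow, pow_add, ← cs, smul_mul_assoc]
      congr 1
      ring
    rw [h4]
    apply Submodule.smul_mem
    apply ih _ (by omega)
    have h5 := hd k
    have h6 : l ≤ d * (r - k) := by omega
    have h7 : d * (r - k) + d * (k + (j - r)) = d * j := by
      rw [← mul_add]; congr 1; omega
    omega

lemma W_fin {F : E[X][X]} (hF : F.Monic) {d : ℕ}
    (hd : ∀ j, (F.coeff j).natDegree ≤ d * (F.natDegree - j)) (m : ℕ) :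
    FiniteDimensional E (W F d m) ∧ Module.finrank E (W F d m) ≤ F.natDegree * (m + 1) := by
  have h : W F d m ≤ Submodule.span E (Set.range fun x : Fin (m + 1) × Fin F.natDegree =>
        cs F ^ (x.1 : ℕ) * AdjoinRoot.root F ^ (x.2 : ℕ)) := by
    apply Submodule.span_le.2
    rintro x ⟨i, j, hij, rfl⟩
    exact W_red hF hd m j i hij
  have hfd : FiniteDimensional E (Submodule.span E (Set.range fun x : Fin (m + 1) × Fin F.natDegree =>
        cs F ^ (x.1 : ℕ) * AdjoinRoot.root F ^ (x.2 : ℕ))) :=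
    FiniteDimensional.span_of_finite E (Set.finite_range _)
  refine ⟨Submodule.finiteDimensional_of_le h, (Submodule.finrank_mono h).trans ?_⟩
  refine (finrank_range_le_card (R := E) _).trans ?_
  simp [mul_comm]

lemma li_pow {F : E[X][X]} (hF : F.Monic) (M : ℕ) :
    LinearIndependent E (fun x : Fin M × Fin F.natDegree =>
        cs F ^ (x.1 : ℕ) * AdjoinRoot.root F ^ (x.2 : ℕ)) := by
  have := (bas hF).linearIndependent.comp (fun x : Fin M × Fin F.natDegree => ((x.1 : ℕ), x.2))
    (by rintro ⟨a, b⟩ ⟨c, e⟩ h; simp at h; ext <;> simp [h])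
  convert this using 1
  ext x
  simp [bas_apply]

lemma W_low {F : E[X][X]} (hF : F.Monic) {d : ℕ}
    (hd : ∀ j, (F.coeff j).natDegree ≤ d * (F.natDegree - j)) (m : ℕ) :
    F.natDegree * m ≤ Module.finrank E (W F d (m + d * F.natDegree)) := by
  have := (W_fin hF hd (m + d * F.natDegree)).1
  have h : Submodule.span E (Set.range (fun x : Fin m × Fin F.natDegree =>
        cs F ^ (x.1 : ℕ) * AdjoinRoot.root F ^ (x.2 : ℕ))) ≤ W F d (m + d * F.natDegree) := by
    apply Submodule.span_le.2
    rintro _ ⟨⟨i, j⟩, rfl⟩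
    apply mem_W
    have : d * (j : ℕ) ≤ d * F.natDegree := Nat.mul_le_mul_left _ j.2.le
    simp; omega
  have h2 := finrank_span_eq_card (li_pow hF m)
  have := Submodule.finrank_mono h
  rw [h2] at this
  simpa [mul_comm] using this

/-- Bound for the colength of a principal ideal. -/
lemma colength {F : E[X][X]} (hF : F.Monic) {d : ℕ}
    (hd : ∀ j, (F.coeff j).natDegree ≤ d * (F.natDegree - j)) [IsDomain (AdjoinRoot F)]
    {w : ℕ} {P : AdjoinRoot F} (hP : P ∈ W F d w) (hP0 : P ≠ 0) (N : ℕ) (g : Fin N → AdjoinRoot F)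
    (hg : ∀ c : Fin N → E, (∃ y, ∑ i, c i • g i = P * y) → c = 0) :
    N ≤ F.natDegree * (w + d * F.natDegree + 1) := by
  choose m hm using fun i => W_ex hF d (g i)
  set M := ∑ i, m i with hM
  have hgM : ∀ i, g i ∈ W F d (M + d * F.natDegree + w) := fun i =>
    W_mono F d (by have := Finset.single_le_sum (f := m) (fun _ _ => Nat.zero_le _) (Finset.mem_univ i); omega) (hm i)
  have f1 := (W_fin hF hd (M + d * F.natDegree)).1
  have f2 := W_fin hF hd (M + d * F.natDegree + w)
  have f2' := f2.1
  have f3 := W_low hF hd M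
  let φ0 : ((Fin N → E) × W F d (M + d * F.natDegree)) →ₗ[E] AdjoinRoot F :=
    LinearMap.coprod (Fintype.linearCombination E g)
      ((LinearMap.mulLeft E P).comp (Submodule.subtype _))
  have h0 : ∀ x, φ0 x = ∑ i, x.1 i • g i + P * x.2 := by
    intro x; simp [φ0, Fintype.linearCombination_apply]
  let φ : ((Fin N → E) × W F d (M + d * F.natDegree)) →ₗ[E] W F d (M + d * F.natDegree + w) :=
    φ0.codRestrict _ (by
      intro x
      rw [h0]
      apply add_mem
      · exact sum_mem fun i _ => Submodule.smul_mem _ _ (hgM i)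
      · rw [add_comm (M + d * F.natDegree)]; exact W_mul hP x.2.2)
  have hinj : Function.Injective φ := by
    rw [injective_iff_map_eq_zero]
    rintro ⟨c, x⟩ h
    have h1 : φ0 (c, x) = 0 := congrArg Subtype.val h
    rw [h0] at h1
    have hc : c = 0 := hg c ⟨-(x : AdjoinRoot F), by linear_combination h1⟩
    subst hc
    simp [hP0] at h1
    simp [h1]
  have h2 := LinearMap.finrank_le_finrank_of_injective hinj
  rw [Module.finrank_prod, Module.finrank_fin_fun] at h2
  have h3 := f2.2
  nlinarith

lemma pow_strict {R : Type} [CommRing R] [IsDomain R] [IsNoetherianRing R] (I : Ideal R) (h1 : I ≠ ⊤) (h0 : I ≠ ⊥)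
    (j : ℕ) : ∃ g ∈ I ^ j, g ∉ I ^ (j + 1) := by
  by_contra hcon
  push Not at hcon
  have h2 : ∀ i, I ^ j ≤ I ^ (j + i) := by
    intro i
    induction i with
    | zero => exact le_rfl
    | succ i ih =>
      have : I ^ j ≤ I ^ (j + 1) := fun g hg => hcon g hg
      calc I ^ j ≤ I ^ (j + 1) := this
        _ = I ^ j * I := pow_succ _ _
        _ ≤ I ^ (j + i) * I := Ideal.mul_mono_left ih
        _ = I ^ (j + (i + 1)) := by rw [← pow_succ]; rfl
  have h3 : I ^ j ≤ ⨅ i : ℕ, I ^ i := by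
    apply le_iInf
    intro i
    exact (h2 i).trans (Ideal.pow_le_pow_right (by omega))
  rw [Ideal.iInf_pow_eq_bot_of_isDomain I h1, le_bot_iff] at h3
  exact h0 (by
    rw [← Ideal.zero_eq_bot] at h3 ⊢
    exact eq_zero_of_pow_eq_zero h3)

end curve
end EqW

open Matrix Polynomial

namespace EqW

section curve2
variable {K E : Type} [Field K] [Field E]

noncomputable abbrev bc (φ : K →+* E) (F : K[X][X]) : E[X][X] := F.map (mapRingHom φ)

noncomputable def iota (φ : K →+* E) (F : K[X][X]) : AdjoinRoot F →+* AdjoinRoot (bc φ F) :=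
  AdjoinRoot.lift ((AdjoinRoot.of (bc φ F)).comp (mapRingHom φ)) (AdjoinRoot.root _) (by
    rw [← Polynomial.eval₂_map]; exact AdjoinRoot.eval₂_root _)

lemma iota_root (φ : K →+* E) (F : K[X][X]) : iota φ F (AdjoinRoot.root F) = AdjoinRoot.root _ := by
  simp [iota]

lemma iota_of (φ : K →+* E) (F : K[X][X]) (g : K[X]) :
    iota φ F (AdjoinRoot.of F g) = AdjoinRoot.of _ (g.map φ) := by
  simp [iota]

lemma iota_cs (φ : K →+* E) (F : K[X][X]) : iota φ F (cs F) = cs _ := by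
  simp [cs, iota_of]

lemma algMap_eq (F : E[X][X]) (a : E) : algebraMap E (AdjoinRoot F) a = AdjoinRoot.of F (C a) := rfl

lemma hom_ext {S : Type} [CommRing S] (F : K[X][X]) {f g : AdjoinRoot F →+* S}
    (h1 : ∀ a : K, f (algebraMap K _ a) = g (algebraMap K _ a)) (h2 : f (cs F) = g (cs F))
    (h3 : f (AdjoinRoot.root F) = g (AdjoinRoot.root F)) : f = g := by
  apply AdjoinRoot.ringHom_ext _ h3
  apply Polynomial.ringHom_ext
  · intro a; exact h1 a
  · exact h2

/-- evaluation at a point -/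
noncomputable def evp (F : E[X][X]) (s z : E) (h : (F.map (evalRingHom s)).eval z = 0) :
    AdjoinRoot F →+* E :=
  AdjoinRoot.lift (evalRingHom s) z (by rwa [← Polynomial.eval_map])

lemma evp_alg (F : E[X][X]) (s z : E) (h) (a : E) : evp F s z h (algebraMap E _ a) = a := by
  rw [algMap_eq, evp, AdjoinRoot.lift_of]; simp
lemma evp_cs (F : E[X][X]) (s z : E) (h) : evp F s z h (cs F) = s := by
  rw [cs, evp, AdjoinRoot.lift_of]; simp
lemma evp_root (F : E[X][X]) (s z : E) (h) : evp F s z h (AdjoinRoot.root F) = z := by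
  rw [evp, AdjoinRoot.lift_root]

lemma bc_weights (φ : K →+* E) {F : K[X][X]} (hF : F.Monic) {d : ℕ}
    (hd : ∀ j, (F.coeff j).natDegree ≤ d * (F.natDegree - j)) :
    (bc φ F).Monic ∧ (bc φ F).natDegree = F.natDegree ∧
    ∀ j, ((bc φ F).coeff j).natDegree ≤ d * ((bc φ F).natDegree - j) := by
  have h1 : (bc φ F).natDegree = F.natDegree := hF.natDegree_map _
  refine ⟨hF.map _, h1, fun j => ?_⟩
  rw [h1, Polynomial.coeff_map]
  exact (Polynomial.natDegree_map_le).trans (hd j)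

lemma sum_filt {R : Type} [CommRing R] [Algebra E R] (I : Ideal R) (Q : ℕ) (g : Fin Q → R)
    (hg : ∀ j : Fin Q, g j ∈ I ^ (j : ℕ)) (hg' : ∀ j : Fin Q, g j ∉ I ^ ((j : ℕ) + 1))
    (c : Fin Q → E) (h : ∑ i, c i • g i ∈ I ^ Q) : c = 0 := by
  have key : ∀ n : ℕ, ∀ j : Fin Q, (j : ℕ) = n → c j = 0 := by
    intro n
    induction n using Nat.strong_induction_on with
    | _ n ih =>
    intro j hj
    by_contra hc
    apply hg' j
    have h1 : c j • g j ∈ I ^ ((j : ℕ) + 1) := by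
      have h2 : c j • g j = ∑ i, c i • g i - ∑ i ∈ Finset.univ.erase j, c i • g i := by
        rw [← Finset.add_sum_erase _ _ (Finset.mem_univ j)]; ring
      rw [h2]
      apply sub_mem (Ideal.pow_le_pow_right (by omega) h)
      apply sum_mem
      intro i hi
      rcases lt_trichotomy (i : ℕ) j with h3 | h3 | h3
      · rw [ih i (by omega) i rfl, zero_smul]; exact zero_mem _
      · exact absurd (Fin.ext h3) (Finset.ne_of_mem_erase hi)
      · rw [Algebra.smul_def]
        exact Ideal.mul_mem_left _ _ (Ideal.pow_le_pow_right (by omega) (hg i))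
    have h4 : g j = algebraMap E R (c j)⁻¹ * (c j • g j) := by
      rw [← Algebra.smul_def, smul_smul, inv_mul_cancel₀ hc, one_smul]
    rw [h4]
    exact Ideal.mul_mem_left _ _ h1
  funext j
  exact key j j rfl

def AbsDom (F : K[X][X]) : Prop :=
  ∀ (E : Type) [Field E] (φ : K →+* E), IsDomain (AdjoinRoot (bc φ F))

lemma AbsDom.isDomain {F : K[X][X]} (h : AbsDom F) : IsDomain (AdjoinRoot F) := by
  have := h K (RingHom.id K)
  have e : bc (RingHom.id K) F = F := by
    rw [bc, Polynomial.mapRingHom_id, Polynomial.map_id]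
  rwa [e] at this

lemma indep {p : ℕ} [Fact p.Prime] [CharP K p] {F : K[X][X]} (hF : F.Monic) {d : ℕ}
    (hd : ∀ j, (F.coeff j).natDegree ≤ d * (F.natDegree - j)) (habs : AbsDom F) (l k : ℕ)
    (hQ : F.natDegree * (l + d * F.natDegree + d * F.natDegree + 1) < p ^ k)
    (h : Fin l × Fin F.natDegree → AdjoinRoot F)
    (h0 : ∑ x, h x ^ (p ^ k) * (cs F ^ (x.1 : ℕ) * AdjoinRoot.root F ^ (x.2 : ℕ)) = 0) : h = 0 := by
  have hdom := habs.isDomain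
  let E := FractionRing (AdjoinRoot F)
  let α : AdjoinRoot F →+* E := algebraMap _ _
  have hα : Function.Injective α := IsFractionRing.injective _ _
  let φ : K →+* E := α.comp (algebraMap K (AdjoinRoot F))
  have hdomE := habs E φ
  obtain ⟨hFE, hdeg, hdE⟩ := bc_weights φ hF hd
  have hcK : CharP E p := charP_of_injective_ringHom φ.injective p
  have hcR : CharP (AdjoinRoot (bc φ F)) p :=
    charP_of_injective_ringHom (algebraMap E (AdjoinRoot (bc φ F))).injective p
  have hev : ((bc φ F).map (evalRingHom (α (cs F)))).eval (α (AdjoinRoot.root F)) = 0 := by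
    rw [bc, Polynomial.map_map, Polynomial.eval_map]
    have e : (evalRingHom (α (cs F))).comp (mapRingHom φ) = α.comp (AdjoinRoot.of F) := by
      apply Polynomial.ringHom_ext
      · intro a; simp [φ]; rfl
      · simp [cs]
    rw [e, ← Polynomial.hom_eval₂, AdjoinRoot.eval₂_root, map_zero]
  let ev := evp (bc φ F) _ _ hev
  have hevι : ∀ x, ev (iota φ F x) = α x := by
    intro x
    have : ev.comp (iota φ F) = α := by
      apply hom_ext
      · intro a
        rw [RingHom.comp_apply, algMap_eq, iota_of, Polynomial.map_C, ← algMap_eq]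
        exact evp_alg _ _ _ _ _
      · rw [RingHom.comp_apply, iota_cs]; exact evp_cs _ _ _ _
      · rw [RingHom.comp_apply, iota_root]; exact evp_root _ _ _ _
    rw [← this]; rfl
  let I : Ideal (AdjoinRoot (bc φ F)) := RingHom.ker ev
  set P : AdjoinRoot (bc φ F) := ∑ x, (α (h x)) ^ (p ^ k) •
    (cs (bc φ F) ^ (x.1 : ℕ) * AdjoinRoot.root (bc φ F) ^ (x.2 : ℕ)) with hP
  by_cases hP0 : P = 0
  · have hli := li_pow hFE l
    have hli2 := hli.comp (fun x : Fin l × Fin F.natDegree => (x.1, Fin.cast hdeg.symm x.2)) (by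
      rintro ⟨a, b⟩ ⟨c, e⟩ hh; simpa using hh)
    rw [Fintype.linearIndependent_iff] at hli2
    have := hli2 (fun x => (α (h x)) ^ (p ^ k)) hP0
    funext x
    have h1 := this x
    have h2 := eq_zero_of_pow_eq_zero h1
    exact hα (by rw [h2]; simp)
  · exfalso
    have hPW : P ∈ W (bc φ F) d (l + d * F.natDegree) := by
      apply sum_mem
      rintro ⟨i, j⟩ _
      apply Submodule.smul_mem
      apply mem_W
      have : d * (j : ℕ) ≤ d * F.natDegree := Nat.mul_le_mul_left _ j.2.le
      simp; omega
    have hPI : P ∈ I ^ (p ^ k) := by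
      have h1 : ∑ x, (iota φ F (h x)) ^ (p ^ k) *
        (cs (bc φ F) ^ (x.1 : ℕ) * AdjoinRoot.root (bc φ F) ^ (x.2 : ℕ)) = 0 := by
        have := congrArg (iota φ F) h0
        rw [map_sum, map_zero] at this
        rw [← this]
        apply Finset.sum_congr rfl
        intro x _
        rw [map_mul, map_mul, map_pow, map_pow, map_pow, iota_cs, iota_root]
      have h2 : P = ∑ x, (algebraMap E _ (α (h x)) - iota φ F (h x)) ^ (p ^ k) *
        (cs (bc φ F) ^ (x.1 : ℕ) * AdjoinRoot.root (bc φ F) ^ (x.2 : ℕ)) := by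
        rw [hP, ← sub_zero (∑ x, _), ← h1, ← Finset.sum_sub_distrib]
        apply Finset.sum_congr rfl
        intro x _
        rw [sub_pow_char_pow, sub_mul, Algebra.smul_def, map_pow]
      rw [h2]
      apply sum_mem
      intro x _
      apply Ideal.mul_mem_right
      apply Ideal.pow_mem_pow
      rw [RingHom.mem_ker, map_sub, hevι, sub_eq_zero]
      exact evp_alg _ _ _ _ _
    have hI1 : I ≠ ⊤ := RingHom.ker_ne_top _
    have hI0 : I ≠ ⊥ := by
      intro hI
      have h1 : cs (bc φ F) - algebraMap E _ (α (cs F)) ∈ I := by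
        rw [RingHom.mem_ker, map_sub, sub_eq_zero]
        exact (evp_cs _ _ _ _).trans (evp_alg _ _ _ _ _).symm
      rw [hI, Ideal.mem_bot, cs, algMap_eq, ← map_sub] at h1
      have h2 : (X - C (α (cs F)) : E[X]) ≠ 0 := Polynomial.X_sub_C_ne_zero _
      apply h2
      by_cases hr : F.natDegree = 0
      · exfalso
        have h3 : bc φ F = 1 := hFE.natDegree_eq_zero.1 (hdeg.trans hr)
        have h4 : (AdjoinRoot.mk (bc φ F)) 1 = 0 := by
          rw [AdjoinRoot.mk_eq_zero, h3]
        rw [map_one] at h4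
        exact one_ne_zero h4
      · refine AdjoinRoot.of.injective_of_degree_ne_zero ?_ (h1.trans (map_zero _).symm)
        intro h5
        apply hr
        rw [← hdeg, Polynomial.natDegree, h5]; rfl
    choose g hg hg' using pow_strict I hI1 hI0
    have := colength hFE hdE hPW hP0 (p ^ k) (fun i => g i) (by
      rintro c ⟨y, hy⟩
      apply sum_filt I (p ^ k) (fun i => g i) (fun j => hg j) (fun j => hg' j) c
      rw [hy]
      exact Ideal.mul_mem_right _ _ hPI)
    rw [hdeg] at this
    omega

end curve2
end EqW

open Matrix Polynomial

namespace EqW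

section curve3
variable {K : Type} [Field K]

lemma evp_smul (F : K[X][X]) (s z : K) (h) (a : K) (x : AdjoinRoot F) :
    evp F s z h (a • x) = a * evp F s z h x := by
  rw [Algebra.smul_def, map_mul, evp_alg]

lemma stepanov {p : ℕ} [Fact p.Prime] [CharP K p] [Fintype K] {F : K[X][X]} (hF : F.Monic) {d : ℕ}
    (hd : ∀ j, (F.coeff j).natDegree ≤ d * (F.natDegree - j)) (habs : AbsDom F) (l k k' m : ℕ)
    (hcard : Fintype.card K = p ^ (k + k'))
    (hQ : F.natDegree * (l + d * F.natDegree + d * F.natDegree + 1) < p ^ k)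
    (hlin : F.natDegree * (p ^ k' * (l + d * F.natDegree) + (m + d * F.natDegree) + 1) <
      (l * F.natDegree) * (m * F.natDegree)) :
    Nat.card {x : K × K // (F.map (evalRingHom x.1)).eval x.2 = 0} ≤
      F.natDegree * ((p ^ k * (m + d * F.natDegree) + (l + d * F.natDegree)) + d * F.natDegree + 1) := by
  classical
  have hdom := habs.isDomain
  set r := F.natDegree with hr
  have hcR : CharP (AdjoinRoot F) p :=
    charP_of_injective_ringHom (algebraMap K (AdjoinRoot F)).injective p
  let v : ∀ {M : ℕ}, Fin M × Fin r → AdjoinRoot F := fun x => cs F ^ (x.1 : ℕ) * AdjoinRoot.root F ^ (x.2 : ℕ)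
  have hv : ∀ {M : ℕ} (x : Fin M × Fin r), v x ∈ W F d (M + d * r) := by
    rintro M ⟨i, j⟩
    apply mem_W
    have : d * (j : ℕ) ≤ d * r := Nat.mul_le_mul_left _ j.2.le
    simp; omega
  let f : (Fin l × Fin r) × (Fin m × Fin r) → W F d (p ^ k' * (l + d * r) + (m + d * r)) :=
    fun x => ⟨v x.1 ^ p ^ k' * v x.2, W_mul (W_pow (hv _) _) (hv _)⟩
  have hnli : ¬ LinearIndependent K f := by
    intro hli
    have f1 := W_fin hF hd (p ^ k' * (l + d * r) + (m + d * r))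
    have := f1.1
    have h2 := hli.fintype_card_le_finrank
    have h3 := f1.2
    simp only [Fintype.card_prod, Fintype.card_fin] at h2
    exact absurd (h2.trans h3) (not_le.2 hlin)
  rw [Fintype.not_linearIndependent_iff] at hnli
  obtain ⟨c, hc, ⟨e0, x0⟩, hc0⟩ := hnli
  have hc' : ∑ x, c x • (v x.1 ^ p ^ k' * v x.2) = 0 := by
    have := congrArg (Submodule.subtype _) hc
    rw [map_sum, map_zero] at this
    exact this
  let b : Fin l × Fin r → AdjoinRoot F := fun e => ∑ x, c (e, x) • v x
  have hb : ∀ e, b e ∈ W F d (m + d * r) := fun e =>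
    sum_mem fun x _ => Submodule.smul_mem _ _ (hv x)
  have hc2 : ∑ e, v e ^ p ^ k' * b e = 0 := by
    rw [← hc', Fintype.sum_prod_type (γ := AdjoinRoot F) (α₁ := Fin l × Fin r) (α₂ := Fin m × Fin r)]
    apply Finset.sum_congr rfl
    intro e _
    rw [Finset.mul_sum]
    apply Finset.sum_congr rfl
    intro x _
    rw [mul_smul_comm]
  set G := ∑ e, b e ^ (p ^ k) * v e with hG
  have hG0 : G ≠ 0 := by
    intro h0
    have hb0 := indep hF hd habs l k hQ b h0
    have h1 : ∑ x, c (e0, x) • v x = 0 := congrFun hb0 e0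
    exact hc0 (Fintype.linearIndependent_iff.1 (li_pow hF m) _ h1 x0)
  have hGW : G ∈ W F d (p ^ k * (m + d * r) + (l + d * r)) :=
    sum_mem fun e _ => W_mul (W_pow (hb e) _) (hv e)
  have hGev : ∀ s z h, evp F s z h G = 0 := by
    intro s z h
    have h1 : (evp F s z h G) ^ p ^ k' = 0 := by
      rw [hG, map_sum, sum_pow_char_pow, ← map_zero (evp F s z h), ← hc2, map_sum]
      apply Finset.sum_congr rfl
      intro e _
      rw [map_mul _ _ (v e), map_mul _ _ (b e), map_pow, map_pow, mul_pow, ← pow_mul, ← pow_add, ← hcard,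
        FiniteField.pow_card, mul_comm]
    exact eq_zero_of_pow_eq_zero h1
  let S := {x : K × K // (F.map (evalRingHom x.1)).eval x.2 = 0}
  let eqv : S ≃ Fin (Nat.card S) := Finite.equivFin S
  let δ : K × K → AdjoinRoot F := fun x =>
    (1 - (cs F - algebraMap K _ x.1) ^ (Fintype.card K - 1)) *
    (1 - (AdjoinRoot.root F - algebraMap K _ x.2) ^ (Fintype.card K - 1))
  have hq : Fintype.card K - 1 ≠ 0 := by
    have := Fintype.one_lt_card (α := K); omega
  have hδ : ∀ (x : S) (y : K × K), evp F x.1.1 x.1.2 x.2 (δ y) = if x.1 = y then 1 else 0 := by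
    intro x y
    simp only [δ, map_mul, map_sub, map_one, map_pow, evp_cs, evp_root, evp_alg]
    split_ifs with hxy
    · rw [hxy, sub_self, sub_self, zero_pow hq]; simp
    · have : x.1.1 ≠ y.1 ∨ x.1.2 ≠ y.2 := by
        by_contra hcon; push Not at hcon; exact hxy (Prod.ext hcon.1 hcon.2)
      rcases this with h | h
      · rw [FiniteField.pow_card_sub_one_eq_one _ (sub_ne_zero.2 h)]; simp
      · rw [FiniteField.pow_card_sub_one_eq_one _ (sub_ne_zero.2 h)]; simp
  have := colength hF hd hGW hG0 (Nat.card S) (fun i => δ (eqv.symm i).1) (by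
    rintro a ⟨y, hy⟩
    funext i
    have h1 := congrArg (evp F _ _ (eqv.symm i).2) hy
    rw [map_sum, map_mul, hGev, zero_mul] at h1
    simp only [evp_smul, hδ] at h1
    rw [Finset.sum_eq_single i] at h1
    · simpa using h1
    · intro j _ hj
      rw [if_neg, mul_zero]
      intro h2
      exact hj (eqv.symm.injective (Subtype.ext h2)).symm
    · simp)
  exact this

end curve3
end EqW

open Matrix Polynomial

namespace EqW

theorem curve_bound (p : ℕ) [hp : Fact p.Prime] (r d : ℕ) (hr : 0 < r) (ε : ℝ) (hε : 0 < ε) :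
    ∃ n0 : ℕ, ∀ n ≥ n0, ∀ (K : Type) [Field K] [Fintype K] [CharP K p], Fintype.card K = p ^ n →
    ∀ F : K[X][X], F.Monic → F.natDegree = r → (∀ j, (F.coeff j).natDegree ≤ d * (r - j)) → AbsDom F →
    (Nat.card {x : K × K // (F.map (evalRingHom x.1)).eval x.2 = 0} : ℝ) ≤ (1 + ε) * (p : ℝ) ^ n := by
  have hp1 : 1 < p := hp.out.one_lt
  obtain ⟨l, hl⟩ := exists_nat_ge ((2 * d * r + 3 + ε / 2) / (ε / 2))
  rw [div_le_iff₀ (by positivity)] at hl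
  obtain ⟨k, hk⟩ := pow_unbounded_of_one_lt (r * (l + d * r + d * r + 1)) hp1
  obtain ⟨k0, hk0⟩ := exists_nat_ge ((r + r * (d * r) + r * (l + 2 * (d * r) + 1)) / (ε / 2) : ℝ)
  refine ⟨k + k0, ?_⟩
  intro n hn K _ _ _ hcard F hF hFr hd habs
  obtain ⟨k', rfl⟩ : ∃ k', n = k + k' := ⟨n - k, by omega⟩
  have hQ' : ((k0 : ℕ) : ℝ) ≤ (p : ℝ) ^ k' := by
    have h1 : k' < p ^ k' := Nat.lt_pow_self hp1
    have h2 : k0 ≤ p ^ k' := by omega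
    exact_mod_cast h2
  have hQ1 : (1 : ℝ) ≤ (p : ℝ) ^ k' := one_le_pow₀ (by exact_mod_cast hp1.le)
  have hQ2 : (1 : ℝ) ≤ (p : ℝ) ^ k := one_le_pow₀ (by exact_mod_cast hp1.le)
  have hD := hk0.trans hQ'
  rw [div_le_iff₀ (by positivity)] at hD
  set Q' : ℝ := (p : ℝ) ^ k' with hQ'd
  set Q : ℝ := (p : ℝ) ^ k with hQd
  have hrR : (1 : ℝ) ≤ r := by exact_mod_cast hr
  set m : ℕ := ⌊(1 + ε / 2) * Q' / r⌋₊ + 1 with hm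
  have hm1 : (1 + ε / 2) * Q' ≤ r * m := by
    have := (Nat.lt_floor_add_one ((1 + ε / 2) * Q' / r)).le
    rw [div_le_iff₀ (by positivity)] at this
    rw [hm]; push_cast; linarith
  have hm2 : r * m ≤ (1 + ε / 2) * Q' + r := by
    have := Nat.floor_le (a := (1 + ε / 2) * Q' / r) (by positivity)
    rw [le_div_iff₀ (by positivity)] at this
    rw [hm]; push_cast; linarith
  have hmpos : (0 : ℝ) ≤ m := by positivity
  have hl0 : (1 : ℝ) ≤ l := by
    have h3 : (0 : ℝ) ≤ d * r := by positivity
    by_contra hcon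
    nlinarith
  have hdr : (0 : ℝ) ≤ (d : ℝ) * r := by positivity
  have hbound := stepanov hF (d := d) (by rw [hFr]; exact hd) habs l k k' m hcard (by rw [hFr]; exact hk) (by
    rw [hFr]
    have : (r * (p ^ k' * (l + d * r) + (m + d * r) + 1) : ℝ) < (l * r) * (m * r) := by
      rw [← hQ'd]
      have h1 : Q' * (l + d * r) + (m + d * r) + 1 < l * (m * r) := by
        have h2 : (1 + ε / 2) * Q' * (l - 1) ≤ r * m * (l - 1) :=
          mul_le_mul_of_nonneg_right hm1 (by linarith)
        have h3 : (m : ℝ) ≤ r * m := by nlinarith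
        have h4 : Q' * (l + 2 * d * r + 2) ≤ Q' * ((1 + ε / 2) * (l - 1)) :=
          mul_le_mul_of_nonneg_left (by nlinarith) (by linarith)
        nlinarith
      have := mul_lt_mul_of_pos_left h1 (show (0 : ℝ) < r by linarith)
      linarith
    exact_mod_cast this)
  rw [hFr] at hbound
  have hb : (Nat.card {x : K × K // (F.map (evalRingHom x.1)).eval x.2 = 0} : ℝ) ≤
      r * ((Q * (m + d * r) + (l + d * r)) + d * r + 1) := by
    rw [hQd]; exact_mod_cast hbound
  refine hb.trans ?_
  rw [pow_add, ← hQd, ← hQ'd]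
  have h5 : Q * (r * m) ≤ Q * ((1 + ε / 2) * Q' + r) := mul_le_mul_of_nonneg_left hm2 (by linarith)
  have h6 := mul_le_mul_of_nonneg_left hD (show 0 ≤ Q by linarith)
  have h7 : (r * (l + 2 * (d * r) + 1) : ℝ) ≤ Q * (r * (l + 2 * (d * r) + 1)) :=
    le_mul_of_one_le_left (by positivity) hQ2
  nlinarith

end EqW

open Matrix Polynomial

namespace EqW

section irr
variable {E : Type} [Field E]

lemma norm_root {A : Type} [CommRing A] [IsDomain A] {G : A[X]} (hG : G.Monic) :
    Algebra.norm A (AdjoinRoot.root G) = (-1) ^ G.natDegree * G.coeff 0 := by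
  have hmin : G = minpoly A (AdjoinRoot.root G) := by
    apply minpoly.unique' _ _ hG
    · rw [AdjoinRoot.aeval_eq, AdjoinRoot.mk_self]
    · intro q hq
      by_cases h0 : q = 0
      · exact Or.inl h0
      · right
        rw [AdjoinRoot.aeval_eq, Ne, AdjoinRoot.mk_eq_zero]
        exact hG.not_dvd_of_degree_lt h0 hq
  have := Algebra.PowerBasis.norm_gen_eq_coeff_zero_minpoly (AdjoinRoot.powerBasis' hG)
  rw [AdjoinRoot.powerBasis'_gen, AdjoinRoot.powerBasis'_dim, ← hmin] at this
  exact this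

lemma factor_bound {A : Type} [CommRing A] [IsDomain A] {F G : A[X]} (hF : F.Monic) (hG : G.Monic) (hd : G ∣ F)
    (π : A) (h : ∀ j < F.natDegree, π ∣ F.coeff j) :
    π ^ G.natDegree ∣ (G.coeff 0) ^ F.natDegree := by
  choose! c hc using h
  have h1 : ∃ y : AdjoinRoot G, AdjoinRoot.root G ^ F.natDegree = algebraMap A _ π * y := by
    have h0 : F.eval₂ (AdjoinRoot.of G) (AdjoinRoot.root G) = 0 := by
      rw [← AdjoinRoot.algebraMap_eq, ← Polynomial.aeval_def, AdjoinRoot.aeval_eq, AdjoinRoot.mk_eq_zero]; exact hd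
    rw [Polynomial.eval₂_eq_sum_range, Finset.sum_range_succ, hF.coeff_natDegree, map_one, one_mul] at h0
    refine ⟨- ∑ k ∈ Finset.range F.natDegree, AdjoinRoot.of G (c k) * AdjoinRoot.root G ^ k, ?_⟩
    rw [eq_neg_of_add_eq_zero_right h0, mul_neg, Finset.mul_sum]
    congr 1
    apply Finset.sum_congr rfl
    intro k hk
    rw [hc k (Finset.mem_range.1 hk), map_mul, AdjoinRoot.algebraMap_eq, mul_assoc]
  obtain ⟨y, hy⟩ := h1
  have h2 := congrArg (Algebra.norm A) hy
  rw [map_pow, map_mul, norm_root hG, Algebra.norm_algebraMap_of_basis (AdjoinRoot.powerBasisAux' hG),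
    Fintype.card_fin, mul_pow] at h2
  have h3 : (G.coeff 0) ^ F.natDegree = π ^ G.natDegree *
      (((-1) ^ G.natDegree) ^ F.natDegree * Algebra.norm A y) := by
    have h4 : (((-1 : A) ^ G.natDegree) ^ F.natDegree) * (((-1) ^ G.natDegree) ^ F.natDegree) = 1 := by
      rw [← mul_pow, ← mul_pow]; simp
    linear_combination ((-1) ^ G.natDegree) ^ F.natDegree * h2 - G.coeff 0 ^ F.natDegree * h4
  exact ⟨_, h3⟩

lemma irr_crit {F : E[X][X]} (hF : F.Monic) (s0 : E) (m : ℕ) (hm : 0 < m) (hr : 0 < F.natDegree)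
    (hcop : Nat.Coprime m F.natDegree)
    (h0 : (F.coeff 0).rootMultiplicity s0 = m)
    (h : ∀ j < F.natDegree, (X - C s0) ^ m ∣ F.coeff j) : Irreducible F := by
  have hF1 : F ≠ 1 := by rintro rfl; simp at hr
  have hF0 : F.coeff 0 ≠ 0 := by intro h1; rw [h1] at h0; simp at h0; omega
  refine hF.irreducible_iff_natDegree'.2 ⟨hF1, ?_⟩
  intro G H hG hH hGH hdeg
  rw [Finset.mem_Ioc] at hdeg
  have e0 : G.coeff 0 * H.coeff 0 = F.coeff 0 := by rw [← hGH, Polynomial.mul_coeff_zero]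
  have hG0 : G.coeff 0 ≠ 0 := by intro h1; rw [h1, zero_mul] at e0; exact hF0 e0.symm
  have hH0 : H.coeff 0 ≠ 0 := by intro h1; rw [h1, mul_zero] at e0; exact hF0 e0.symm
  have hdG : G.natDegree + H.natDegree = F.natDegree := by
    rw [← hGH, hG.natDegree_mul hH]
  have hmul : (G.coeff 0).rootMultiplicity s0 + (H.coeff 0).rootMultiplicity s0 = m := by
    rw [← h0, ← e0, Polynomial.rootMultiplicity_mul (mul_ne_zero hG0 hH0)]
  have key : ∀ G : E[X][X], G.Monic → G ∣ F → G.coeff 0 ≠ 0 →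
      m * G.natDegree ≤ F.natDegree * (G.coeff 0).rootMultiplicity s0 := by
    intro G hG hGF hG0
    classical
    have h1 := factor_bound hF hG hGF _ h
    rw [← pow_mul, ← Polynomial.le_rootMultiplicity_iff (pow_ne_zero _ hG0)] at h1
    rwa [← Polynomial.count_roots, Polynomial.roots_pow, Multiset.count_nsmul, Polynomial.count_roots] at h1
  have k1 := key G hG ⟨H, hGH.symm⟩ hG0
  have k2 := key H hH ⟨G, by rw [← hGH, mul_comm]⟩ hH0
  have k3 : m * H.natDegree = F.natDegree * (H.coeff 0).rootMultiplicity s0 := by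
    have : m * G.natDegree + m * H.natDegree = F.natDegree * (G.coeff 0).rootMultiplicity s0 +
      F.natDegree * (H.coeff 0).rootMultiplicity s0 := by
      rw [← mul_add, ← mul_add, hdG, hmul, mul_comm]
    omega
  have k4 : F.natDegree ∣ H.natDegree := by
    apply (hcop.symm).dvd_of_dvd_mul_left
    exact ⟨_, k3⟩
  have := Nat.le_of_dvd hdeg.1 k4
  omega

lemma absDom_crit {K : Type} [Field K] {F : K[X][X]} (hF : F.Monic) (s0 : AlgebraicClosure K) (m : ℕ) (hm : 0 < m)
    (hr : 0 < F.natDegree) (hcop : Nat.Coprime m F.natDegree)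
    (h0 : ((F.coeff 0).map (algebraMap K (AlgebraicClosure K))).rootMultiplicity s0 = m)
    (h : ∀ j < F.natDegree, (X - C s0) ^ m ∣ (F.coeff j).map (algebraMap K (AlgebraicClosure K))) :
    AbsDom F := by
  intro E _ φ
  let _ : Algebra K (AlgebraicClosure E) := ((algebraMap E (AlgebraicClosure E)).comp φ).toAlgebra
  let ψ : AlgebraicClosure K →ₐ[K] AlgebraicClosure E := IsAlgClosed.lift
  have hψ : (ψ : AlgebraicClosure K →+* AlgebraicClosure E).comp (algebraMap K _) =
    (algebraMap E (AlgebraicClosure E)).comp φ := AlgHom.comp_algebraMap ψ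
  have hmon : (bc φ F).Monic := hF.map _
  have hcoeff : ∀ j, ((bc (algebraMap E (AlgebraicClosure E)) (bc φ F)).coeff j) =
     ((F.coeff j).map (algebraMap K (AlgebraicClosure K))).map (ψ : AlgebraicClosure K →+* AlgebraicClosure E) := by
    intro j
    rw [Polynomial.map_map, hψ, bc, bc, Polynomial.coeff_map, Polynomial.coeff_map, coe_mapRingHom,
      coe_mapRingHom, Polynomial.map_map]
  have hdeg : (bc (algebraMap E (AlgebraicClosure E)) (bc φ F)).natDegree = F.natDegree := by
    rw [bc, hmon.natDegree_map, bc, hF.natDegree_map]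
  have hirr : Irreducible (bc (algebraMap E (AlgebraicClosure E)) (bc φ F)) := by
    apply irr_crit (hmon.map _) (ψ s0) m hm
    · rwa [hdeg]
    · rwa [hdeg]
    · rw [hcoeff, ← h0]
      exact (Polynomial.eq_rootMultiplicity_map (ψ : AlgebraicClosure K →+* AlgebraicClosure E).injective s0).symm
    · intro j hj
      rw [hdeg] at hj
      rw [hcoeff]
      have := Polynomial.map_dvd (ψ : AlgebraicClosure K →+* AlgebraicClosure E) (h j hj)
      simpa using this
  have hirr2 : Irreducible (bc φ F) :=
    hmon.irreducible_of_irreducible_map _ _ hirr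
  exact AdjoinRoot.isDomain_of_prime hirr2.prime

end irr
end EqW

open Matrix Polynomial

namespace EqW

section trace
variable {A : Type} [CommRing A]

noncomputable def sv (a : ℤ) (s : A) : A := (Chebyshev.S A a).eval s

lemma map_sv {B : Type} [CommRing B] (f : A →+* B) (a : ℤ) (s : A) : f (sv a s) = sv a (f s) := by
  rw [sv, sv, ← Polynomial.Chebyshev.map_S f, Polynomial.eval_map_apply]

lemma sv_rec (a : ℤ) (s : A) : sv (a + 1) s = s * sv a s - sv (a - 1) s := by
  simp [sv, Polynomial.Chebyshev.S_add_one]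

structure V4 (A : Type) where
  (a b c d : A)

noncomputable def tv (s t u : A) : List (ℤ × ℤ) → V4 A
  | [] => ⟨1, 0, 0, 0⟩
  | m :: L =>
    let v := tv s t u L
    let A1 := sv (m.1 - 1) s
    let A2 := sv (m.1 - 2) s
    let B1 := sv (m.2 - 1) t
    let B2 := sv (m.2 - 2) t
    ⟨A1 * B1 * (-t * v.b - v.d) - A1 * B2 * (-v.b) - A2 * B1 * ((u - s * t) * v.b - v.c - s * v.d) + A2 * B2 * v.a,
     A1 * B1 * (u * v.b - v.c) - A1 * B2 * (v.a + s * v.b) - A2 * B1 * (t * v.b + v.d) + A2 * B2 * v.b,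
     A1 * B1 * v.b - A1 * B2 * (-v.d) - A2 * B1 * (v.a + s * v.b + t * v.c + u * v.d) + A2 * B2 * v.c,
     A1 * B1 * (v.a + t * v.c + u * v.d) - A1 * B2 * (v.c + s * v.d) - A2 * B1 * (-v.b) + A2 * B2 * v.d⟩

noncomputable def tr (s t u : A) (L : List (ℤ × ℤ)) : A :=
  2 * (tv s t u L).a + s * (tv s t u L).b + t * (tv s t u L).c + u * (tv s t u L).d

lemma map_tv {B : Type} [CommRing B] (f : A →+* B) (s t u : A) (L : List (ℤ × ℤ)) :
    tv (f s) (f t) (f u) L =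
      ⟨f (tv s t u L).a, f (tv s t u L).b, f (tv s t u L).c, f (tv s t u L).d⟩ := by
  induction L with
  | nil => simp [tv]
  | cons m L ih => simp [tv, ih, map_sv]

lemma map_tr {B : Type} [CommRing B] (f : A →+* B) (s t u : A) (L : List (ℤ × ℤ)) :
    f (tr s t u L) = tr (f s) (f t) (f u) L := by
  rw [tr, tr, map_tv]
  simp [map_ofNat]

noncomputable def topA (L : List (ℤ × ℤ)) (s : A) : A := (L.map fun m => sv (m.1 - 1) s).prod
noncomputable def topB (L : List (ℤ × ℤ)) (t : A) : A := (L.map fun m => sv (m.2 - 1) t).prod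

lemma sv_C (a : ℤ) (s : A) : sv a (C s : A[X]) = C (sv a s) := (map_sv C a s).symm

lemma tv_deg (s t : A) (L : List (ℤ × ℤ)) :
    (∀ k, L.length ≤ k → (tv (C s) (C t) X L).b.coeff k = 0 ∧ (tv (C s) (C t) X L).c.coeff k = 0 ∧
      (tv (C s) (C t) X L).d.coeff k = 0) ∧
    (∀ k, L.length ≤ k → 1 ≤ k → (tv (C s) (C t) X L).a.coeff k = 0) ∧
    ((tv (C s) (C t) X L).a + X * (tv (C s) (C t) X L).d).coeff L.length = topA L s * topB L t := by
  induction L with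
  | nil =>
    refine ⟨?_, ?_, ?_⟩
    · simp [tv]
    · intro k _ hk; simp only [tv]; rw [Polynomial.coeff_one, if_neg (by omega)]
    · simp [tv, topA, topB]
  | cons m L ih =>
    obtain ⟨h1, h2, h3⟩ := ih
    simp only [List.length_cons]
    have e1 : ∀ k, L.length + 1 ≤ k → ∃ k', k = k' + 1 ∧ L.length ≤ k' := fun k hk => ⟨k - 1, by omega, by omega⟩
    refine ⟨?_, ?_, ?_⟩
    · intro k hk
      obtain ⟨k, rfl, hk'⟩ := e1 k hk
      have g1 := h1 k hk'
      have g2 := h1 (k + 1) (by omega)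
      have g3 := h2 (k + 1) (by omega) (by omega)
      simp only [tv, sv_C, sub_mul, mul_sub, mul_add, mul_neg, neg_mul, mul_assoc, coeff_add, coeff_sub, coeff_neg,
        coeff_C_mul, coeff_X_mul, g1, g2, g3]
      simp
    · intro k hk _
      obtain ⟨k, rfl, hk'⟩ := e1 k hk
      have g1 := h1 k hk'
      have g2 := h1 (k + 1) (by omega)
      have g3 := h2 (k + 1) (by omega) (by omega)
      simp only [tv, sv_C, sub_mul, mul_sub, mul_add, mul_neg, neg_mul, mul_assoc, coeff_add, coeff_sub, coeff_neg,
        coeff_C_mul, coeff_X_mul, g1, g2, g3]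
      simp
    · have g1 := h1 L.length le_rfl
      have g2 := h1 (L.length + 1) (by omega)
      have g3 := h2 (L.length + 1) (by omega) (by omega)
      have e : (topA (m :: L) s * topB (m :: L) t) =
        sv (m.1 - 1) s * sv (m.2 - 1) t * (topA L s * topB L t) := by
        simp [topA, topB]; ring
      rw [e, ← h3]
      simp only [tv, sv_C, sub_mul, mul_sub, mul_add, mul_neg, neg_mul, mul_assoc, coeff_add, coeff_sub, coeff_neg,
        coeff_C_mul, coeff_X_mul, g1, g2, g3]
      simp

lemma tr_coeff_top (s t : A) (L : List (ℤ × ℤ)) (hL : L ≠ []) :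
    (tr (C s) (C t) X L).coeff L.length = topA L s * topB L t := by
  obtain ⟨h1, h2, h3⟩ := tv_deg s t L
  have hl : 1 ≤ L.length := List.length_pos_iff.2 hL
  have g1 := h1 L.length le_rfl
  have g2 := h2 L.length le_rfl hl
  rw [← h3, tr, two_mul]
  simp only [coeff_add, coeff_C_mul, g1, g2]
  simp

lemma tr_natDegree (s t : A) (L : List (ℤ × ℤ)) :
    (tr (C s) (C t) X L).natDegree ≤ L.length := by
  obtain ⟨h1, h2, h3⟩ := tv_deg s t L
  rw [Polynomial.natDegree_le_iff_coeff_eq_zero]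
  intro k hk
  obtain ⟨k, rfl⟩ : ∃ k', k = k' + 1 := ⟨k - 1, by omega⟩
  have g1 := h1 k (by omega)
  have g2 := h1 (k + 1) (by omega)
  have g3 := h2 (k + 1) (by omega) (by omega)
  rw [tr, two_mul]
  simp only [coeff_add, coeff_C_mul, coeff_X_mul, g1, g2, g3]
  simp

end trace

section mat
variable {K : Type} [CommRing K]

lemma sl_sq (x : SpecialLinearGroup (Fin 2) K) : x.1 * x.1 = Matrix.trace x.1 • x.1 - 1 := by
  have hdet := x.2
  rw [Matrix.det_fin_two] at hdet
  ext i j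
  fin_cases i <;> fin_cases j <;> simp [Matrix.mul_apply, Fin.sum_univ_two, Matrix.trace_fin_two] <;>
    first | ring1 | linear_combination (-1 : K) * hdet

lemma mat_pow (x : SpecialLinearGroup (Fin 2) K) (a : ℤ) :
    ((x ^ a : SpecialLinearGroup (Fin 2) K) : Matrix (Fin 2) (Fin 2) K) =
     sv (a - 1) (Matrix.trace x.1) • x.1 - sv (a - 2) (Matrix.trace x.1) • (1 : Matrix (Fin 2) (Fin 2) K) := by
  have hch : x.1 * x.1 = Matrix.trace x.1 • x.1 - 1 := sl_sq x
  have hinv : ((x⁻¹ : SpecialLinearGroup (Fin 2) K) : Matrix (Fin 2) (Fin 2) K) =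
      Matrix.trace x.1 • (1 : Matrix (Fin 2) (Fin 2) K) - x.1 := by
    rw [Matrix.SpecialLinearGroup.coe_inv, Matrix.adjugate_fin_two]
    ext i j
    fin_cases i <;> fin_cases j <;> simp [Matrix.trace_fin_two]
  induction a using Int.induction_on with
  | zero => simp [sv]
  | succ n ih =>
    rw [_root_.zpow_add_one, Matrix.SpecialLinearGroup.coe_mul, ih, sub_mul, smul_mul_assoc, smul_mul_assoc, hch, one_mul]
    have e := sv_rec (n - 1 : ℤ) (Matrix.trace x.1)
    have e1 : ((n : ℤ) + 1 - 1) = (n - 1 : ℤ) + 1 := by ring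
    have e2 : ((n : ℤ) + 1 - 2) = (n - 1 : ℤ) := by ring
    have e3 : ((n : ℤ) - 1 - 1) = (n - 2 : ℤ) := by ring
    rw [e1, e2, e, e3]
    module
  | pred n ih =>
    rw [_root_.zpow_sub_one, Matrix.SpecialLinearGroup.coe_mul, ih, hinv, mul_sub, sub_mul, sub_mul, smul_mul_assoc,
      smul_mul_assoc, smul_mul_assoc, hch, mul_smul_comm, mul_one, one_mul]
    have e := sv_rec (-n - 2 : ℤ) (Matrix.trace x.1)
    have e1 : (-(n : ℤ) - 1 - 1) = (-n - 2 : ℤ) := by ring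
    have e2 : (-(n : ℤ) - 1 - 2) = (-n - 2 : ℤ) - 1 := by ring
    have e3 : (-(n : ℤ) - 1) = (-n - 2 : ℤ) + 1 := by ring
    rw [e1, e2, e3, e]
    simp only [smul_mul_assoc, one_mul]
    module

lemma alg_mul {M : Type} [Ring M] [Algebra K M] (x y : M) (s t u : K) (hx : x * x = s • x - 1)
    (hy : y * y = t • y - 1) (hyx : y * x = -(x * y) + t • x + s • y + (u - s * t) • 1)
    (c1 c2 c3 c4 a b c d : K) :
    (c1 • (x * y) + c2 • x + c3 • y + c4 • 1) * (a • 1 + b • x + c • y + d • (x * y)) =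
     (c1 * (-t * b - d) + c2 * (-b) + c3 * ((u - s * t) * b - c - s * d) + c4 * a) • 1 +
     (c1 * (u * b - c) + c2 * (a + s * b) + c3 * (t * b + d) + c4 * b) • x +
     (c1 * b + c2 * (-d) + c3 * (a + s * b + t * c + u * d) + c4 * c) • y +
     (c1 * (a + t * c + u * d) + c2 * (c + s * d) + c3 * (-b) + c4 * d) • (x * y) := by
  have e1 : x * (x * y) = s • (x * y) - y := by rw [← mul_assoc, hx, sub_mul, smul_mul_assoc, one_mul]
  have e2 : x * y * y = t • (x * y) - x := by rw [mul_assoc, hy, mul_sub, mul_smul_comm, mul_one]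
  have e3 : y * (x * y) = x - s • 1 + u • y := by
    rw [← mul_assoc, hyx, add_mul, add_mul, add_mul, neg_mul, e2, smul_mul_assoc, smul_mul_assoc, smul_mul_assoc, hy, one_mul]
    module
  have e4 : x * y * x = y - t • 1 + u • x := by
    rw [mul_assoc, hyx, mul_add, mul_add, mul_add, mul_neg, e1, mul_smul_comm, mul_smul_comm, mul_smul_comm, hx, mul_one]
    module
  have e5 : x * y * (x * y) = u • (x * y) - 1 := by
    rw [mul_assoc, e3, mul_add, mul_sub, hx, mul_smul_comm, mul_smul_comm, mul_one]
    module
  simp only [mul_add, add_mul, smul_mul_assoc, mul_smul_comm, mul_one, one_mul, e1, e2, e3, e4, e5, hx, hy, hyx]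
  module

def wordL (L : List (ℤ × ℤ)) : FreeGroup (Fin 2) :=
  (L.map fun m => FreeGroup.of (0 : Fin 2) ^ m.1 * FreeGroup.of (1 : Fin 2) ^ m.2).prod

lemma word_mat (x y : SpecialLinearGroup (Fin 2) K) (L : List (ℤ × ℤ)) :
    ((FreeGroup.lift ![x, y] (wordL L) : SpecialLinearGroup (Fin 2) K) : Matrix (Fin 2) (Fin 2) K) =
    (tv (Matrix.trace x.1) (Matrix.trace y.1) (Matrix.trace (x.1 * y.1)) L).a • (1 : Matrix (Fin 2) (Fin 2) K) +
    (tv (Matrix.trace x.1) (Matrix.trace y.1) (Matrix.trace (x.1 * y.1)) L).b • x.1 +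
    (tv (Matrix.trace x.1) (Matrix.trace y.1) (Matrix.trace (x.1 * y.1)) L).c • y.1 +
    (tv (Matrix.trace x.1) (Matrix.trace y.1) (Matrix.trace (x.1 * y.1)) L).d • (x.1 * y.1) := by
  have hch : ∀ x : SpecialLinearGroup (Fin 2) K, x.1 * x.1 = Matrix.trace x.1 • x.1 - 1 := sl_sq
  have hyx : y.1 * x.1 = -(x.1 * y.1) + Matrix.trace y.1 • x.1 + Matrix.trace x.1 • y.1 +
     (Matrix.trace (x.1 * y.1) - Matrix.trace x.1 * Matrix.trace y.1) • 1 := by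
    ext i j
    fin_cases i <;> fin_cases j <;> simp [Matrix.mul_apply, Fin.sum_univ_two, Matrix.trace_fin_two] <;> ring
  induction L with
  | nil => simp [wordL, tv]
  | cons m L ih =>
    have e : wordL (m :: L) = FreeGroup.of (0 : Fin 2) ^ m.1 * FreeGroup.of (1 : Fin 2) ^ m.2 * wordL L := by
      simp [wordL]
    rw [e, map_mul, map_mul, map_zpow, map_zpow, FreeGroup.lift_apply_of, FreeGroup.lift_apply_of, Matrix.SpecialLinearGroup.coe_mul,
      Matrix.SpecialLinearGroup.coe_mul, ih]
    have e0 : (![x, y] : Fin 2 → _) 0 = x := rfl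
    have e1 : (![x, y] : Fin 2 → _) 1 = y := rfl
    rw [e0, e1, mat_pow, mat_pow]
    have e2 : ∀ p q r s : K, (p • x.1 - q • (1 : Matrix (Fin 2) (Fin 2) K)) * (r • y.1 - s • (1 : Matrix (Fin 2) (Fin 2) K)) =
      (p * r) • (x.1 * y.1) + (-(p * s)) • x.1 + (-(q * r)) • y.1 + (q * s) • (1 : Matrix (Fin 2) (Fin 2) K) := by
      intro p q r s
      simp only [mul_sub, sub_mul, smul_mul_assoc, mul_smul_comm, mul_one, one_mul]
      module
    rw [e2, alg_mul x.1 y.1 _ _ _ (hch x) (hch y) hyx]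
    simp only [tv]
    module

lemma word_trace (x y : SpecialLinearGroup (Fin 2) K) (L : List (ℤ × ℤ)) :
    Matrix.trace ((FreeGroup.lift ![x, y] (wordL L) : SpecialLinearGroup (Fin 2) K) : Matrix (Fin 2) (Fin 2) K) =
    tr (Matrix.trace x.1) (Matrix.trace y.1) (Matrix.trace (x.1 * y.1)) L := by
  rw [word_mat, tr]
  simp only [Matrix.trace_add, Matrix.trace_smul, Matrix.trace_one, smul_eq_mul]
  simp
  ring

end mat
end EqW

open Matrix Polynomial

namespace EqW

section curveF
variable {K : Type} [Field K]

noncomputable def ft (L : List (ℤ × ℤ)) (t : K) : K[X][X] := tr (C X) (C (C t)) X L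
noncomputable def hh (L : List (ℤ × ℤ)) (s t : K) : K[X] := tr (C s) (C t) X L

lemma hh_eval (L : List (ℤ × ℤ)) (s t u : K) : (hh L s t).eval u = tr s t u L := by
  have := map_tr (evalRingHom u) (C s) (C t) X L
  simpa [hh] using this

lemma ft_map (L : List (ℤ × ℤ)) (s t : K) : (ft L t).map (evalRingHom s) = hh L s t := by
  have := map_tr (mapRingHom (evalRingHom s)) (C X) (C (C t)) X L
  simpa [hh, ft] using this

lemma topA_eval {L : List (ℤ × ℤ)} (s : K) : (topA L (X : K[X])).eval s = topA L s := by
  induction L with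
  | nil => simp [topA]
  | cons m L ih =>
    simp only [topA, List.map_cons, List.prod_cons, eval_mul] at ih ⊢
    rw [ih, ← coe_evalRingHom, map_sv]; simp

lemma topB_eval {L : List (ℤ × ℤ)} (s : K) : (topB L (X : K[X])).eval s = topB L s := by
  induction L with
  | nil => simp [topB]
  | cons m L ih =>
    simp only [topB, List.map_cons, List.prod_cons, eval_mul] at ih ⊢
    rw [ih, ← coe_evalRingHom, map_sv]; simp

lemma map_topA {A B : Type} [CommRing A] [CommRing B] (f : A →+* B) (L : List (ℤ × ℤ)) (s : A) :
    f (topA L s) = topA L (f s) := by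
  simp only [topA, map_list_prod, List.map_map]
  congr 1
  apply List.map_congr_left
  intro m _
  simp [map_sv]

lemma map_topB {A B : Type} [CommRing A] [CommRing B] (f : A →+* B) (L : List (ℤ × ℤ)) (s : A) :
    f (topB L s) = topB L (f s) := by
  simp only [topB, map_list_prod, List.map_map]
  congr 1
  apply List.map_congr_left
  intro m _
  simp [map_sv]

noncomputable def dA (L : List (ℤ × ℤ)) : ℕ := (topA L (X : ℤ[X])).natDegree
noncomputable def dB (L : List (ℤ × ℤ)) : ℕ := (topB L (X : ℤ[X])).natDegree
noncomputable def dD (L : List (ℤ × ℤ)) : ℕ :=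
  (Finset.range (L.length + 1)).sup fun j =>
    ((tr (C X) (C (C X)) X L : ℤ[X][X][X]).coeff j).natDegree

lemma natDegree_topA (L : List (ℤ × ℤ)) : (topA L (X : K[X])).natDegree ≤ dA L := by
  have := map_topA (mapRingHom (Int.castRingHom K)) L X
  simp only [coe_mapRingHom, map_X] at this
  rw [← this]
  exact natDegree_map_le

lemma natDegree_topB (L : List (ℤ × ℤ)) : (topB L (X : K[X])).natDegree ≤ dB L := by
  have := map_topB (mapRingHom (Int.castRingHom K)) L X
  simp only [coe_mapRingHom, map_X] at this
  rw [← this]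
  exact natDegree_map_le

lemma natDegree_ft (L : List (ℤ × ℤ)) (t : K) (j : ℕ) (hj : j ≤ L.length) : ((ft L t).coeff j).natDegree ≤ dD L := by
  have := map_tr (A := ℤ[X][X][X]) (B := K[X][X]) (mapRingHom (mapRingHom (eval₂RingHom (Int.castRingHom K) t)))
    (C X) (C (C X)) X L
  simp only [coe_mapRingHom, map_X, map_C, coe_eval₂RingHom, eval₂_X] at this
  rw [ft, ← this, coeff_map]
  refine natDegree_map_le.trans ?_
  exact Finset.le_sup (f := fun j =>
    ((tr (C X) (C (C X)) X L : ℤ[X][X][X]).coeff j).natDegree) (Finset.mem_range.2 (by omega))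

/-- The auxiliary curve. -/
noncomputable def FF (L : List (ℤ × ℤ)) (t v s' t' : K) : K[X][X] :=
  X ^ L.length + (∑ j ∈ Finset.range L.length,
    monomial j (C ((topA L s' * topB L t')⁻¹ * (hh L s' t').coeff j) * topA L X ^ (2 * (L.length - j)))
    + C (C (-(topA L s' * topB L t')⁻¹) * ∑ j ∈ Finset.range (L.length + 1),
      (ft L t).coeff j * topA L X ^ (2 * (L.length - j)) * C v ^ j))

lemma FF_eval (L : List (ℤ × ℤ)) (hL : L ≠ []) (s t u s' t' u' : K) (hβ : topA L s' * topB L t' ≠ 0)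
    (h : tr s t u L = tr s' t' u' L) :
    ((FF L t (u * topA L s ^ 2) s' t').map (evalRingHom s)).eval (u' * topA L s ^ 2) = 0 := by
  set β := topA L s' * topB L t' with hβd
  set α := topA L s with hα
  set r := L.length with hr
  have e1 : tr s t u L = ∑ j ∈ Finset.range (r + 1), ((ft L t).coeff j).eval s * u ^ j := by
    rw [← hh_eval, Polynomial.eval_eq_sum_range' (show (hh L s t).natDegree < r + 1 from Nat.lt_succ_of_le (tr_natDegree s t L))]
    apply Finset.sum_congr rfl
    intro j _
    rw [← ft_map, coeff_map]; rfl
  have e2 : tr s' t' u' L = ∑ j ∈ Finset.range r, (hh L s' t').coeff j * u' ^ j + β * u' ^ r := by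
    rw [← hh_eval, Polynomial.eval_eq_sum_range' (show (hh L s' t').natDegree < r + 1 from Nat.lt_succ_of_le (tr_natDegree s' t' L)),
      Finset.sum_range_succ, hh, tr_coeff_top s' t' L hL]
  have h3 : ((FF L t (u * α ^ 2) s' t').map (evalRingHom s)).eval (u' * α ^ 2) =
     β⁻¹ * α ^ (2 * r) * (tr s' t' u' L - tr s t u L) := by
    rw [e1, e2]
    simp only [FF, Polynomial.map_add, Polynomial.map_pow, map_X, eval_add, eval_pow, eval_X, Polynomial.map_sum,
      eval_finsetSum, map_monomial, coe_evalRingHom, eval_mul, eval_C, topA_eval, eval_monomial, map_C, ← hβd, ← hα, ← hr]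
    rw [mul_sub, mul_add, Finset.mul_sum, Finset.mul_sum, Finset.mul_sum]
    have f1 : ∀ j ∈ Finset.range r, β⁻¹ * (hh L s' t').coeff j * α ^ (2 * (r - j)) * (u' * α ^ 2) ^ j =
       β⁻¹ * α ^ (2 * r) * ((hh L s' t').coeff j * u' ^ j) := by
      intro j hj
      have : α ^ (2 * r) = α ^ (2 * (r - j)) * (α ^ 2) ^ j := by
        rw [← pow_mul, ← pow_add]; congr 1; have := Finset.mem_range.1 hj; omega
      rw [this, mul_pow]; ring
    have f2 : ∀ j ∈ Finset.range (r + 1), -β⁻¹ * (eval s ((ft L t).coeff j) * α ^ (2 * (r - j)) * (u * α ^ 2) ^ j) =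
       - (β⁻¹ * α ^ (2 * r) * (eval s ((ft L t).coeff j) * u ^ j)) := by
      intro j hj
      have : α ^ (2 * r) = α ^ (2 * (r - j)) * (α ^ 2) ^ j := by
        rw [← pow_mul, ← pow_add]; congr 1; have := Finset.mem_range.1 hj; omega
      rw [this, mul_pow]; ring
    rw [Finset.sum_congr rfl f1, Finset.sum_congr rfl f2, Finset.sum_neg_distrib, mul_pow, ← pow_mul]
    have : β⁻¹ * α ^ (2 * r) * (β * u' ^ r) = u' ^ r * α ^ (2 * r) := by field_simp
    rw [this]; ring
  rw [h3, h, sub_self, mul_zero]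

lemma FF_coeff (L : List (ℤ × ℤ)) (t v s' t' : K) (j : ℕ) (hj0 : j ≠ 0) (hj : j < L.length) :
    (FF L t v s' t').coeff j =
      C ((topA L s' * topB L t')⁻¹ * (hh L s' t').coeff j) * topA L X ^ (2 * (L.length - j)) := by
  simp only [FF, coeff_add, coeff_X_pow, finsetSum_coeff, coeff_monomial, coeff_C]
  rw [if_neg (by omega), if_neg hj0, Finset.sum_ite_eq']
  simp [hj]

lemma FF_coeff_zero (L : List (ℤ × ℤ)) (hL : L ≠ []) (t v s' t' : K) :
    ∃ y, (FF L t v s' t').coeff 0 = topA L X * (C (-(topA L s' * topB L t')⁻¹ * topB L t * v ^ L.length) + topA L X * y) := by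
  have hl : 1 ≤ L.length := List.length_pos_iff.2 hL
  simp only [FF, coeff_add, coeff_X_pow, finsetSum_coeff, coeff_monomial, coeff_C]
  rw [if_neg (by omega), if_pos trivial, Finset.sum_ite_eq', if_pos (Finset.mem_range.2 hl), Finset.sum_range_succ]
  have h1 : (ft L t).coeff L.length = topA L X * C (topB L t) := by
    rw [ft, tr_coeff_top _ _ _ hL, map_topB]
  have h2 : ∃ y, ∑ j ∈ Finset.range L.length,
      (ft L t).coeff j * topA L X ^ (2 * (L.length - j)) * C v ^ j = topA L X ^ 2 * y := by
    refine ⟨∑ j ∈ Finset.range L.length,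
      (ft L t).coeff j * topA L X ^ (2 * (L.length - j - 1)) * C v ^ j, ?_⟩
    rw [Finset.mul_sum]
    apply Finset.sum_congr rfl
    intro j hj
    have hj := Finset.mem_range.1 hj
    have : 2 * (L.length - j) = 2 + 2 * (L.length - j - 1) := by omega
    rw [this, pow_add]; ring
  obtain ⟨y, hy⟩ := h2
  have h3 : (topA L (X : K[X])) ^ (2 * (L.length - 0)) = topA L X ^ 2 * topA L X ^ (2 * (L.length - 1)) := by
    rw [← pow_add]; congr 1; omega
  refine ⟨C ((topA L s' * topB L t')⁻¹ * (hh L s' t').coeff 0) * topA L X ^ (2 * (L.length - 1)) +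
    C (-(topA L s' * topB L t')⁻¹) * y, ?_⟩
  rw [hy, h1, h3]
  simp only [tsub_self, mul_zero, pow_zero, mul_one, map_mul, map_pow]
  ring

lemma FF_monic (L : List (ℤ × ℤ)) (hL : L ≠ []) (t v s' t' : K) :
    (FF L t v s' t').Monic ∧ (FF L t v s' t').natDegree = L.length := by
  have hl : 1 ≤ L.length := List.length_pos_iff.2 hL
  have hdeg : (∑ j ∈ Finset.range L.length,
    monomial j (C ((topA L s' * topB L t')⁻¹ * (hh L s' t').coeff j) * topA L X ^ (2 * (L.length - j)))
    + C (C (-(topA L s' * topB L t')⁻¹) * ∑ j ∈ Finset.range (L.length + 1),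
      (ft L t).coeff j * topA L X ^ (2 * (L.length - j)) * C v ^ j)).degree < (L.length : WithBot ℕ) := by
    refine (degree_add_le _ _).trans_lt (max_lt ?_ ?_)
    · refine (degree_sum_le _ _).trans_lt ?_
      rw [Finset.sup_lt_iff (by exact WithBot.bot_lt_coe _)]
      intro j hj
      exact (degree_monomial_le _ _).trans_lt (by exact_mod_cast Finset.mem_range.1 hj)
    · exact degree_C_le.trans_lt (by exact_mod_cast hl)
  constructor
  · exact monic_X_pow_add hdeg
  · apply natDegree_eq_of_degree_eq_some
    rw [FF, degree_add_eq_left_of_degree_lt, degree_X_pow]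
    rw [degree_X_pow]; exact hdeg

lemma FF_weights (L : List (ℤ × ℤ)) (hL : L ≠ []) (t v s' t' : K) (j : ℕ) :
    ((FF L t v s' t').coeff j).natDegree ≤ (2 * dA L + dD L) * (L.length - j) := by
  have hl : 1 ≤ L.length := List.length_pos_iff.2 hL
  obtain ⟨hm, hd⟩ := FF_monic L hL t v s' t'
  have hA : ∀ k : ℕ, (topA L (X : K[X]) ^ k).natDegree ≤ k * dA L := fun k =>
    natDegree_pow_le.trans (Nat.mul_le_mul_left _ (natDegree_topA L))
  rcases lt_trichotomy j L.length with h | h | h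
  · rcases Nat.eq_zero_or_pos j with rfl | h0
    · simp only [FF, coeff_add, coeff_X_pow, finsetSum_coeff, coeff_monomial, coeff_C]
      rw [if_neg (by omega), if_pos trivial, Finset.sum_ite_eq', if_pos (Finset.mem_range.2 hl), zero_add]
      refine (natDegree_add_le _ _).trans (max_le ?_ ?_)
      · refine (natDegree_C_mul_le _ _).trans ((hA _).trans ?_)
        nlinarith [Nat.zero_le (dD L * (L.length - 0))]
      · refine (natDegree_C_mul_le _ _).trans (natDegree_sum_le_of_forall_le _ _ ?_)
        intro j hj
        have hj := Finset.mem_range.1 hj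
        rw [← C_pow]
        refine (natDegree_mul_C_le _ _).trans (natDegree_mul_le.trans ?_)
        have h1 := natDegree_ft L t j (by omega)
        have h2 := hA (2 * (L.length - j))
        have h3 : 2 * (L.length - j) * dA L ≤ 2 * L.length * dA L := Nat.mul_le_mul_right _ (by omega)
        rw [Nat.sub_zero]
        have h4 : dD L ≤ dD L * L.length := Nat.le_mul_of_pos_right _ hl
        nlinarith
    · rw [FF_coeff _ _ _ _ _ _ h0.ne' h]
      refine (natDegree_C_mul_le _ _).trans ((hA _).trans ?_)
      nlinarith [Nat.zero_le (dD L * (L.length - j))]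
  · rw [h]; nth_rewrite 1 [← hd]; rw [hm.coeff_natDegree]; simp
  · rw [coeff_eq_zero_of_natDegree_lt (by omega)]; simp

/-- the root condition on the word -/
def Good (K : Type) [Field K] (L : List (ℤ × ℤ)) : Prop :=
  topB L (X : K[X]) ≠ 0 ∧ ∃ (s0 : AlgebraicClosure K) (m : ℕ), 0 < m ∧ Nat.Coprime m L.length ∧
    ((topA L (X : K[X])).map (algebraMap K (AlgebraicClosure K))).rootMultiplicity s0 = m

lemma FF_abs (L : List (ℤ × ℤ)) (hL : L ≠ []) (hg : Good K L) (t v s' t' : K) (ht : topB L t ≠ 0) (hv : v ≠ 0)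
    (hβ : topA L s' * topB L t' ≠ 0) : AbsDom (FF L t v s' t') := by
  obtain ⟨_, s0, m, hm, hcop, hmul⟩ := hg
  obtain ⟨h1, h2⟩ := FF_monic L hL t v s' t'
  have hl : 1 ≤ L.length := List.length_pos_iff.2 hL
  set A := (topA L (X : K[X])).map (algebraMap K (AlgebraicClosure K)) with hA
  have hA0 : A ≠ 0 := by intro h; rw [h] at hmul; simp at hmul; omega
  have hdvd : (X - C s0) ^ m ∣ A := by
    rw [← Polynomial.le_rootMultiplicity_iff hA0, hmul]
  have hroot : A.eval s0 = 0 := by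
    rw [← IsRoot, ← Polynomial.rootMultiplicity_pos hA0]; omega
  obtain ⟨y, hy⟩ := FF_coeff_zero L hL t v s' t'
  refine absDom_crit h1 s0 m hm (by omega) (by rwa [h2]) ?_ ?_
  · rw [hy, Polynomial.map_mul, ← hA]
    set G := Polynomial.map (algebraMap K (AlgebraicClosure K))
      (C (-(topA L s' * topB L t')⁻¹ * topB L t * v ^ L.length) + topA L X * y) with hG
    have hG1 : G.eval s0 ≠ 0 := by
      rw [hG, Polynomial.map_add, Polynomial.map_mul, ← hA, eval_add, eval_mul, hroot, zero_mul, add_zero, map_C, eval_C]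
      rw [Ne, map_eq_zero]
      exact mul_ne_zero (mul_ne_zero (neg_ne_zero.2 (inv_ne_zero hβ)) ht) (pow_ne_zero _ hv)
    have hG0 : G ≠ 0 := by intro h; rw [h] at hG1; simp at hG1
    rw [rootMultiplicity_mul (mul_ne_zero hA0 hG0), hmul, rootMultiplicity_eq_zero hG1, add_zero]
  · intro j hj
    rw [h2] at hj
    rcases Nat.eq_zero_or_pos j with rfl | h0
    · rw [hy, Polynomial.map_mul]
      exact hdvd.mul_right _
    · rw [FF_coeff _ _ _ _ _ _ h0.ne' hj, Polynomial.map_mul, Polynomial.map_pow]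
      exact Dvd.dvd.mul_left (hdvd.trans (dvd_pow_self _ (by omega))) _

end curveF
end EqW

open Matrix Polynomial

namespace EqW

section moment
open Classical in
noncomputable def prs (K : Type) [Field K] [Fintype K] (L : List (ℤ × ℤ)) : Finset ((K × K × K) × (K × K × K)) :=
  Finset.univ.filter fun x => tr x.1.1 x.1.2.1 x.1.2.2 L = tr x.2.1 x.2.2.1 x.2.2.2 L

variable {K : Type} [Field K] [Fintype K]

open Classical in
lemma root_count (L : List (ℤ × ℤ)) (hL : L ≠ []) (s t c : K) (h : topA L s * topB L t ≠ 0) :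
    (Finset.univ.filter fun u : K => tr s t u L = c).card ≤ L.length := by
  have hl : 1 ≤ L.length := List.length_pos_iff.2 hL
  have h0 : hh L s t - C c ≠ 0 := by
    intro h1
    have h2 := congrArg (fun q => coeff q L.length) h1
    simp only [coeff_sub, coeff_C, coeff_zero] at h2
    rw [if_neg (by omega), sub_zero, hh, tr_coeff_top s t L hL] at h2
    exact h h2
  have h1 : (Finset.univ.filter fun u : K => tr s t u L = c) ⊆ (hh L s t - C c).roots.toFinset := by
    intro u hu
    rw [Finset.mem_filter] at hu
    rw [Multiset.mem_toFinset, mem_roots h0, IsRoot, eval_sub, hh_eval, hu.2, eval_C, sub_self]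
  refine (Finset.card_le_card h1).trans ((Multiset.toFinset_card_le _).trans ((card_roots' _).trans ?_))
  refine (natDegree_sub_le _ _).trans (max_le (tr_natDegree s t L) (by simp))

open Classical in
lemma zeros_le (f : K[X]) (hf : f ≠ 0) : (Finset.univ.filter fun s : K => f.eval s = 0).card ≤ f.natDegree := by
  have h1 : (Finset.univ.filter fun s : K => f.eval s = 0) ⊆ f.roots.toFinset := by
    intro u hu
    rw [Finset.mem_filter] at hu
    rw [Multiset.mem_toFinset, mem_roots hf]; exact hu.2
  exact (Finset.card_le_card h1).trans ((Multiset.toFinset_card_le _).trans (card_roots' _))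

open Classical in
noncomputable def badst (K : Type) [Field K] [Fintype K] (L : List (ℤ × ℤ)) : Finset (K × K × K) :=
  Finset.univ.filter fun x => topA L x.1 * topB L x.2.1 = 0

open Classical in
lemma badst_card (L : List (ℤ × ℤ)) (hg : Good K L) :
    (badst K L).card ≤ (dA L + dB L) * Fintype.card K ^ 2 := by
  obtain ⟨hB, s0, m, hm, hcop, hmul⟩ := hg
  have hA : topA L (X : K[X]) ≠ 0 := by
    intro h; rw [h] at hmul; simp at hmul; omega
  have h1 : badst K L ⊆ ((Finset.univ.filter fun s : K => (topA L (X : K[X])).eval s = 0) ×ˢ Finset.univ) ∪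
     (Finset.univ ×ˢ ((Finset.univ.filter fun s : K => (topB L (X : K[X])).eval s = 0) ×ˢ Finset.univ)) := by
    rintro ⟨s, t, u⟩ hx
    simp only [badst, Finset.mem_filter, Finset.mem_univ, true_and, mul_eq_zero] at hx
    simp only [Finset.mem_union, Finset.mem_product, Finset.mem_filter, Finset.mem_univ, true_and, and_true,
      topA_eval, topB_eval]
    exact hx
  refine (Finset.card_le_card h1).trans ((Finset.card_union_le _ _).trans ?_)
  simp only [Finset.card_product, Finset.card_univ, Fintype.card_prod]
  have h2 := (zeros_le _ hA).trans (natDegree_topA L)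
  have h3 := (zeros_le _ hB).trans (natDegree_topB L)
  calc _ ≤ dA L * (Fintype.card K * Fintype.card K) + Fintype.card K * (dB L * Fintype.card K) := by gcongr
    _ = _ := by ring

open Classical in
/-- pairs with first point in `B` and second point with nonvanishing leading coefficient -/
lemma half_bound (L : List (ℤ × ℤ)) (hL : L ≠ []) (B : Finset (K × K × K)) :
    ((prs K L).filter fun x => x.1 ∈ B ∧ x.2 ∉ badst K L).card ≤ L.length * (B.card * Fintype.card K ^ 2) := by
  have := Finset.card_le_mul_card_image_of_maps_to (s := (prs K L).filter fun x => x.1 ∈ B ∧ x.2 ∉ badst K L)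
    (t := B ×ˢ (Finset.univ : Finset (K × K))) (f := fun x => (x.1, (x.2.1, x.2.2.1))) (by
      intro x hx
      rw [Finset.mem_filter] at hx
      simp [hx.2.1]) L.length (by
      rintro ⟨P, s, t⟩ _
      by_cases hst : topA L s * topB L t = 0
      · rw [Finset.card_eq_zero.2]
        · exact Nat.zero_le _
        · rw [Finset.filter_eq_empty_iff]
          rintro ⟨P', s', t', u'⟩ hx h2
          rw [Finset.mem_filter] at hx
          simp only [Prod.mk.injEq] at h2
          obtain ⟨rfl, rfl, rfl⟩ := h2
          apply hx.2.2
          simp only [badst, Finset.mem_filter, Finset.mem_univ, true_and]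
          exact hst
      · refine le_trans ?_ (root_count L hL s t (tr P.1 P.2.1 P.2.2 L) hst)
        apply Finset.card_le_card_of_injOn (fun x => x.2.2.2)
        · rintro ⟨P', s', t', u'⟩ hx
          simp only [Finset.coe_filter, Set.mem_setOf_eq, prs, Finset.mem_filter, Finset.mem_univ, true_and,
            Prod.mk.injEq] at hx ⊢
          obtain ⟨⟨h1, _⟩, rfl, rfl, rfl⟩ := hx
          exact h1.symm
        · rintro ⟨P', s', t', u'⟩ hx ⟨P'', s'', t'', u''⟩ hx' h
          simp only [Finset.coe_filter, Set.mem_setOf_eq, Prod.mk.injEq] at hx hx' h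
          obtain ⟨_, rfl, rfl, rfl⟩ := hx
          obtain ⟨_, rfl, rfl, rfl⟩ := hx'
          rw [h])
  refine this.trans (le_of_eq ?_)
  simp [Finset.card_product, sq]

open Classical in
lemma good_bound (L : List (ℤ × ℤ)) (hL : L ≠ []) (hg : Good K L) (M : ℕ)
    (hM : ∀ F : K[X][X], F.Monic → F.natDegree = L.length →
      (∀ j, (F.coeff j).natDegree ≤ (2 * dA L + dD L) * (L.length - j)) → AbsDom F →
      Nat.card {x : K × K // (F.map (evalRingHom x.1)).eval x.2 = 0} ≤ M) :
    ((prs K L).filter fun x => (x.1 ∉ badst K L ∧ x.1.2.2 ≠ 0) ∧ x.2 ∉ badst K L).card ≤ M * Fintype.card K ^ 4 := by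
  have := Finset.card_le_mul_card_image_of_maps_to
    (s := (prs K L).filter fun x => (x.1 ∉ badst K L ∧ x.1.2.2 ≠ 0) ∧ x.2 ∉ badst K L)
    (t := (Finset.univ : Finset (K × K × K × K)))
    (f := fun x => (x.1.2.1, x.1.2.2 * topA L x.1.1 ^ 2, x.2.1, x.2.2.1)) (by simp) M (by
      rintro ⟨t, v, s', t'⟩ _
      by_cases hne : topB L t ≠ 0 ∧ v ≠ 0 ∧ topA L s' * topB L t' ≠ 0
      · obtain ⟨h1, h2, h3⟩ := hne
        obtain ⟨g1, g2⟩ := FF_monic L hL t v s' t'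
        refine le_trans ?_ (hM (FF L t v s' t') g1 g2 (FF_weights L hL t v s' t') (FF_abs L hL hg t v s' t' h1 h2 h3))
        rw [Nat.card_eq_fintype_card, Fintype.card_subtype]
        apply Finset.card_le_card_of_injOn (fun x => (x.1.1, x.2.2.2 * topA L x.1.1 ^ 2))
        · rintro ⟨⟨s, t, u⟩, s', t', u'⟩ hx
          simp only [Finset.coe_filter, Set.mem_setOf_eq, prs, Finset.mem_filter, Finset.mem_univ, true_and,
            Prod.mk.injEq] at hx ⊢
          obtain ⟨⟨h5, _⟩, rfl, rfl, rfl, rfl⟩ := hx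
          exact FF_eval L hL s t u s' t' u' h3 h5
        · rintro ⟨⟨s, t, u⟩, s', t', u'⟩ hx ⟨⟨s2, t2, u2⟩, s2', t2', u2'⟩ hx' h
          simp only [Finset.coe_filter, Set.mem_setOf_eq, Finset.mem_filter, Prod.mk.injEq, badst,
            Finset.mem_univ, true_and] at hx hx' h
          obtain ⟨⟨_, ⟨h7, _⟩, _⟩, rfl, h4, rfl, rfl⟩ := hx
          obtain ⟨⟨_, ⟨_, _⟩, _⟩, rfl, h5, rfl, rfl⟩ := hx'
          obtain ⟨rfl, h6⟩ := h
          have h8 : topA L s ^ 2 ≠ 0 := pow_ne_zero _ (left_ne_zero_of_mul h7)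
          have h9 : u = u2 := mul_right_cancel₀ h8 (h4.trans h5.symm)
          have h10 : u' = u2' := mul_right_cancel₀ h8 h6
          rw [h9, h10]
      · rw [Finset.card_eq_zero.2]
        · exact Nat.zero_le _
        · rw [Finset.filter_eq_empty_iff]
          rintro ⟨⟨s, t, u⟩, s', t', u'⟩ hx h2
          simp only [Finset.mem_filter, Prod.mk.injEq, badst,
            Finset.mem_univ, true_and] at hx h2
          obtain ⟨_, ⟨h7, h8⟩, h9⟩ := hx
          obtain ⟨rfl, rfl, rfl, rfl⟩ := h2
          exact hne ⟨right_ne_zero_of_mul h7, mul_ne_zero h8 (pow_ne_zero _ (left_ne_zero_of_mul h7)), h9⟩)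
  refine this.trans (le_of_eq ?_)
  simp only [Finset.card_univ, Fintype.card_prod]
  ring

open Classical in
lemma prs_bound (L : List (ℤ × ℤ)) (hL : L ≠ []) (hg : Good K L) (M : ℕ)
    (hM : ∀ F : K[X][X], F.Monic → F.natDegree = L.length →
      (∀ j, (F.coeff j).natDegree ≤ (2 * dA L + dD L) * (L.length - j)) → AbsDom F →
      Nat.card {x : K × K // (F.map (evalRingHom x.1)).eval x.2 = 0} ≤ M) :
    (prs K L).card ≤ M * Fintype.card K ^ 4 +
      (2 * L.length * (dA L + dB L + 1) + (dA L + dB L) ^ 2) * Fintype.card K ^ 4 := by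
  set q := Fintype.card K with hq
  set B2 : Finset (K × K × K) := badst K L ∪ Finset.univ.filter (fun x => x.2.2 = 0) with hB2
  have c1 := badst_card L hg
  have c2 : B2.card ≤ (dA L + dB L + 1) * q ^ 2 := by
    refine (Finset.card_union_le _ _).trans ?_
    have : (Finset.univ.filter (fun x : K × K × K => x.2.2 = 0)).card ≤ q ^ 2 := by
      have h1 : (Finset.univ.filter (fun x : K × K × K => x.2.2 = 0)).card ≤ (Finset.univ : Finset (K × K)).card := by
        apply Finset.card_le_card_of_injOn (fun x => (x.1, x.2.1))
        · intro x _; simp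
        · rintro ⟨a, b, c⟩ hx ⟨a', b', c'⟩ hx' h
          simp at hx hx' h
          obtain ⟨rfl, rfl⟩ := h
          rw [hx, hx']
      refine h1.trans (le_of_eq ?_)
      simp [sq, hq]
    nlinarith
  have hsub : prs K L ⊆ ((prs K L).filter fun x => (x.1 ∉ badst K L ∧ x.1.2.2 ≠ 0) ∧ x.2 ∉ badst K L) ∪
     (((prs K L).filter fun x => x.1 ∈ B2 ∧ x.2 ∉ badst K L) ∪
     (((prs K L).filter fun x => x.2 ∈ badst K L ∧ x.1 ∉ badst K L) ∪ (badst K L ×ˢ badst K L))) := by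
    intro x hx
    simp only [Finset.mem_union, Finset.mem_filter, Finset.mem_product, hx, true_and, hB2, Finset.mem_univ]
    tauto
  have hswap : ((prs K L).filter fun x => x.2 ∈ badst K L ∧ x.1 ∉ badst K L).card ≤
      ((prs K L).filter fun x => x.1 ∈ badst K L ∧ x.2 ∉ badst K L).card := by
    apply Finset.card_le_card_of_injOn Prod.swap
    · intro x hx
      simp only [Finset.coe_filter, Set.mem_setOf_eq, prs, Finset.mem_filter, Finset.mem_univ, true_and, Prod.fst_swap,
        Prod.snd_swap] at hx ⊢
      exact ⟨hx.1.symm, hx.2⟩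
    · exact Prod.swap_injective.injOn
  have h1 := good_bound L hL hg M hM
  have h2 := half_bound L hL B2
  have h3 := half_bound L hL (badst K L)
  have h4 : (badst K L ×ˢ badst K L).card ≤ ((dA L + dB L) * q ^ 2) * ((dA L + dB L) * q ^ 2) := by
    rw [Finset.card_product]; gcongr
  have h2' : L.length * (B2.card * q ^ 2) ≤ L.length * (((dA L + dB L + 1) * q ^ 2) * q ^ 2) := by gcongr
  have h3' : L.length * ((badst K L).card * q ^ 2) ≤ L.length * (((dA L + dB L + 1) * q ^ 2) * q ^ 2) := by
    have : (badst K L).card ≤ (dA L + dB L + 1) * q ^ 2 := by nlinarith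
    gcongr
  have h5 := (Finset.card_le_card hsub).trans ((Finset.card_union_le _ _).trans (add_le_add le_rfl
    ((Finset.card_union_le _ _).trans (add_le_add le_rfl (Finset.card_union_le _ _)))))
  have e : M * q ^ 4 + (2 * L.length * (dA L + dB L + 1) + (dA L + dB L) ^ 2) * q ^ 4 =
    M * q ^ 4 + (L.length * (((dA L + dB L + 1) * q ^ 2) * q ^ 2) + (L.length * (((dA L + dB L + 1) * q ^ 2) * q ^ 2) +
      ((dA L + dB L) * q ^ 2) * ((dA L + dB L) * q ^ 2))) := by ring
  rw [e]
  linarith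

theorem second_moment (p : ℕ) [hp : Fact p.Prime] (L : List (ℤ × ℤ)) (hL : L ≠ []) (ε : ℝ) (hε : 0 < ε) :
    ∃ n0 : ℕ, ∀ n ≥ n0, ∀ (K : Type) [Field K] [Fintype K] [CharP K p], Fintype.card K = p ^ n → Good K L →
    ((prs K L).card : ℝ) ≤ (1 + ε) * ((p : ℝ) ^ n) ^ 5 := by
  have hl : 1 ≤ L.length := List.length_pos_iff.2 hL
  obtain ⟨n0, h0⟩ := curve_bound p L.length (2 * dA L + dD L) hl (ε / 2) (by positivity)
  set D : ℕ := (2 * L.length * (dA L + dB L + 1) + (dA L + dB L) ^ 2) with hD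
  obtain ⟨n1, h1⟩ := exists_nat_ge ((D : ℝ) / (ε / 2))
  rw [div_le_iff₀ (by positivity)] at h1
  refine ⟨max n0 n1, ?_⟩
  intro n hn K _ _ _ hcard hg
  have hq : (n1 : ℝ) ≤ (p : ℝ) ^ n := by
    have h2 : n < p ^ n := Nat.lt_pow_self hp.out.one_lt
    have h3 : n1 ≤ p ^ n := by have := le_max_right n0 n1; omega
    exact_mod_cast h3
  set q : ℝ := (p : ℝ) ^ n with hqd
  have hq0 : 0 ≤ q := by positivity
  have hb := prs_bound L hL hg ⌊(1 + ε / 2) * q⌋₊ (by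
    intro F hF hr hd ha
    apply Nat.le_floor
    exact h0 n ((le_max_left _ _).trans hn) K hcard F hF hr hd ha)
  rw [← hD] at hb
  have hb' : ((prs K L).card : ℝ) ≤ ⌊(1 + ε / 2) * q⌋₊ * q ^ 4 + D * q ^ 4 := by
    have e : (Fintype.card K : ℝ) = q := by rw [hcard]; push_cast; rfl
    have h9 := (Nat.cast_le (α := ℝ)).2 hb
    push_cast at h9
    rw [e] at h9
    exact h9
  have h4 : (⌊(1 + ε / 2) * q⌋₊ : ℝ) ≤ (1 + ε / 2) * q := Nat.floor_le (by positivity)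
  have h5 : (D : ℝ) ≤ ε / 2 * q := h1.trans (by nlinarith)
  have h6 : (0 : ℝ) ≤ q ^ 4 := by positivity
  calc ((prs K L).card : ℝ) ≤ _ := hb'
    _ ≤ ((1 + ε / 2) * q) * q ^ 4 + (ε / 2 * q) * q ^ 4 := by gcongr
    _ = _ := by ring

end moment
end EqW

open Matrix Polynomial

namespace EqW

section grp
variable {K : Type} [Field K] [Fintype K]

open Classical in
lemma quad_roots (k2 k1 k0 : K) (h : k0 ≠ 0 ∨ k2 ≠ 0) :
    (Finset.univ.filter fun a : K => k2 * a ^ 2 + k1 * a + k0 = 0).card ≤ 2 := by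
  set P : K[X] := C k2 * X ^ 2 + C k1 * X + C k0 with hP
  have h0 : P ≠ 0 := by
    intro h1
    have e0 := congrArg (fun q => coeff q 0) h1
    have e2 := congrArg (fun q => coeff q 2) h1
    simp [hP, coeff_X, coeff_C] at e0 e2
    tauto
  have h1 : (Finset.univ.filter fun a : K => k2 * a ^ 2 + k1 * a + k0 = 0) ⊆ P.roots.toFinset := by
    intro u hu
    rw [Finset.mem_filter] at hu
    rw [Multiset.mem_toFinset, mem_roots h0, IsRoot]
    simpa [hP] using hu.2
  refine (Finset.card_le_card h1).trans ((Multiset.toFinset_card_le _).trans ((card_roots' _).trans ?_))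
  exact natDegree_quadratic_le

open Classical in
lemma lin_core (α β γ δ k e : K) (he : e ≠ 0) (hδ : δ ≠ 0) :
    (Finset.univ.filter fun v : K × K × K × K => v.1 * v.2.2.2 - v.2.1 * v.2.2.1 = e ∧
      α * v.1 + β * v.2.1 + γ * v.2.2.1 + δ * v.2.2.2 = k).card ≤ Fintype.card K ^ 2 + 2 * Fintype.card K := by
  set S := (Finset.univ.filter fun v : K × K × K × K => v.1 * v.2.2.2 - v.2.1 * v.2.2.1 = e ∧
      α * v.1 + β * v.2.1 + γ * v.2.2.1 + δ * v.2.2.2 = k) with hS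
  rw [← Finset.card_filter_add_card_filter_not (s := S) (fun v => γ * v.1 + δ * v.2.1 ≠ 0)]
  apply add_le_add
  · have : (S.filter fun v => γ * v.1 + δ * v.2.1 ≠ 0).card ≤ (Finset.univ : Finset (K × K)).card := by
      apply Finset.card_le_card_of_injOn (fun v => (v.1, v.2.1)) (by intro _ _; simp)
      rintro ⟨a, b, c, d⟩ hx ⟨a', b', c', d'⟩ hx' h
      simp only [Finset.coe_filter, Set.mem_ofPred_eq, hS, Finset.mem_filter, Finset.mem_univ, true_and, Prod.mk.injEq] at hx hx' h
      obtain ⟨rfl, rfl⟩ := h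
      obtain ⟨⟨h1, h2⟩, h3⟩ := hx
      obtain ⟨⟨h4, h5⟩, _⟩ := hx'
      have hc : c = c' := by
        have : (γ * a + δ * b) * (c - c') = 0 := by linear_combination -δ * h1 + δ * h4 + a * h2 - a * h5
        exact sub_eq_zero.1 ((mul_eq_zero.1 this).resolve_left h3)
      subst hc
      have hd : d = d' := by
        have : δ * (d - d') = 0 := by linear_combination h2 - h5
        exact sub_eq_zero.1 ((mul_eq_zero.1 this).resolve_left hδ)
      rw [hd]
    refine this.trans (le_of_eq ?_)
    simp [sq]
  · have : (S.filter fun v => ¬ (γ * v.1 + δ * v.2.1 ≠ 0)).card ≤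
       ((Finset.univ.filter fun a : K => (β * γ - α * δ) * a ^ 2 + (k * δ) * a + (- δ ^ 2 * e) = 0) ×ˢ (Finset.univ : Finset K)).card := by
      apply Finset.card_le_card_of_injOn (fun v => (v.1, v.2.2.1))
      · rintro ⟨a, b, c, d⟩ hx
        simp only [Finset.coe_filter, Set.mem_ofPred_eq, hS, Finset.mem_filter, Finset.mem_univ, true_and, not_not] at hx
        simp only [Finset.coe_product, Finset.coe_filter, Finset.mem_univ, true_and, Finset.coe_univ,
          Set.mem_prod, Set.mem_ofPred_eq, Set.mem_univ, and_true]
        obtain ⟨⟨h1, h2⟩, h3⟩ := hx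
        linear_combination δ ^ 2 * h1 - δ * a * h2 + (β * a + c * δ) * h3
      rintro ⟨a, b, c, d⟩ hx ⟨a', b', c', d'⟩ hx' h
      simp only [Finset.coe_filter, Set.mem_ofPred_eq, hS, Finset.mem_filter, Finset.mem_univ, true_and, not_not, Prod.mk.injEq] at hx hx' h
      obtain ⟨rfl, rfl⟩ := h
      obtain ⟨⟨h1, h2⟩, h3⟩ := hx
      obtain ⟨⟨h4, h5⟩, h6⟩ := hx'
      have hb : b = b' := by
        have : δ * (b - b') = 0 := by linear_combination h3 - h6
        exact sub_eq_zero.1 ((mul_eq_zero.1 this).resolve_left hδ)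
      subst hb
      have hd : d = d' := by
        have : δ * (d - d') = 0 := by linear_combination h2 - h5
        exact sub_eq_zero.1 ((mul_eq_zero.1 this).resolve_left hδ)
      rw [hd]
    refine this.trans ?_
    rw [Finset.card_product, Finset.card_univ]
    apply Nat.mul_le_mul_right
    apply quad_roots
    left
    simp [hδ, he]

open Classical in
lemma lin_count (α β γ δ k e : K) (he : e ≠ 0) (h : ¬ (α = 0 ∧ β = 0 ∧ γ = 0 ∧ δ = 0)) :
    (Finset.univ.filter fun v : K × K × K × K => v.1 * v.2.2.2 - v.2.1 * v.2.2.1 = e ∧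
      α * v.1 + β * v.2.1 + γ * v.2.2.1 + δ * v.2.2.2 = k).card ≤ Fintype.card K ^ 2 + 2 * Fintype.card K := by
  by_cases hδ : δ = 0
  · by_cases hα : α = 0
    · by_cases hβ : β = 0
      · have hγ : γ ≠ 0 := by tauto
        refine le_trans ?_ (lin_core β α δ γ k (-e) (by simpa using he) hγ)
        apply Finset.card_le_card_of_injOn (fun v => (v.2.1, v.1, v.2.2.2, v.2.2.1))
        · rintro ⟨a, b, c, d⟩ hx
          simp only [Finset.coe_filter, Set.mem_ofPred_eq, Finset.mem_univ, true_and] at hx ⊢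
          exact ⟨by linear_combination -hx.1, by linear_combination hx.2⟩
        · rintro ⟨a, b, c, d⟩ hx ⟨a', b', c', d'⟩ hx' h
          simp only [Prod.mk.injEq] at h ⊢
          tauto
      · refine le_trans ?_ (lin_core γ δ α β k (-e) (by simpa using he) hβ)
        apply Finset.card_le_card_of_injOn (fun v => (v.2.2.1, v.2.2.2, v.1, v.2.1))
        · rintro ⟨a, b, c, d⟩ hx
          simp only [Finset.coe_filter, Set.mem_ofPred_eq, Finset.mem_univ, true_and] at hx ⊢
          exact ⟨by linear_combination -hx.1, by linear_combination hx.2⟩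
        · rintro ⟨a, b, c, d⟩ hx ⟨a', b', c', d'⟩ hx' h
          simp only [Prod.mk.injEq] at h ⊢
          tauto
    · refine le_trans ?_ (lin_core δ β γ α k e he hα)
      apply Finset.card_le_card_of_injOn (fun v => (v.2.2.2, v.2.1, v.2.2.1, v.1))
      · rintro ⟨a, b, c, d⟩ hx
        simp only [Finset.coe_filter, Set.mem_ofPred_eq, Finset.mem_univ, true_and] at hx ⊢
        exact ⟨by linear_combination hx.1, by linear_combination hx.2⟩
      · rintro ⟨a, b, c, d⟩ hx ⟨a', b', c', d'⟩ hx' h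
        simp only [Prod.mk.injEq] at h ⊢
        tauto
  · exact lin_core α β γ δ k e he hδ

variable (K) in
open Classical in
noncomputable def DD : Finset (K × K × K × K) :=
  Finset.univ.filter fun v => v.1 * v.2.2.2 - v.2.1 * v.2.2.1 = 1

open Classical in
lemma DD_upper : (DD K).card ≤ Fintype.card K ^ 3 := by
  have : (DD K).card ≤ (Finset.univ : Finset (K × K × K)).card := by
    apply Finset.card_le_card_of_injOn (fun v => if v.1 = 0 then (0, v.2.1, v.2.2.2) else (v.1, v.2.1, v.2.2.1)) (by intro _ _; simp)
    rintro ⟨a, b, c, d⟩ hx ⟨a', b', c', d'⟩ hx' h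
    simp only [DD, Finset.coe_filter, Set.mem_ofPred_eq, Finset.mem_univ, true_and] at hx hx' h
    by_cases ha : a = 0 <;> by_cases ha' : a' = 0 <;> simp only [ha, ha', if_true, if_false, Prod.mk.injEq] at h
    · obtain ⟨_, rfl, rfl⟩ := h
      subst ha ha'
      have hb : b ≠ 0 := by rintro rfl; simp at hx
      have : b * (c - c') = 0 := by linear_combination hx' - hx
      have := sub_eq_zero.1 ((mul_eq_zero.1 this).resolve_left hb)
      rw [this]
    · exact absurd h.1.symm ha'
    · exact h.1.elim
    · obtain ⟨rfl, rfl, rfl⟩ := h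
      have : a * (d - d') = 0 := by linear_combination hx - hx'
      have := sub_eq_zero.1 ((mul_eq_zero.1 this).resolve_left ha)
      rw [this]
  refine this.trans (le_of_eq ?_)
  simp; ring

open Classical in
lemma nz_card : (Finset.univ.filter fun a : K => a ≠ 0).card + 1 = Fintype.card K := by
  rw [Finset.filter_ne', Finset.card_erase_of_mem (Finset.mem_univ _), Finset.card_univ]
  exact Nat.sub_add_cancel Fintype.card_pos

open Classical in
lemma DD_lower : Fintype.card K ^ 3 ≤ (DD K).card + Fintype.card K ^ 2 := by
  have : ((Finset.univ.filter fun a : K => a ≠ 0) ×ˢ (Finset.univ : Finset (K × K))).card ≤ (DD K).card := by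
    apply Finset.card_le_card_of_injOn (fun v => (v.1, v.2.1, v.2.2, (1 + v.2.1 * v.2.2) / v.1))
    · rintro ⟨a, b, c⟩ hx
      simp at hx
      simp [DD]
      field_simp
      ring
    · rintro ⟨a, b, c⟩ hx ⟨a', b', c'⟩ hx' h
      simp only [Prod.mk.injEq] at h ⊢
      tauto
  rw [Finset.card_product, Finset.card_univ, Fintype.card_prod] at this
  have h1 := nz_card (K := K)
  nlinarith

/-- number of elements of trace `s` -/
noncomputable def kap (s : K) : ℕ := by
  classical exact ((DD K).filter fun v => v.1 + v.2.2.2 = s).card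

open Classical in
lemma kap_upper (s : K) : kap s ≤ Fintype.card K ^ 2 + 2 * Fintype.card K := by
  refine le_trans (le_of_eq ?_) (lin_count (1 : K) 0 0 1 s 1 one_ne_zero (by simp))
  unfold kap DD
  rw [Finset.filter_filter]
  congr 1
  ext v
  simp

open Classical in
lemma kap_lower (s : K) : Fintype.card K ^ 2 ≤ kap s + Fintype.card K := by
  have : ((Finset.univ.filter fun a : K => a ≠ 0) ×ˢ (Finset.univ : Finset K)).card ≤ kap s := by
    unfold kap
    apply Finset.card_le_card_of_injOn (fun v => (s - v.2, v.1, ((s - v.2) * v.2 - 1) / v.1, v.2))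
    · rintro ⟨b, d⟩ hx
      simp at hx
      simp [DD]
      field_simp
      ring
    · rintro ⟨a, b⟩ hx ⟨a', b'⟩ hx' h
      simp only [Prod.mk.injEq] at h ⊢
      tauto
  rw [Finset.card_product, Finset.card_univ] at this
  have h1 := nz_card (K := K)
  nlinarith

/-- trace of a product -/
def tp (x y : K × K × K × K) : K := x.1 * y.1 + x.2.1 * y.2.2.1 + x.2.2.1 * y.2.1 + x.2.2.2 * y.2.2.2

open Classical in
lemma nu_pairs (x : K × K × K × K) (hx : x.2.2.1 ≠ 0) :
    ((DD K ×ˢ DD K).filter fun z => (z.1.1 + z.1.2.2.2, tp x z.1) = (z.2.1 + z.2.2.2.2, tp x z.2)).card ≤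
      Fintype.card K ^ 4 + 3 * Fintype.card K ^ 3 := by
  obtain ⟨x1, x2, x3, x4⟩ := x
  simp only at hx
  set S := (DD K ×ˢ DD K).filter fun z => (z.1.1 + z.1.2.2.2, tp (x1, x2, x3, x4) z.1) = (z.2.1 + z.2.2.2.2, tp (x1, x2, x3, x4) z.2) with hS
  set q := Fintype.card K with hq
  have h1 := Finset.card_eq_sum_card_fiberwise (s := S) (t := (Finset.univ : Finset (K × K)))
    (f := fun z => (z.2.2.2.1 - z.1.2.2.1, z.2.2.2.2 - z.1.2.2.2)) (by intro _ _; simp)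
  have h2 : ∀ w : K × K, (S.filter fun z => (z.2.2.2.1 - z.1.2.2.1, z.2.2.2.2 - z.1.2.2.2) = w).card ≤
      (q ^ 2 + 2 * q) + if w = 0 then q ^ 3 else 0 := by
    rintro ⟨w3, w4⟩
    set z2 : K := -(x1 * (-w4) + x2 * w3 + x4 * w4) / x3 with hz2
    have hz : x3 * z2 = x1 * w4 - x2 * w3 - x4 * w4 := by rw [hz2]; field_simp; ring
    have key : ∀ z ∈ S.filter (fun z => (z.2.2.2.1 - z.1.2.2.1, z.2.2.2.2 - z.1.2.2.2) = (w3, w4)),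
        z.2.1 = z.1.1 - w4 ∧ z.2.2.1 = z.1.2.1 + z2 ∧ z.2.2.2.1 = z.1.2.2.1 + w3 ∧ z.2.2.2.2 = z.1.2.2.2 + w4
         ∧ z.1 ∈ DD K ∧ w4 * z.1.1 + (-w3) * z.1.2.1 + (-z2) * z.1.2.2.1 + (-w4) * z.1.2.2.2 = w4 ^ 2 + z2 * w3 := by
      rintro ⟨⟨a, b, c, d⟩, ⟨a', b', c', d'⟩⟩ hz'
      simp only [hS, Finset.mem_filter, Finset.mem_product, DD, Finset.mem_univ, true_and, tp, Prod.mk.injEq] at hz' ⊢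
      obtain ⟨⟨⟨e1, e2⟩, e3, e4⟩, rfl, rfl⟩ := hz'
      have g1 : a' = a - (d' - d) := by linear_combination -e3
      have g2 : b' = b + z2 := by
        have : x3 * (b' - b - z2) = 0 := by linear_combination - e4 - hz - x1 * g1
        have := (mul_eq_zero.1 this).resolve_left hx
        linear_combination this
      refine ⟨g1, g2, by ring, by ring, e1, ?_⟩
      rw [g1, g2] at e2
      linear_combination e2 - e1
    by_cases hw : ((w3, w4) : K × K) = 0
    · rw [if_pos hw]
      refine le_trans ?_ (le_trans (DD_upper (K := K)) (Nat.le_add_left _ _))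
      apply Finset.card_le_card_of_injOn (fun z => z.1)
      · intro z hz; exact (key z hz).2.2.2.2.1
      · rintro ⟨y, a', b', c', d'⟩ hz ⟨y1, a1, b1, c1, d1⟩ hz1 h
        have k1 := key _ hz
        have k2 := key _ hz1
        simp only at k1 k2 h
        subst h
        obtain ⟨r1, r2, r3, r4, _⟩ := k1
        obtain ⟨s1, s2, s3, s4, _⟩ := k2
        rw [r1, r2, r3, r4, s1, s2, s3, s4]
    · rw [if_neg hw, add_zero]
      refine le_trans ?_ (lin_count w4 (-w3) (-z2) (-w4) (w4 ^ 2 + z2 * w3) 1 one_ne_zero (by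
        rintro ⟨h1, h2, _⟩; apply hw; rw [neg_eq_zero] at h2; rw [h1, h2]; rfl))
      apply Finset.card_le_card_of_injOn (fun z => z.1)
      · intro z hz
        have := (key z hz).2.2.2.2
        simp only [DD, Finset.mem_filter, Finset.mem_univ, true_and] at this
        simpa using this
      · rintro ⟨y, a', b', c', d'⟩ hz ⟨y1, a1, b1, c1, d1⟩ hz1 h
        have k1 := key _ hz
        have k2 := key _ hz1
        simp only at k1 k2 h
        subst h
        obtain ⟨r1, r2, r3, r4, _⟩ := k1
        obtain ⟨s1, s2, s3, s4, _⟩ := k2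
        rw [r1, r2, r3, r4, s1, s2, s3, s4]
  rw [h1]
  refine (Finset.sum_le_sum fun w _ => h2 w).trans ?_
  rw [Finset.sum_add_distrib, Finset.sum_const, Finset.sum_ite_eq']
  simp only [Finset.card_univ, Fintype.card_prod, Finset.mem_univ, if_true, ← hq, smul_eq_mul]
  apply le_of_eq; ring

end grp
end EqW

open Matrix Polynomial

namespace EqW

section l1

lemma var_l1 {I J : Type*} [Fintype J] [DecidableEq J] (S : Finset I) (φ : I → J) (m V : ℝ)
    (hV : (((S ×ˢ S).filter fun z => φ z.1 = φ z.2).card : ℝ) - 2 * m * S.card + m ^ 2 * Fintype.card J ≤ V) :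
    ∑ j, |((S.filter fun i => φ i = j).card : ℝ) - m| ≤ Real.sqrt (Fintype.card J * V) := by
  apply Real.le_sqrt_of_sq_le
  have h1 : ((S ×ˢ S).filter fun z => φ z.1 = φ z.2).card = ∑ j, (S.filter fun i => φ i = j).card ^ 2 := by
    rw [Finset.card_eq_sum_card_fiberwise (t := (Finset.univ : Finset J)) (f := fun z => φ z.1) (by intro _ _; simp)]
    apply Finset.sum_congr rfl
    intro j _
    rw [sq, ← Finset.card_product]
    congr 1
    ext ⟨a, b⟩
    simp only [Finset.mem_filter, Finset.mem_product]
    constructor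
    · rintro ⟨⟨⟨h1, h2⟩, h3⟩, h4⟩; exact ⟨⟨h1, h4⟩, h2, h3 ▸ h4⟩
    · rintro ⟨⟨h1, h4⟩, h2, h3⟩; exact ⟨⟨⟨h1, h2⟩, h4.trans h3.symm⟩, h4⟩
  have h2 : S.card = ∑ j, (S.filter fun i => φ i = j).card :=
    Finset.card_eq_sum_card_fiberwise (by intro _ _; simp)
  have h3 : ∑ j, |((S.filter fun i => φ i = j).card : ℝ) - m| ^ 2 ≤ V := by
    refine le_trans (le_of_eq ?_) hV
    have h1' : (((S ×ˢ S).filter fun z => φ z.1 = φ z.2).card : ℝ) = ∑ j, ((S.filter fun i => φ i = j).card : ℝ) ^ 2 := by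
      rw [h1]; push_cast; rfl
    have h2' : (S.card : ℝ) = ∑ j, ((S.filter fun i => φ i = j).card : ℝ) := by
      conv_lhs => rw [h2]
      push_cast; rfl
    rw [h1', h2', Finset.mul_sum, ← Finset.sum_sub_distrib]
    have : m ^ 2 * (Fintype.card J : ℝ) = ∑ j : J, m ^ 2 := by simp [mul_comm]
    rw [this, ← Finset.sum_add_distrib]
    apply Finset.sum_congr rfl
    intro j _
    rw [sq_abs]; ring
  calc (∑ j, |((S.filter fun i => φ i = j).card : ℝ) - m|) ^ 2 ≤ _ := sq_sum_le_card_mul_sum_sq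
    _ ≤ _ := by rw [Finset.card_univ]; gcongr

variable {K : Type} [Field K] [Fintype K]

open Classical in
lemma nu_l1 (x : K × K × K × K) (hx : x.2.2.1 ≠ 0) :
    ∑ P : K × K, |(((DD K).filter fun y => (y.1 + y.2.2.2, tp x y) = P).card : ℝ) - Fintype.card K| ≤
      3 * (Fintype.card K : ℝ) ^ 2 * Real.sqrt (Fintype.card K) := by
  have h1 := nu_pairs x hx
  have h2 := DD_lower (K := K)
  set q := Fintype.card K with hq
  refine (var_l1 (DD K) (fun y => (y.1 + y.2.2.2, tp x y)) (q : ℝ) (5 * (q : ℝ) ^ 3) ?_).trans ?_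
  · have h1' := (Nat.cast_le (α := ℝ)).2 h1
    have h2' := (Nat.cast_le (α := ℝ)).2 h2
    push_cast at h1' h2'
    rw [Fintype.card_prod, ← hq]
    push_cast
    have h3 : (q : ℝ) * q ^ 3 ≤ q * (((DD K).card : ℝ) + q ^ 2) := by gcongr
    nlinarith
  · rw [Fintype.card_prod, ← hq]
    apply Real.sqrt_le_iff.2
    refine ⟨by positivity, ?_⟩
    rw [mul_pow, Real.sq_sqrt (by positivity)]
    push_cast
    have : (0 : ℝ) ≤ (q : ℝ) ^ 5 := by positivity
    nlinarith

open Classical in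
lemma gam_card : ((DD K).filter fun x => x.2.2.1 = 0).card ≤ Fintype.card K ^ 2 := by
  have : ((DD K).filter fun x => x.2.2.1 = 0).card ≤ (Finset.univ : Finset (K × K)).card := by
    apply Finset.card_le_card_of_injOn (fun v => (v.1, v.2.1)) (by intro _ _; simp)
    rintro ⟨a, b, c, d⟩ hx ⟨a', b', c', d'⟩ hx' h
    simp only [DD, Finset.coe_filter, Finset.mem_filter, Set.mem_ofPred_eq, Finset.mem_univ, true_and, Prod.mk.injEq] at hx hx' h
    obtain ⟨rfl, rfl⟩ := h
    obtain ⟨h1, rfl⟩ := hx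
    obtain ⟨h2, rfl⟩ := hx'
    have ha : a ≠ 0 := by rintro rfl; simp at h1
    have : a * (d - d') = 0 := by linear_combination h1 - h2
    rw [sub_eq_zero.1 ((mul_eq_zero.1 this).resolve_left ha)]
  refine this.trans (le_of_eq ?_)
  simp [sq]

open Classical in
lemma nu_triv (x : K × K × K × K) :
    ∑ P : K × K, |(((DD K).filter fun y => (y.1 + y.2.2.2, tp x y) = P).card : ℝ) - Fintype.card K| ≤
      2 * (Fintype.card K : ℝ) ^ 3 := by
  have h1 : ∀ P : K × K, |(((DD K).filter fun y => (y.1 + y.2.2.2, tp x y) = P).card : ℝ) - Fintype.card K| ≤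
    (((DD K).filter fun y => (y.1 + y.2.2.2, tp x y) = P).card : ℝ) + Fintype.card K := by
    intro P
    refine (abs_sub _ _).trans ?_
    rw [Nat.abs_cast, Nat.abs_cast]
  refine (Finset.sum_le_sum fun P _ => h1 P).trans ?_
  rw [Finset.sum_add_distrib]
  have h2 : (∑ P : K × K, (((DD K).filter fun y => (y.1 + y.2.2.2, tp x y) = P).card : ℝ)) = (DD K).card := by
    rw [Finset.card_eq_sum_card_fiberwise (s := DD K) (t := (Finset.univ : Finset (K × K))) (f := fun y => (y.1 + y.2.2.2, tp x y)) (by intro _ _; simp)]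
    push_cast; rfl
  rw [h2]
  have h3 := (Nat.cast_le (α := ℝ)).2 (DD_upper (K := K))
  push_cast at h3
  simp only [Finset.sum_const, Finset.card_univ, Fintype.card_prod, nsmul_eq_mul]
  push_cast
  nlinarith

/-- the trace point of a pair -/
def tpt (z : (K × K × K × K) × (K × K × K × K)) : K × K × K :=
  (z.1.1 + z.1.2.2.2, z.2.1 + z.2.2.2.2, tp z.1 z.2)

open Classical in
lemma mu_l1 :
    ∑ P : K × K × K, |(((DD K ×ˢ DD K).filter fun z => tpt z = P).card : ℝ) - (Fintype.card K : ℝ) ^ 3| ≤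
      7 * (Fintype.card K : ℝ) ^ 5 * Real.sqrt (Fintype.card K) := by
  set q := Fintype.card K with hq
  have hq1 : (1 : ℝ) ≤ q := by exact_mod_cast Fintype.card_pos (α := K)
  have hsq : 1 ≤ Real.sqrt q := Real.one_le_sqrt.2 hq1
  set nu : (K × K × K × K) → K × K → ℝ := fun x P => (((DD K).filter fun y => (y.1 + y.2.2.2, tp x y) = P).card : ℝ) with hnu
  have e1 : ∀ P : K × K × K, (((DD K ×ˢ DD K).filter fun z => tpt z = P).card : ℝ) =
      ∑ x ∈ (DD K).filter (fun x => x.1 + x.2.2.2 = P.1), nu x P.2 := by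
    rintro ⟨s, t, u⟩
    have h0 : ∀ z ∈ (DD K ×ˢ DD K).filter (fun z => tpt z = (s, t, u)), z.1 ∈ (DD K).filter (fun x => x.1 + x.2.2.2 = s) := by
      intro z hz
      simp only [Finset.mem_filter, Finset.mem_product, tpt, Prod.mk.injEq] at hz ⊢
      tauto
    rw [Finset.card_eq_sum_card_fiberwise (f := fun z : (K × K × K × K) × (K × K × K × K) => z.1) (t := (DD K).filter (fun x => x.1 + x.2.2.2 = s)) (fun z hz => h0 z hz)]
    push_cast
    apply Finset.sum_congr rfl
    intro x hx
    rw [Finset.mem_filter] at hx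
    simp only [hnu]
    congr 1
    apply Finset.card_bij (fun z _ => z.2)
    · rintro ⟨x', y⟩ hz
      simp only [Finset.mem_filter, Finset.mem_product, tpt, Prod.mk.injEq] at hz ⊢
      obtain ⟨⟨⟨h1, h2⟩, h3, h4, h5⟩, rfl⟩ := hz
      exact ⟨h2, h4, h5⟩
    · rintro ⟨x', y⟩ hz ⟨x'', y'⟩ hz' h
      simp only [Finset.mem_filter] at hz hz' h
      rw [hz.2, hz'.2, h]
    · intro y hy
      refine ⟨(x, y), ?_, rfl⟩
      simp only [Finset.mem_filter, Finset.mem_product, tpt, Prod.mk.injEq] at hy ⊢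
      exact ⟨⟨⟨hx.1, hy.1⟩, hx.2, hy.2⟩, trivial⟩
  have e2 : ∀ P : K × K × K, |(((DD K ×ˢ DD K).filter fun z => tpt z = P).card : ℝ) - (q : ℝ) ^ 3| ≤
      (∑ x ∈ (DD K).filter (fun x => x.1 + x.2.2.2 = P.1), |nu x P.2 - q|) + q * |(kap P.1 : ℝ) - q ^ 2| := by
    intro P
    rw [e1]
    have : (∑ x ∈ (DD K).filter (fun x => x.1 + x.2.2.2 = P.1), nu x P.2) - (q : ℝ) ^ 3 =
      (∑ x ∈ (DD K).filter (fun x => x.1 + x.2.2.2 = P.1), (nu x P.2 - q)) + q * ((kap P.1 : ℝ) - q ^ 2) := by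
      rw [Finset.sum_sub_distrib, Finset.sum_const, nsmul_eq_mul]
      have : ((DD K).filter (fun x => x.1 + x.2.2.2 = P.1)).card = kap P.1 := rfl
      rw [this]; ring
    rw [this]
    refine (abs_add_le _ _).trans (add_le_add (Finset.abs_sum_le_sum_abs _ _) ?_)
    rw [abs_mul, Nat.abs_cast]
  refine (Finset.sum_le_sum fun P _ => e2 P).trans ?_
  rw [Finset.sum_add_distrib]
  have e3 : ∑ P : K × K × K, ∑ x ∈ (DD K).filter (fun x => x.1 + x.2.2.2 = P.1), |nu x P.2 - q| =
     ∑ x ∈ DD K, ∑ P : K × K, |nu x P - q| := by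
    rw [Fintype.sum_prod_type]
    have : ∀ s : K, (∑ P : K × K, ∑ x ∈ (DD K).filter (fun x => x.1 + x.2.2.2 = s), |nu x P - q|) =
       ∑ x ∈ (DD K).filter (fun x => x.1 + x.2.2.2 = s), ∑ P : K × K, |nu x P - q| := fun s => Finset.sum_comm
    rw [Finset.sum_congr rfl fun s _ => this s]
    exact Finset.sum_fiberwise (DD K) (fun x => x.1 + x.2.2.2) _
  have e4 : ∑ x ∈ DD K, ∑ P : K × K, |nu x P - q| ≤ (q : ℝ) ^ 3 * (3 * (q : ℝ) ^ 2 * Real.sqrt q) + (q : ℝ) ^ 2 * (2 * (q : ℝ) ^ 3) := by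
    rw [← Finset.sum_filter_not_add_sum_filter (DD K) (fun x => x.2.2.1 = 0)]
    apply add_le_add
    · refine (Finset.sum_le_card_nsmul _ _ (3 * (q : ℝ) ^ 2 * Real.sqrt q) ?_).trans ?_
      · intro x hx
        exact nu_l1 x (Finset.mem_filter.1 hx).2
      · rw [nsmul_eq_mul]
        have := (Nat.cast_le (α := ℝ)).2 ((Finset.card_filter_le (DD K) (fun x => ¬ x.2.2.1 = 0)).trans (DD_upper (K := K)))
        push_cast at this
        gcongr
    · refine (Finset.sum_le_card_nsmul _ _ (2 * (q : ℝ) ^ 3) ?_).trans ?_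
      · intro x hx
        exact nu_triv x
      · rw [nsmul_eq_mul]
        have := (Nat.cast_le (α := ℝ)).2 (gam_card (K := K))
        push_cast at this
        gcongr
  have e5 : ∑ P : K × K × K, (q : ℝ) * |(kap P.1 : ℝ) - q ^ 2| ≤ 2 * (q : ℝ) ^ 5 := by
    refine (Finset.sum_le_card_nsmul _ _ (2 * (q : ℝ) ^ 2) ?_).trans ?_
    · intro P _
      have h1 := (Nat.cast_le (α := ℝ)).2 (kap_upper P.1)
      have h2 := (Nat.cast_le (α := ℝ)).2 (kap_lower P.1)
      push_cast at h1 h2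
      have : |(kap P.1 : ℝ) - q ^ 2| ≤ 2 * q := by
        rw [abs_le]; constructor <;> linarith
      nlinarith
    · simp only [Finset.card_univ, Fintype.card_prod, nsmul_eq_mul]
      push_cast
      apply le_of_eq; ring
  rw [e3]
  have : (q : ℝ) ^ 5 ≤ (q : ℝ) ^ 5 * Real.sqrt q := le_mul_of_one_le_right (by positivity) hsq
  nlinarith

open Classical in
/-- number of pairs with given trace of the word -/
noncomputable def TT (L : List (ℤ × ℤ)) (c : K) : ℕ :=
  ((DD K ×ˢ DD K).filter fun z => tr (tpt z).1 (tpt z).2.1 (tpt z).2.2 L = c).card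

open Classical in
lemma TT_l1 (L : List (ℤ × ℤ)) (ε : ℝ) (h : ((prs K L).card : ℝ) ≤ (1 + ε) * (Fintype.card K : ℝ) ^ 5) :
    ∑ c : K, |(TT L c : ℝ) - (Fintype.card K : ℝ) ^ 5| ≤
      7 * (Fintype.card K : ℝ) ^ 5 * Real.sqrt (Fintype.card K) + Real.sqrt ε * (Fintype.card K : ℝ) ^ 6 := by
  set q := Fintype.card K with hq
  set N : K → ℝ := fun c => (((Finset.univ : Finset (K × K × K)).filter fun P => tr P.1 P.2.1 P.2.2 L = c).card : ℝ) with hN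
  have h1 : ∑ c, |N c - (q : ℝ) ^ 2| ≤ Real.sqrt ε * (q : ℝ) ^ 3 := by
    refine (var_l1 (Finset.univ : Finset (K × K × K)) (fun P => tr P.1 P.2.1 P.2.2 L) ((q : ℝ) ^ 2) (ε * (q : ℝ) ^ 5) ?_).trans ?_
    · have : ((Finset.univ ×ˢ Finset.univ : Finset ((K × K × K) × (K × K × K))).filter fun z => tr z.1.1 z.1.2.1 z.1.2.2 L = tr z.2.1 z.2.2.1 z.2.2.2 L) = prs K L := by
        rw [prs, Finset.univ_product_univ]
      rw [this]
      simp only [Finset.card_univ, Fintype.card_prod, ← hq]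
      push_cast
      nlinarith
    · rw [← hq, show (q : ℝ) * (ε * (q : ℝ) ^ 5) = ε * ((q : ℝ) ^ 3) ^ 2 by ring]
      rw [Real.sqrt_mul' _ (by positivity), Real.sqrt_sq (by positivity)]
  set mu : K × K × K → ℝ := fun P => (((DD K ×ˢ DD K).filter fun z => tpt z = P).card : ℝ) with hmu
  have e1 : ∀ c, (TT L c : ℝ) = ∑ P ∈ Finset.univ.filter (fun P : K × K × K => tr P.1 P.2.1 P.2.2 L = c), mu P := by
    intro c
    unfold TT
    rw [Finset.card_eq_sum_card_fiberwise (f := fun z => tpt z) (t := Finset.univ.filter (fun P : K × K × K => tr P.1 P.2.1 P.2.2 L = c))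
      (by intro z hz; simp only [Finset.coe_filter, Set.mem_ofPred_eq] at hz; simp [hz.2])]
    push_cast
    apply Finset.sum_congr rfl
    intro P hP
    rw [Finset.mem_filter] at hP
    simp only [hmu]
    congr 2
    ext z
    simp only [Finset.mem_filter]
    constructor
    · rintro ⟨⟨a, _⟩, b⟩; exact ⟨a, b⟩
    · rintro ⟨a, b⟩; refine ⟨⟨a, ?_⟩, b⟩; rw [b]; exact hP.2
  have e2 : ∀ c, |(TT L c : ℝ) - (q : ℝ) ^ 5| ≤
      (∑ P ∈ Finset.univ.filter (fun P : K × K × K => tr P.1 P.2.1 P.2.2 L = c), |mu P - (q : ℝ) ^ 3|) + (q : ℝ) ^ 3 * |N c - (q : ℝ) ^ 2| := by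
    intro c
    rw [e1]
    have : (∑ P ∈ Finset.univ.filter (fun P : K × K × K => tr P.1 P.2.1 P.2.2 L = c), mu P) - (q : ℝ) ^ 5 =
      (∑ P ∈ Finset.univ.filter (fun P : K × K × K => tr P.1 P.2.1 P.2.2 L = c), (mu P - (q : ℝ) ^ 3)) + (q : ℝ) ^ 3 * (N c - (q : ℝ) ^ 2) := by
      rw [Finset.sum_sub_distrib, Finset.sum_const, nsmul_eq_mul]
      simp only [hN]; ring
    rw [this]
    refine (abs_add_le _ _).trans (add_le_add (Finset.abs_sum_le_sum_abs _ _) ?_)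
    rw [abs_mul, abs_of_nonneg (by positivity : (0 : ℝ) ≤ (q : ℝ) ^ 3)]
  refine (Finset.sum_le_sum fun c _ => e2 c).trans ?_
  have e3 : ∑ c : K, ∑ P ∈ Finset.univ.filter (fun P : K × K × K => tr P.1 P.2.1 P.2.2 L = c), |mu P - (q : ℝ) ^ 3| = ∑ P, |mu P - (q : ℝ) ^ 3| :=
    Finset.sum_fiberwise Finset.univ (fun P : K × K × K => tr P.1 P.2.1 P.2.2 L) (fun P => |mu P - (q : ℝ) ^ 3|)
  rw [Finset.sum_add_distrib, e3, ← Finset.mul_sum]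
  have := mu_l1 (K := K)
  have h3 : (0 : ℝ) ≤ (q : ℝ) ^ 3 := by positivity
  have h4 := mul_le_mul_of_nonneg_left h1 h3
  calc _ ≤ 7 * (q : ℝ) ^ 5 * Real.sqrt q + (q : ℝ) ^ 3 * (Real.sqrt ε * (q : ℝ) ^ 3) := add_le_add this h4
    _ = _ := by ring

end l1
end EqW

open Matrix Polynomial

namespace EqW

section conj
variable {K : Type} [Field K]

/-- conjugation by an invertible matrix -/
def cj (P Q : Matrix (Fin 2) (Fin 2) K) (h : P * Q = 1) : SL2 K →* SL2 K where
  toFun x := ⟨P * x.1 * Q, by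
    have : P.det * Q.det = 1 := by rw [← det_mul, h, det_one]
    rw [det_mul, det_mul, x.2, mul_one, this]⟩
  map_one' := by ext i j; simp [h]
  map_mul' x y := by
    have h' : Q * P = 1 := mul_eq_one_comm.1 h
    apply Subtype.ext
    change P * (x.1 * y.1) * Q = (P * x.1 * Q) * (P * y.1 * Q)
    calc P * (x.1 * y.1) * Q = P * x.1 * (1 : Matrix (Fin 2) (Fin 2) K) * y.1 * Q := by
          rw [mul_one]; simp only [mul_assoc]
      _ = (P * x.1 * Q) * (P * y.1 * Q) := by rw [← h']; simp only [mul_assoc]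

lemma cj_inj (P Q : Matrix (Fin 2) (Fin 2) K) (h : P * Q = 1) : Function.Injective (cj P Q h) := by
  intro x y hxy
  have h' : Q * P = 1 := mul_eq_one_comm.1 h
  apply Subtype.ext
  have h2 : P * x.1 * Q = P * y.1 * Q := congrArg Subtype.val hxy
  have h3 : Q * (P * x.1 * Q) * P = Q * (P * y.1 * Q) * P := by rw [h2]
  have h4 : ∀ z : Matrix (Fin 2) (Fin 2) K, Q * (P * z * Q) * P = z := by
    intro z
    calc Q * (P * z * Q) * P = (Q * P) * z * (Q * P) := by simp only [mul_assoc]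
      _ = z := by rw [h', one_mul, mul_one]
  rwa [h4, h4] at h3

lemma companion (g : SL2 K) (hg : (trace g.1) ^ 2 ≠ 4) :
    ∃ P Q : Matrix (Fin 2) (Fin 2) K, P * Q = 1 ∧ g.1 * P = P * !![0, -1; 1, trace g.1] := by
  obtain ⟨g, hd⟩ := g
  simp only at *
  rw [det_fin_two] at hd
  have key : ∀ v1 v2 : K, v1 * (g 1 0 * v1 + g 1 1 * v2) - v2 * (g 0 0 * v1 + g 0 1 * v2) ≠ 0 →
    ∃ P Q : Matrix (Fin 2) (Fin 2) K, P * Q = 1 ∧ g * P = P * !![0, -1; 1, trace g] := by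
    intro v1 v2 h
    set P : Matrix (Fin 2) (Fin 2) K := !![v1, g 0 0 * v1 + g 0 1 * v2; v2, g 1 0 * v1 + g 1 1 * v2] with hP
    have hdet : IsUnit P.det := by
      rw [isUnit_iff_ne_zero, hP, det_fin_two_of]
      intro h2; apply h; linear_combination h2
    refine ⟨P, P⁻¹, Matrix.mul_nonsing_inv P hdet, ?_⟩
    rw [trace_fin_two]
    ext i j
    fin_cases i <;> fin_cases j <;> simp [hP, Matrix.mul_apply, Fin.sum_univ_two] <;>
      first | ring1 | linear_combination (-v1) * hd | linear_combination (-v2) * hd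
  by_cases h1 : g 1 0 = 0
  · by_cases h2 : g 0 1 = 0
    · apply key 1 1
      intro h3
      apply hg
      rw [trace_fin_two]
      have h4 : g 1 1 = g 0 0 := by rw [h1, h2] at h3; linear_combination h3
      rw [h4, h1, h2] at hd
      rw [h4]
      linear_combination 4 * hd
    · apply key 0 1
      intro h3; apply h2; linear_combination -h3
  · apply key 1 0
    intro h3; apply h1; linear_combination h3

lemma conj_exists (g h : SL2 K) (hg : (trace g.1) ^ 2 ≠ 4) (hgh : trace g.1 = trace h.1) :
    ∃ (P Q : Matrix (Fin 2) (Fin 2) K) (e : P * Q = 1), cj P Q e g = h := by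
  obtain ⟨P, P', h1, h2⟩ := companion g hg
  obtain ⟨R, R', h3, h4⟩ := companion h (by rwa [← hgh])
  have h1' : P' * P = 1 := mul_eq_one_comm.1 h1
  have h3' : R' * R = 1 := mul_eq_one_comm.1 h3
  have e : (R * P') * (P * R') = 1 := by
    calc (R * P') * (P * R') = R * (P' * P) * R' := by simp only [mul_assoc]
      _ = 1 := by rw [h1', mul_one, h3]
  refine ⟨R * P', P * R', e, ?_⟩
  apply Subtype.ext
  change R * P' * g.1 * (P * R') = h.1
  calc R * P' * g.1 * (P * R') = R * P' * (g.1 * P) * R' := by simp only [mul_assoc]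
    _ = R * (P' * P) * !![0, -1; 1, trace g.1] * R' := by rw [h2]; simp only [mul_assoc]
    _ = (R * !![0, -1; 1, trace h.1]) * R' := by rw [h1', mul_one, hgh]
    _ = h.1 * (R * R') := by rw [← h4, mul_assoc]
    _ = h.1 := by rw [h3, mul_one]

lemma wordMap_cj (w : FreeGroup (Fin 2)) (f : SL2 K →* SL2 K) (z : SL2 K × SL2 K) :
    wordMap w K (f z.1, f z.2) = f (wordMap w K z) := by
  have : (FreeGroup.lift ![f z.1, f z.2]) = f.comp (FreeGroup.lift ![z.1, z.2]) := by
    ext i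
    fin_cases i <;> simp
  simp only [wordMap, wordEval, this]
  rfl

lemma fiber_le [Finite K] (w : FreeGroup (Fin 2)) (g h : SL2 K) (hg : (trace g.1) ^ 2 ≠ 4) (hgh : trace g.1 = trace h.1) :
    Nat.card {z // wordMap w K z = g} ≤ Nat.card {z // wordMap w K z = h} := by
  obtain ⟨P, Q, e, he⟩ := conj_exists g h hg hgh
  have : Finite (SL2 K) := Subtype.finite
  apply Nat.card_le_card_of_injective (fun z : {z // wordMap w K z = g} =>
    (⟨(cj P Q e z.1.1, cj P Q e z.1.2), by rw [wordMap_cj, z.2, he]⟩ : {z // wordMap w K z = h}))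
  rintro ⟨⟨x, y⟩, hz⟩ ⟨⟨x', y'⟩, hz'⟩ hh
  simp only [Subtype.mk.injEq, Prod.mk.injEq] at hh ⊢
  exact ⟨cj_inj P Q e hh.1, cj_inj P Q e hh.2⟩

lemma fiber_eq [Finite K] (w : FreeGroup (Fin 2)) (g h : SL2 K) (hg : (trace g.1) ^ 2 ≠ 4) (hgh : trace g.1 = trace h.1) :
    Nat.card {z // wordMap w K z = g} = Nat.card {z // wordMap w K z = h} :=
  le_antisymm (fiber_le w g h hg hgh) (fiber_le w h g (by rwa [← hgh]) hgh.symm)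

end conj

section cards
variable {K : Type} [Field K] [Fintype K]

variable (K) in
/-- coordinates -/
def slE : SL2 K ≃ {v : K × K × K × K // v ∈ DD K} where
  toFun g := ⟨(g.1 0 0, g.1 0 1, g.1 1 0, g.1 1 1), by
    have := g.2
    rw [det_fin_two] at this
    simpa [DD] using this⟩
  invFun v := ⟨!![v.1.1, v.1.2.1; v.1.2.2.1, v.1.2.2.2], by
    have := v.2
    simp only [DD, Finset.mem_filter, Finset.mem_univ, true_and] at this
    rw [det_fin_two_of, this]⟩
  left_inv g := by
    apply Subtype.ext
    ext i j
    fin_cases i <;> fin_cases j <;> rfl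
  right_inv v := rfl

lemma card_SL : Nat.card (SL2 K) = (DD K).card := by
  rw [Nat.card_congr (slE K)]
  simp

lemma card_trace (s : K) : Nat.card {g : SL2 K // trace g.1 = s} = kap s := by
  classical
  have e : {g : SL2 K // trace g.1 = s} ≃ {v : {v : K × K × K × K // v ∈ DD K} // v.1.1 + v.1.2.2.2 = s} :=
    (slE K).subtypeEquiv (by intro g; rw [trace_fin_two]; rfl)
  have e2 : {v : {v : K × K × K × K // v ∈ DD K} // v.1.1 + v.1.2.2.2 = s} ≃ {v // v ∈ (DD K).filter fun v => v.1 + v.2.2.2 = s} :=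
    (Equiv.subtypeSubtypeEquivSubtypeInter (fun v => v ∈ DD K) (fun v => v.1 + v.2.2.2 = s)).trans
      (Equiv.subtypeEquivRight (by intro v; simp))
  rw [Nat.card_congr (e.trans e2)]
  simp only [Nat.card_eq_fintype_card, Fintype.card_coe]
  unfold kap
  congr

lemma card_TT (L : List (ℤ × ℤ)) (c : K) :
    Nat.card {z : SL2 K × SL2 K // tr (trace z.1.1) (trace z.2.1) (trace (z.1.1 * z.2.1)) L = c} = TT L c := by
  classical
  have e : {z : SL2 K × SL2 K // tr (trace z.1.1) (trace z.2.1) (trace (z.1.1 * z.2.1)) L = c} ≃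
     {v : (K × K × K × K) × (K × K × K × K) // v ∈ (DD K ×ˢ DD K).filter fun z => tr (tpt z).1 (tpt z).2.1 (tpt z).2.2 L = c} := by
    refine Equiv.ofBijective (fun z => ⟨((slE K z.1.1).1, (slE K z.1.2).1), ?_⟩) ⟨?_, ?_⟩
    · have h := z.2
      rw [Finset.mem_filter, Finset.mem_product]
      refine ⟨⟨(slE K z.1.1).2, (slE K z.1.2).2⟩, ?_⟩
      rw [trace_fin_two, trace_fin_two, trace_fin_two] at h
      simp only [Matrix.mul_apply, Fin.sum_univ_two] at h
      refine Eq.trans ?_ h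
      simp only [tpt, tp, slE]
      congr 1
      exact add_assoc _ _ _
    · rintro ⟨⟨x, y⟩, hz⟩ ⟨⟨x', y'⟩, hz'⟩ h
      simp only [Subtype.mk.injEq, Prod.mk.injEq] at h ⊢
      exact ⟨(slE K).injective (Subtype.ext h.1), (slE K).injective (Subtype.ext h.2)⟩
    · rintro ⟨⟨u, v⟩, h⟩
      have h' := h
      rw [Finset.mem_filter, Finset.mem_product] at h'
      refine ⟨⟨((slE K).symm ⟨u, h'.1.1⟩, (slE K).symm ⟨v, h'.1.2⟩), ?_⟩, ?_⟩
      · rw [trace_fin_two, trace_fin_two, trace_fin_two]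
        simp only [Matrix.mul_apply, Fin.sum_univ_two]
        refine Eq.trans ?_ h'.2
        simp only [tpt, tp, slE]
        congr 1
        exact (add_assoc _ _ _).symm
      · simp
  rw [Nat.card_congr e]
  simp only [Nat.card_eq_fintype_card, Fintype.card_coe]
  unfold TT
  congr

lemma fiber_mul (w : FreeGroup (Fin 2)) (g : SL2 K) (hg : (trace g.1) ^ 2 ≠ 4) :
    Nat.card {z // wordMap w K z = g} * kap (trace g.1) =
      Nat.card {z // trace (wordMap w K z).1 = trace g.1} := by
  classical
  have : Finite (SL2 K) := Subtype.finite
  let _ : Fintype (SL2 K) := Fintype.ofFinite _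
  have e : {z // trace (wordMap w K z).1 = trace g.1} ≃
      Σ h : {h : SL2 K // trace h.1 = trace g.1}, {z // wordMap w K z = h.1} :=
    { toFun := fun z => ⟨⟨wordMap w K z.1, z.2⟩, ⟨z.1, rfl⟩⟩
      invFun := fun z => ⟨z.2.1, by rw [z.2.2]; exact z.1.2⟩
      left_inv := fun z => rfl
      right_inv := by rintro ⟨⟨h, h1⟩, ⟨z, hz⟩⟩; change _ = h at hz; subst hz; rfl }
  rw [Nat.card_congr e, Nat.card_sigma, Finset.sum_congr rfl (fun h _ => (fiber_eq w g h.1 hg h.2.symm).symm)]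
  rw [Finset.sum_const, Finset.card_univ, smul_eq_mul, ← card_trace, Nat.card_eq_fintype_card (α := {h : SL2 K // trace h.1 = trace g.1}), mul_comm]

end cards
end EqW

open Matrix Polynomial

namespace EqW

section equi
variable {K : Type} [Field K] [Fintype K]

open Classical in
lemma trace_in_card (B : Finset K) :
    Nat.card {g : SL2 K // trace g.1 ∈ B} ≤ B.card * (Fintype.card K ^ 2 + 2 * Fintype.card K) := by
  have : Finite (SL2 K) := Subtype.finite
  have e : {g : SL2 K // trace g.1 ∈ B} ≃ Σ c : B, {g : SL2 K // trace g.1 = c.1} :=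
    { toFun := fun z => ⟨⟨trace z.1.1, z.2⟩, ⟨z.1, rfl⟩⟩
      invFun := fun z => ⟨z.2.1, by rw [z.2.2]; exact z.1.2⟩
      left_inv := fun z => rfl
      right_inv := by rintro ⟨⟨c, h1⟩, ⟨z, hz⟩⟩; change _ = c at hz; subst hz; rfl }
  rw [Nat.card_congr e, Nat.card_sigma]
  refine (Finset.sum_le_card_nsmul _ _ (Fintype.card K ^ 2 + 2 * Fintype.card K) ?_).trans ?_
  · intro c _
    rw [card_trace]; exact kap_upper _
  · simp

lemma num_bd (q ε G M κ T : ℝ) (h0 : 0 < ε) (h1 : ε ≤ 1) (hq : 100 ≤ ε * q) (hq1 : 100 ≤ q)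
    (hGl : q ^ 3 ≤ G + q ^ 2) (hGu : G ≤ q ^ 3) (k1 : κ ≤ q ^ 2 + 2 * q) (k2 : q ^ 2 ≤ κ + q)
    (t1 : -(ε / 2 * q ^ 5) ≤ T - q ^ 5) (t2 : T - q ^ 5 ≤ ε / 2 * q ^ 5) (hM0 : 0 ≤ M) (kpos : 0 < κ)
    (hfm' : M * κ = T) : |M - G| < ε * G := by
  have hq0 : 0 < q := by linarith
  rw [abs_lt]
  constructor
  · by_contra hcon
    have hcon : M ≤ (1 - ε) * G := by linarith
    have h3 : 0 ≤ (1 - ε) * q ^ 3 := mul_nonneg (by linarith) (by positivity)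
    have h4 : (1 - ε) * G ≤ (1 - ε) * q ^ 3 := mul_le_mul_of_nonneg_left hGu (by linarith)
    have t1 : M * κ ≤ ((1 - ε) * q ^ 3) * (q ^ 2 + 2 * q) :=
      mul_le_mul (hcon.trans h4) k1 kpos.le h3
    have t3 : 0 < q ^ 4 * (ε / 2 * q - 2 * (1 - ε)) := by
      apply mul_pos (by positivity); linarith
    have e1 : ((1 - ε) * q ^ 3) * (q ^ 2 + 2 * q) = (1 - ε / 2) * q ^ 5 - q ^ 4 * (ε / 2 * q - 2 * (1 - ε)) := by ring
    linarith
  · by_contra hcon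
    have hcon : (1 + ε) * G ≤ M := by linarith
    have h3 : 0 ≤ q ^ 2 - q := by
      have : 0 ≤ q * (q - 1) := mul_nonneg hq0.le (by linarith)
      linarith
    have h4 : (1 + ε) * (q ^ 3 - q ^ 2) ≤ (1 + ε) * G := mul_le_mul_of_nonneg_left (by linarith) (by linarith)
    have t1 : ((1 + ε) * (q ^ 3 - q ^ 2)) * (q ^ 2 - q) ≤ M * κ :=
      mul_le_mul (h4.trans hcon) (by linarith) h3 hM0
    have t3 : 0 < q ^ 4 * (ε / 2 * q - 2 * (1 + ε)) := by
      apply mul_pos (by positivity); linarith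
    have t4 : 0 < (1 + ε) * q ^ 3 := by positivity
    have e1 : ((1 + ε) * (q ^ 3 - q ^ 2)) * (q ^ 2 - q) =
      (1 + ε / 2) * q ^ 5 + q ^ 4 * (ε / 2 * q - 2 * (1 + ε)) + (1 + ε) * q ^ 3 := by ring
    linarith

open Classical in
lemma equi_core (w : FreeGroup (Fin 2)) (T : K → ℕ)
    (hT : ∀ c, Nat.card {z // trace (wordMap w K z).1 = c} = T c) (ε : ℝ) (h0 : 0 < ε) (h1 : ε ≤ 1)
    (hq : 100 ≤ ε * Fintype.card K)
    (hl : ∑ c : K, |(T c : ℝ) - (Fintype.card K : ℝ) ^ 5| ≤ ε ^ 2 / 16 * (Fintype.card K : ℝ) ^ 6) :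
    IsEquidistributed (wordMap w K) ε := by
  have : Finite (SL2 K) := Subtype.finite
  set q : ℝ := (Fintype.card K : ℝ) with hqd
  have hq1 : 100 ≤ q := by
    have : (0 : ℝ) ≤ q := by positivity
    nlinarith
  have hq0 : 0 < q := by linarith
  set B1 : Finset K := Finset.univ.filter fun c => (1 : K) * c ^ 2 + 0 * c + (-4) = 0 with hB1
  set B2 : Finset K := Finset.univ.filter fun c => ε / 2 * q ^ 5 < |(T c : ℝ) - q ^ 5| with hB2
  have c1 : B1.card ≤ 2 := quad_roots _ _ _ (Or.inr one_ne_zero)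
  have c2 : (B2.card : ℝ) ≤ ε * q / 8 := by
    have h2 : (B2.card : ℝ) * (ε / 2 * q ^ 5) ≤ ε ^ 2 / 16 * q ^ 6 := by
      refine le_trans ?_ hl
      rw [← nsmul_eq_mul]
      refine (Finset.card_nsmul_le_sum B2 (fun c => |(T c : ℝ) - q ^ 5|) _ ?_).trans ?_
      · intro c hc; exact (Finset.mem_filter.1 hc).2.le
      · exact Finset.sum_le_sum_of_subset_of_nonneg (Finset.subset_univ _) (fun _ _ _ => abs_nonneg _)
    have h3 : (B2.card : ℝ) * (ε / 2 * q ^ 5) ≤ (ε * q / 8) * (ε / 2 * q ^ 5) := by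
      refine h2.trans (le_of_eq ?_); ring
    exact le_of_mul_le_mul_right h3 (by positivity)
  have hcu := (Nat.cast_le (α := ℝ)).2 (trace_in_card (B1 ∪ B2))
  have hGl := (Nat.cast_le (α := ℝ)).2 (DD_lower (K := K))
  have hGu := (Nat.cast_le (α := ℝ)).2 (DD_upper (K := K))
  push_cast at hcu hGl hGu
  rw [← hqd] at hcu hGl hGu
  have hcB : ((B1 ∪ B2).card : ℝ) ≤ 2 + ε * q / 8 := by
    have := (Nat.cast_le (α := ℝ)).2 (Finset.card_union_le B1 B2)
    have c1' := (Nat.cast_le (α := ℝ)).2 c1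
    push_cast at this c1'
    linarith
  refine ⟨{g | trace g.1 ∉ B1 ∪ B2}, ?_, ?_⟩
  · have hadd : Nat.card ({g : SL2 K | trace g.1 ∉ B1 ∪ B2} : Set (SL2 K)) + Nat.card {g : SL2 K // trace g.1 ∈ B1 ∪ B2} = Nat.card (SL2 K) := by
      have e := Equiv.sumCompl (fun g : SL2 K => trace g.1 ∈ B1 ∪ B2)
      rw [← Nat.card_congr e, Nat.card_sum, add_comm]
      rfl
    have hadd' := congrArg (Nat.cast (R := ℝ)) hadd
    push_cast at hadd'
    have hkey : (Nat.card {g : SL2 K // trace g.1 ∈ B1 ∪ B2} : ℝ) < ε * Nat.card (SL2 K) := by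
      rw [card_SL]
      have s1 : ((B1 ∪ B2).card : ℝ) ≤ 0.145 * (ε * q) := by linarith
      have s2 : q ^ 2 + 2 * q ≤ 1.02 * q ^ 2 := by nlinarith
      have s3 : ((B1 ∪ B2).card : ℝ) * (q ^ 2 + 2 * q) ≤ (0.145 * (ε * q)) * (1.02 * q ^ 2) := by gcongr
      have s4 : 0.99 * q ^ 3 ≤ q ^ 3 - q ^ 2 := by nlinarith [pow_pos hq0 2]
      have s5 : ε * (0.99 * q ^ 3) ≤ ε * ((DD K).card : ℝ) := by
        apply mul_le_mul_of_nonneg_left _ h0.le; linarith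
      have s6 : 0 < ε * q ^ 3 := by positivity
      nlinarith
    linarith
  · intro g hg
    simp only [Set.mem_ofPred_eq, Finset.mem_union, not_or] at hg
    obtain ⟨g1, g2⟩ := hg
    have hg4 : (trace g.1) ^ 2 ≠ 4 := by
      intro h; apply g1; simp [hB1, h]
    have hfm := fiber_mul w g hg4
    rw [hT] at hfm
    have hfm' := congrArg (Nat.cast (R := ℝ)) hfm
    push_cast at hfm'
    have k1 := (Nat.cast_le (α := ℝ)).2 (kap_upper (trace g.1))
    have k2 := (Nat.cast_le (α := ℝ)).2 (kap_lower (trace g.1))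
    push_cast at k1 k2
    rw [← hqd] at k1 k2
    have hTc : |(T (trace g.1) : ℝ) - q ^ 5| ≤ ε / 2 * q ^ 5 := by
      by_contra h; apply g2; rw [hB2, Finset.mem_filter]; exact ⟨Finset.mem_univ _, not_le.1 h⟩
    rw [abs_le] at hTc
    have hX : (Nat.card (SL2 K × SL2 K) : ℝ) / (Nat.card (SL2 K)) = (DD K).card := by
      have hG0 : ((DD K).card : ℝ) ≠ 0 := by
        have : 0 < ((DD K).card : ℝ) := by nlinarith [pow_pos hq0 2]
        exact this.ne'
      rw [Nat.card_prod, card_SL]; push_cast; field_simp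
    rw [mul_div_assoc, hX]
    set G : ℝ := ((DD K).card : ℝ) with hG
    set M : ℝ := (Nat.card {z // wordMap w K z = g} : ℝ) with hM
    set κ : ℝ := (kap (trace g.1) : ℝ) with hκ
    have hM0 : 0 ≤ M := by positivity
    have kpos : 0 < κ := by nlinarith
    have hGp : 0 ≤ G := by positivity
    exact num_bd q ε G M κ _ h0 h1 hq hq1 hGl hGu k1 k2 hTc.1 hTc.2 hM0 kpos hfm'

end equi

lemma equi_mono {X Y : Type*} (f : X → Y) {a b : ℝ} (hab : a ≤ b) (h : IsEquidistributed f a) : IsEquidistributed f b := by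
  obtain ⟨Y', h1, h2⟩ := h
  refine ⟨Y', lt_of_le_of_lt ?_ h1, fun y hy => lt_of_lt_of_le (h2 y hy) ?_⟩
  · gcongr
  · gcongr

lemma p_equi_of (w : FreeGroup (Fin 2)) (p : ℕ) [hp : Fact p.Prime]
    (h : ∀ δ : ℝ, 0 < δ → δ ≤ 1 → ∀ᶠ n : ℕ in Filter.atTop, IsEquidistributed (wordMap w (GaloisField p n)) δ) :
    IsPEquidistributed w p hp.out := by
  set S : ℕ → Set ℝ := fun n => {δ | 0 < δ ∧ IsEquidistributed (wordMap w (GaloisField p n)) δ} with hS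
  have hb : ∀ n, BddBelow (S n) := fun n => ⟨0, fun x hx => hx.1.le⟩
  set e : ℕ → ℝ := fun n => sInf (S n) + 1 / ((n : ℝ) + 1) with he
  have hlog : ∀ n, Nat.log p (p ^ n) = n := fun n => Nat.log_pow hp.out.one_lt n
  refine ⟨fun m => e (Nat.log p m), ?_, ?_⟩
  · simp only [hlog]
    have : Filter.Tendsto (fun n => sInf (S n)) Filter.atTop (nhds 0) := by
      rw [Metric.tendsto_atTop']
      intro η hη
      have := h (min (η / 2) 1) (by positivity) (min_le_right _ _)
      rw [Filter.eventually_atTop] at this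
      obtain ⟨N, hN⟩ := this
      refine ⟨N, fun n hn => ?_⟩
      rw [Real.dist_eq, sub_zero, abs_of_nonneg (Real.sInf_nonneg fun x hx => hx.1.le)]
      have h3 : sInf (S n) ≤ min (η / 2) 1 := csInf_le (hb n) ⟨by positivity, hN n hn.le⟩
      have := min_le_left (η / 2) 1
      linarith
    have h2 := this.add tendsto_one_div_add_atTop_nhds_zero_nat
    rw [add_zero] at h2
    exact h2
  · filter_upwards [h 1 one_pos le_rfl] with n hn
    simp only [hlog]
    have hlt : sInf (S n) < e n := by
      simp only [he]; have : (0 : ℝ) < 1 / ((n : ℝ) + 1) := by positivity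
      linarith
    obtain ⟨δ, hδ, hδ2⟩ := exists_lt_of_csInf_lt (s := S n) (b := e n) ⟨(1 : ℝ), one_pos, hn⟩ hlt
    exact equi_mono _ hδ2.le hδ.2

theorem p_equi (w : FreeGroup (Fin 2)) (p : ℕ) [hp : Fact p.Prime] (L : List (ℤ × ℤ)) (hL : L ≠ [])
    (hg : ∀ (K : Type) [Field K] [CharP K p], Good K L)
    (hT : ∀ (K : Type) [Field K] [Fintype K] (c : K), Nat.card {z // trace (wordMap w K z).1 = c} = TT L c) :
    IsPEquidistributed w p hp.out := by
  apply p_equi_of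
  intro δ h0 h1
  set η : ℝ := δ ^ 2 / 16 with hη
  have hη0 : 0 < η := by positivity
  obtain ⟨n0, hn0⟩ := second_moment p L hL ((η / 2) ^ 2) (by positivity)
  obtain ⟨n1, hn1⟩ := exists_nat_ge (100 / δ)
  obtain ⟨n2, hn2⟩ := exists_nat_ge ((14 / η) ^ 2)
  filter_upwards [Filter.eventually_ge_atTop (n0 + n1 + n2 + 1)] with n hn
  let _ : Fintype (GaloisField p n) := Fintype.ofFinite _
  have hc : Fintype.card (GaloisField p n) = p ^ n := by
    rw [← Nat.card_eq_fintype_card]; exact GaloisField.card p n (by omega)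
  have hlt : n < p ^ n := Nat.lt_pow_self hp.out.one_lt
  have hm := hn0 n (by omega) (GaloisField p n) hc (hg _)
  have hc' : ((p : ℝ) ^ n) = (Fintype.card (GaloisField p n) : ℝ) := by rw [hc]; push_cast; rfl
  rw [hc'] at hm
  set q : ℝ := (Fintype.card (GaloisField p n) : ℝ) with hq
  have hqn : (n : ℝ) ≤ q := by rw [hq, hc]; exact_mod_cast hlt.le
  have hn' : (n0 : ℝ) + n1 + n2 + 1 ≤ n := by exact_mod_cast hn
  have p0 : (0 : ℝ) ≤ n0 := by positivity
  have p1 : (0 : ℝ) ≤ n1 := by positivity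
  have p2 : (0 : ℝ) ≤ n2 := by positivity
  have hq0 : 0 < q := by linarith
  apply equi_core w (TT L) (hT _) δ h0 h1
  · rw [div_le_iff₀ h0] at hn1
    rw [← hq]; nlinarith
  · refine (TT_l1 L _ hm).trans ?_
    rw [← hq, ← hη, Real.sqrt_sq (by positivity)]
    have hs : 14 / η ≤ Real.sqrt q := Real.le_sqrt_of_sq_le (by linarith)
    rw [div_le_iff₀ hη0] at hs
    have hss : Real.sqrt q * Real.sqrt q = q := Real.mul_self_sqrt hq0.le
    have hs0 : 0 ≤ Real.sqrt q := Real.sqrt_nonneg _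
    have : 7 * q ^ 5 * Real.sqrt q ≤ η / 2 * q ^ 6 := by
      have h3 : 7 * Real.sqrt q ≤ η / 2 * q := by nlinarith
      have h4 : 0 ≤ q ^ 5 := by positivity
      nlinarith [mul_le_mul_of_nonneg_left h3 h4]
    linarith

end EqW

open Matrix Polynomial

namespace EqW

section cheb
variable {F : Type} [Field F]

lemma S_nat (k : ℕ) : (Chebyshev.S F (k : ℤ)).Monic ∧ (Chebyshev.S F (k : ℤ)).natDegree = k := by
  induction k using Nat.strong_induction_on with
  | _ k ih =>
    match k with
    | 0 => simp
    | 1 => simp [monic_X]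
    | k + 2 =>
      obtain ⟨h1, h2⟩ := ih k (by omega)
      obtain ⟨h3, h4⟩ := ih (k + 1) (by omega)
      have e : Chebyshev.S F ((k + 2 : ℕ) : ℤ) = X * Chebyshev.S F ((k + 1 : ℕ) : ℤ) - Chebyshev.S F (k : ℤ) := by
        push_cast; exact Chebyshev.S_add_two F k
      have m1 : (X * Chebyshev.S F ((k + 1 : ℕ) : ℤ)).Monic := monic_X.mul h3
      have d1 : (X * Chebyshev.S F ((k + 1 : ℕ) : ℤ)).natDegree = k + 2 := by
        rw [monic_X.natDegree_mul h3, h4, natDegree_X]; omega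
      have hlt : (Chebyshev.S F (k : ℤ)).degree < (X * Chebyshev.S F ((k + 1 : ℕ) : ℤ)).degree := by
        apply degree_lt_degree; omega
      rw [e]
      refine ⟨m1.sub_of_left hlt, ?_⟩
      rw [natDegree_sub_eq_left_of_natDegree_lt (by omega), d1]

lemma S_ne_zero (b : ℤ) (hb : b ≠ 0) : Chebyshev.S F (b - 1) ≠ 0 := by
  have key : ∀ k : ℕ, k ≠ 0 → Chebyshev.S F ((k : ℤ) - 1) ≠ 0 := by
    intro k hk
    have := (S_nat (F := F) (k - 1)).1.ne_zero
    rwa [Nat.cast_sub (by omega), Nat.cast_one] at this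
  rcases Int.natAbs_eq b with h | h
  · rw [h]; exact key _ (by omega)
  · rw [h, Chebyshev.S_neg_sub_one]
    exact neg_ne_zero.2 (key _ (by omega))

lemma S_ev (z : F) (hz : z ≠ 0) (k : ℕ) :
    (Chebyshev.S F ((k : ℤ) - 1)).eval (z + z⁻¹) * (z - z⁻¹) = z ^ k - (z⁻¹) ^ k := by
  induction k using Nat.strong_induction_on with
  | _ k ih =>
    match k with
    | 0 => simp
    | 1 => simp
    | k + 2 =>
      have h1 := ih k (by omega)
      have h2 := ih (k + 1) (by omega)
      have e : Chebyshev.S F (((k + 2 : ℕ) : ℤ) - 1) = X * Chebyshev.S F (((k + 1 : ℕ) : ℤ) - 1) - Chebyshev.S F ((k : ℤ) - 1) := by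
        have := Chebyshev.S_add_two F ((k : ℤ) - 1)
        rw [show ((k + 2 : ℕ) : ℤ) - 1 = (k : ℤ) - 1 + 2 by push_cast; ring, this]
        congr 3
        push_cast; ring
      rw [e, eval_sub, eval_mul, eval_X]
      have hzz : z * z⁻¹ = 1 := mul_inv_cancel₀ hz
      generalize z⁻¹ = y at *
      linear_combination (z + y) * h2 - h1 + (z ^ k - y ^ k) * hzz

lemma S_root_iff {n : ℕ} (hn : 2 ≤ n) {ζ : F} (hζ : IsPrimitiveRoot ζ (2 * n)) (j k : ℕ) (hj : 0 < j) (hj' : j < n) :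
    (Chebyshev.S F ((k : ℤ) - 1)).eval (ζ ^ j + (ζ ^ j)⁻¹) = 0 ↔ n ∣ j * k := by
  have hz0 : ζ ≠ 0 := hζ.ne_zero (by omega)
  have hzj : ζ ^ j ≠ 0 := pow_ne_zero _ hz0
  have h := S_ev (ζ ^ j) hzj k
  have key : ∀ i : ℕ, (ζ ^ j) ^ i - ((ζ ^ j)⁻¹) ^ i = 0 ↔ n ∣ j * i := by
    intro i
    rw [inv_pow, sub_eq_zero, ← mul_eq_one_iff_eq_inv₀ (pow_ne_zero _ hzj), ← pow_mul, ← pow_add, hζ.pow_eq_one_iff_dvd, ← two_mul]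
    exact Nat.mul_dvd_mul_iff_left (by norm_num)
  have h1 : ζ ^ j - (ζ ^ j)⁻¹ ≠ 0 := by
    have := key 1
    rw [pow_one, pow_one, mul_one] at this
    rw [Ne, this]
    exact Nat.not_dvd_of_pos_of_lt hj hj'
  rw [← key k, ← h, mul_eq_zero]
  tauto

lemma S_simple {n : ℕ} (hn : 2 ≤ n) {ζ : F} (hζ : IsPrimitiveRoot ζ (2 * n)) :
    (Chebyshev.S F ((n : ℤ) - 1)).rootMultiplicity (ζ + ζ⁻¹) = 1 := by
  classical
  have hS := S_nat (F := F) (n - 1)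
  rw [Nat.cast_sub (by omega), Nat.cast_one] at hS
  set P := Chebyshev.S F ((n : ℤ) - 1) with hP
  have hz0 : ζ ≠ 0 := hζ.ne_zero (by omega)
  set R : Finset F := (Finset.Ico 1 n).image (fun j => ζ ^ j + (ζ ^ j)⁻¹) with hR
  have hcard : R.card = n - 1 := by
    rw [hR, Finset.card_image_of_injOn, Nat.card_Ico]
    intro i hi j hj hij
    have hi := Finset.mem_Ico.1 (Finset.mem_coe.1 hi)
    have hj := Finset.mem_Ico.1 (Finset.mem_coe.1 hj)
    have hij : ζ ^ i + (ζ ^ i)⁻¹ = ζ ^ j + (ζ ^ j)⁻¹ := hij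
    have u : ζ ^ i ≠ 0 := pow_ne_zero _ hz0
    have v : ζ ^ j ≠ 0 := pow_ne_zero _ hz0
    have h0 : (ζ ^ i - ζ ^ j) * (ζ ^ i * ζ ^ j - 1) = 0 := by
      have hu : ζ ^ i * (ζ ^ i)⁻¹ = 1 := mul_inv_cancel₀ u
      have hv : ζ ^ j * (ζ ^ j)⁻¹ = 1 := mul_inv_cancel₀ v
      generalize (ζ ^ i)⁻¹ = a at *
      generalize (ζ ^ j)⁻¹ = b at *
      linear_combination ζ ^ i * ζ ^ j * hij - ζ ^ j * hu + ζ ^ i * hv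
    rcases mul_eq_zero.1 h0 with h | h
    · exact hζ.pow_inj (by omega) (by omega) (sub_eq_zero.1 h)
    · exfalso
      rw [sub_eq_zero, ← pow_add, hζ.pow_eq_one_iff_dvd] at h
      exact Nat.not_dvd_of_pos_of_lt (by omega) (by omega) h
  have hsub : R.val ≤ P.roots := by
    rw [Finset.val_le_iff_val_subset]
    intro x hx
    rw [Finset.mem_val, hR, Finset.mem_image] at hx
    obtain ⟨j, hj, rfl⟩ := hx
    have hj := Finset.mem_Ico.1 hj
    rw [mem_roots hS.1.ne_zero, IsRoot, hP, S_root_iff hn hζ j n (by omega) (by omega)]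
    exact Dvd.intro_left j rfl
  have heq : R.val = P.roots := by
    apply Multiset.eq_of_le_of_card_le hsub
    rw [Finset.card_val, hcard]
    exact (card_roots' P).trans hS.2.le
  rw [← count_roots, ← heq]
  apply Multiset.count_eq_one_of_mem R.nodup
  rw [Finset.mem_val, hR, Finset.mem_image]
  exact ⟨1, Finset.mem_Ico.2 ⟨le_rfl, by omega⟩, by rw [pow_one]⟩

lemma S_mult {n : ℕ} (hn : 2 ≤ n) {ζ : F} (hζ : IsPrimitiveRoot ζ (2 * n)) (b : ℤ) (hb : b ≠ 0) (hbn : b.natAbs ≤ n) :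
    (Chebyshev.S F (b - 1)).rootMultiplicity (ζ + ζ⁻¹) = if b.natAbs = n then 1 else 0 := by
  have key : ∀ k : ℕ, k ≠ 0 → k ≤ n → (Chebyshev.S F ((k : ℤ) - 1)).rootMultiplicity (ζ + ζ⁻¹) = if k = n then 1 else 0 := by
    intro k hk hkn
    by_cases h : k = n
    · rw [if_pos h, h]; exact S_simple hn hζ
    · rw [if_neg h]
      apply rootMultiplicity_eq_zero
      have := S_root_iff hn hζ 1 k (by norm_num) (by omega)
      rw [pow_one, one_mul] at this
      rw [IsRoot, this]
      exact Nat.not_dvd_of_pos_of_lt (by omega) (by omega)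
  have hk := key b.natAbs (by omega) hbn
  rw [← hk]
  rcases Int.natAbs_eq b with h | h
  · conv_lhs => rw [h]
  · have this : (-Chebyshev.S F ((b.natAbs : ℤ) - 1)).rootMultiplicity (ζ + ζ⁻¹) = (Chebyshev.S F ((b.natAbs : ℤ) - 1)).rootMultiplicity (ζ + ζ⁻¹) := by
      classical
      rw [← count_roots, ← count_roots, roots_neg]
    have h2 : Chebyshev.S F (b - 1) = -Chebyshev.S F ((b.natAbs : ℤ) - 1) := by
      conv_lhs => rw [h, show -(b.natAbs : ℤ) - 1 = -(b.natAbs : ℤ) - 1 from rfl]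
      rw [Chebyshev.S_neg_sub_one]
    rw [h2, this]

lemma sv_X (b : ℤ) : sv b (X : F[X]) = Chebyshev.S F b := by
  rw [sv, ← Chebyshev.map_S (C : F →+* F[X]), eval_map, eval₂_C_X]

lemma topB_X_ne (L : List (ℤ × ℤ)) (h : ∀ m ∈ L, m.2 ≠ 0) : topB L (X : F[X]) ≠ 0 := by
  rw [topB]
  apply List.prod_ne_zero
  intro h0
  rw [List.mem_map] at h0
  obtain ⟨m, hm, h1⟩ := h0
  rw [sv_X] at h1
  exact S_ne_zero _ (h m hm) h1

lemma topA_X_ne (L : List (ℤ × ℤ)) (h : ∀ m ∈ L, m.1 ≠ 0) : topA L (X : F[X]) ≠ 0 := by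
  rw [topA]
  apply List.prod_ne_zero
  intro h0
  rw [List.mem_map] at h0
  obtain ⟨m, hm, h1⟩ := h0
  rw [sv_X] at h1
  exact S_ne_zero _ (h m hm) h1

lemma topA_mult {n : ℕ} (hn : 2 ≤ n) {ζ : F} (hζ : IsPrimitiveRoot ζ (2 * n)) (L : List (ℤ × ℤ))
    (h : ∀ m ∈ L, m.1 ≠ 0 ∧ m.1.natAbs ≤ n) :
    (topA L (X : F[X])).rootMultiplicity (ζ + ζ⁻¹) = L.countP (fun m => decide (m.1.natAbs = n)) := by
  induction L with
  | nil => simp [topA, rootMultiplicity_eq_zero]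
  | cons m L ih =>
    have h1 := ih (fun m' hm' => h m' (List.mem_cons_of_mem _ hm'))
    have h2 := h m List.mem_cons_self
    have e : topA (m :: L) (X : F[X]) = Chebyshev.S F (m.1 - 1) * topA L (X : F[X]) := by
      simp [topA, sv_X]
    have hne : Chebyshev.S F (m.1 - 1) * topA L (X : F[X]) ≠ 0 :=
      mul_ne_zero (S_ne_zero _ h2.1) (topA_X_ne L fun m' hm' => (h m' (List.mem_cons_of_mem _ hm')).1)
    rw [e, rootMultiplicity_mul hne, h1, S_mult hn hζ _ h2.1 h2.2, List.countP_cons, add_comm]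
    simp

end cheb

theorem good_of (L : List (ℤ × ℤ)) (hnz : ∀ m ∈ L, m.1 ≠ 0 ∧ m.2 ≠ 0) (hpr : L.length.Prime)
    (hne : ∃ m ∈ L, ∃ m' ∈ L, m.1.natAbs ≠ m'.1.natAbs) :
    ∃ B : ℕ, 0 < B ∧ ∀ p : ℕ, p.Prime → ¬ p ∣ B → ∀ (K : Type) [Field K] [CharP K p], Good K L := by
  classical
  obtain ⟨m1, h1, m2, h2, h12⟩ := hne
  have hex : ∃ M ∈ L, ∀ m ∈ L, m.1.natAbs ≤ M.1.natAbs := by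
    have hfin : (L.toFinset).Nonempty := ⟨m1, List.mem_toFinset.2 h1⟩
    obtain ⟨M, hM, hmax⟩ := Finset.exists_max_image L.toFinset (fun m => m.1.natAbs) hfin
    exact ⟨M, List.mem_toFinset.1 hM, fun m hm => hmax m (List.mem_toFinset.2 hm)⟩
  obtain ⟨M, hM, hmax⟩ := hex
  set n := M.1.natAbs with hn
  have g1 := hmax m1 h1
  have g2 := hmax m2 h2
  have hn2 : 2 ≤ n := by
    have := (hnz m1 h1).1
    have := (hnz m2 h2).1
    omega
  refine ⟨2 * n, by omega, ?_⟩
  intro p hp hpB K _ _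
  have : CharP (AlgebraicClosure K) p := charP_of_injective_algebraMap (algebraMap K (AlgebraicClosure K)).injective p
  have : NeZero ((2 * n : ℕ) : AlgebraicClosure K) := ⟨by rw [Ne, CharP.cast_eq_zero_iff _ p]; exact hpB⟩
  obtain ⟨ζ, hζ⟩ := HasEnoughRootsOfUnity.exists_primitiveRoot (AlgebraicClosure K) (2 * n)
  refine ⟨topB_X_ne L fun m hm => (hnz m hm).2, ζ + ζ⁻¹, L.countP (fun m => decide (m.1.natAbs = n)), ?_, ?_, ?_⟩
  · rw [List.countP_pos_iff]; exact ⟨M, hM, by simp [hn]⟩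
  · have hlt : L.countP (fun m => decide (m.1.natAbs = n)) < L.length := by
      apply lt_of_le_of_ne List.countP_le_length
      rw [Ne, List.countP_eq_length]
      intro hall
      have a1 := of_decide_eq_true (hall m1 h1)
      have a2 := of_decide_eq_true (hall m2 h2)
      exact h12 (a1.trans a2.symm)
    have hpos : 0 < L.countP (fun m => decide (m.1.natAbs = n)) := by
      rw [List.countP_pos_iff]; exact ⟨M, hM, by simp [hn]⟩
    exact (Nat.coprime_of_lt_prime hpos.ne' hlt hpr).symm
  · have e : (topA L (X : K[X])).map (algebraMap K (AlgebraicClosure K)) = topA L (X : (AlgebraicClosure K)[X]) := by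
      have := map_topA (mapRingHom (algebraMap K (AlgebraicClosure K))) L (X : K[X])
      simpa using this
    rw [e]
    exact topA_mult hn2 hζ L fun m hm => ⟨(hnz m hm).1, hmax m hm⟩

end EqW

open Matrix Polynomial

namespace EqW

lemma fin_of_list (w : FreeGroup (Fin 2)) (L : List (ℤ × ℤ)) (hnz : ∀ m ∈ L, m.1 ≠ 0 ∧ m.2 ≠ 0) (hpr : L.length.Prime)
    (hne : ∃ m ∈ L, ∃ m' ∈ L, m.1.natAbs ≠ m'.1.natAbs)
    (hT : ∀ (K : Type) [Field K] [Fintype K] (c : K), Nat.card {z // trace (wordMap w K z).1 = c} = TT L c) :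
    {p : ℕ | ∃ hp : p.Prime, ¬ IsPEquidistributed w p hp}.Finite := by
  obtain ⟨B, hB, h⟩ := good_of L hnz hpr hne
  refine (Set.finite_Iic B).subset ?_
  rintro p ⟨hp, hnp⟩
  by_contra hlt
  apply hnp
  have : Fact p.Prime := ⟨hp⟩
  apply p_equi w p L
  · rintro rfl; exact Nat.not_prime_zero hpr
  · apply h p hp
    intro hd
    exact hlt (Nat.le_of_dvd hB hd)
  · intro K _ _ c; exact hT K c

lemma fin_a (L : List (ℤ × ℤ)) (hnz : ∀ m ∈ L, m.1 ≠ 0 ∧ m.2 ≠ 0) (hpr : L.length.Prime)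
    (hne : ∃ m ∈ L, ∃ m' ∈ L, m.1.natAbs ≠ m'.1.natAbs) :
    {p : ℕ | ∃ hp : p.Prime, ¬ IsPEquidistributed (wordL L) p hp}.Finite := by
  apply fin_of_list _ L hnz hpr hne
  intro K _ _ c
  rw [← card_TT]
  apply Nat.card_congr
  refine Equiv.subtypeEquivRight fun z => ?_
  rw [wordMap, wordEval, word_trace]

def Lsw (L : List (ℤ × ℤ)) : List (ℤ × ℤ) := L.reverse.map fun m => (-m.2, -m.1)

lemma wordL_sw {G : Type*} [Group G] (x y : G) (L : List (ℤ × ℤ)) :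
    FreeGroup.lift ![y, x] (wordL (Lsw L)) = (FreeGroup.lift ![x, y] (wordL L))⁻¹ := by
  induction L with
  | nil => simp [wordL, Lsw]
  | cons m L ih =>
    simp only [wordL, Lsw, List.reverse_cons, List.map_append, List.prod_append, List.map_cons, List.prod_cons, map_mul, _root_.mul_inv_rev, List.map_nil, List.prod_nil, map_one, mul_one, map_zpow, FreeGroup.lift_apply_of] at ih ⊢
    rw [ih]
    simp

lemma tr_inv {K : Type} [Field K] (g : SL2 K) : trace (g⁻¹).1 = trace g.1 := by
  rw [Matrix.SpecialLinearGroup.coe_inv, Matrix.adjugate_fin_two, trace_fin_two, trace_fin_two]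
  simp [add_comm]

lemma fin_b (L : List (ℤ × ℤ)) (hnz : ∀ m ∈ L, m.1 ≠ 0 ∧ m.2 ≠ 0) (hpr : L.length.Prime)
    (hne : ∃ m ∈ L, ∃ m' ∈ L, m.2.natAbs ≠ m'.2.natAbs) :
    {p : ℕ | ∃ hp : p.Prime, ¬ IsPEquidistributed (wordL L) p hp}.Finite := by
  apply fin_of_list _ (Lsw L)
  · intro m hm
    simp only [Lsw, List.mem_map, List.mem_reverse] at hm
    obtain ⟨m', h, rfl⟩ := hm
    exact ⟨neg_ne_zero.2 (hnz m' h).2, neg_ne_zero.2 (hnz m' h).1⟩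
  · simpa [Lsw] using hpr
  · obtain ⟨m, h1, m', h2, h⟩ := hne
    refine ⟨(-m.2, -m.1), ?_, (-m'.2, -m'.1), ?_, ?_⟩
    · simp only [Lsw, List.mem_map, List.mem_reverse]; exact ⟨m, h1, rfl⟩
    · simp only [Lsw, List.mem_map, List.mem_reverse]; exact ⟨m', h2, rfl⟩
    · simpa using h
  · intro K _ _ c
    rw [← card_TT]
    apply Nat.card_congr
    refine Equiv.subtypeEquiv (Equiv.prodComm _ _) fun z => ?_
    rw [wordMap, wordEval, ← tr_inv, ← wordL_sw, word_trace]
    rfl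

lemma wordOf_eq {r : ℕ} (a b : Fin r → ℤ) : wordOf a b = wordL (List.ofFn fun i => (a i, b i)) := by
  rw [wordOf, wordL, List.map_ofFn]; rfl

lemma bad_form {N : ℕ} {w : FreeGroup (Fin 2)} (h : w ∈ RWords N \ SWords N) :
    ∃ r : ℕ, r.Prime ∧ ∃ a b : Fin r → ℤ, ∃ α β : ℕ, 0 < α ∧ 0 < β ∧ (∀ i, (a i).natAbs = α ∧ (b i).natAbs = β) ∧
      w = wordOf a b ∧ r * (α + β) ≤ N := by
  obtain ⟨⟨r, hr, a, b, hnz, rfl, hN⟩, hS⟩ := h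
  have hnf : ¬ {p : ℕ | ∃ hp : p.Prime, ¬ IsPEquidistributed (wordOf a b) p hp}.Finite := fun hf =>
    hS ⟨⟨r, hr, a, b, hnz, rfl, hN⟩, hf⟩
  rw [wordOf_eq] at hnf
  set L := List.ofFn fun i => (a i, b i) with hL
  have hlen : L.length.Prime := by rw [hL, List.length_ofFn]; exact hr
  have hLz : ∀ m ∈ L, m.1 ≠ 0 ∧ m.2 ≠ 0 := by
    intro m hm
    rw [hL, List.mem_ofFn'] at hm
    obtain ⟨i, rfl⟩ := hm
    exact hnz i
  have hmem : ∀ i, (a i, b i) ∈ L := by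
    intro i
    rw [hL, List.mem_ofFn']; exact ⟨i, rfl⟩
  let i0 : Fin r := ⟨0, hr.pos⟩
  have hA : ∀ i, (a i).natAbs = (a i0).natAbs := by
    intro i
    by_contra hne
    exact hnf (fin_a L hLz hlen ⟨_, hmem i, _, hmem i0, hne⟩)
  have hB : ∀ i, (b i).natAbs = (b i0).natAbs := by
    intro i
    by_contra hne
    exact hnf (fin_b L hLz hlen ⟨_, hmem i, _, hmem i0, hne⟩)
  refine ⟨r, hr, a, b, _, _, Int.natAbs_pos.2 (hnz i0).1, Int.natAbs_pos.2 (hnz i0).2, fun i => ⟨hA i, hB i⟩, rfl, ?_⟩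
  refine le_trans (le_of_eq ?_) hN
  rw [Finset.sum_congr rfl fun i _ => by rw [hA i, hB i]]
  simp

end EqW

open Matrix Polynomial

namespace EqW

/-- the letters of the alternating word -/
def letters (L : List (ℤ × ℤ)) : List ((_ : Fin 2) × Multiplicative ℤ) :=
  L.flatMap fun m => [⟨0, Multiplicative.ofAdd m.1⟩, ⟨1, Multiplicative.ofAdd m.2⟩]

lemma letters_cons (m : ℤ × ℤ) (L : List (ℤ × ℤ)) :
    letters (m :: L) = ⟨0, Multiplicative.ofAdd m.1⟩ :: ⟨1, Multiplicative.ofAdd m.2⟩ :: letters L := rfl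

lemma letters_inj : Function.Injective letters := by
  intro L
  induction L with
  | nil =>
    intro L' h
    cases L' with
    | nil => rfl
    | cons m L' => rw [letters_cons] at h; exact absurd h (by simp [letters])
  | cons m L ih =>
    intro L' h
    cases L' with
    | nil => rw [letters_cons] at h; exact absurd h (by simp [letters])
    | cons m' L' =>
      rw [letters_cons, letters_cons] at h
      simp only [List.cons.injEq, Sigma.mk.injEq, heq_eq_eq, true_and, EmbeddingLike.apply_eq_iff_eq] at h
      obtain ⟨h1, h2, h3⟩ := h
      rw [ih h3, Prod.ext h1 h2]

lemma letters_chain (L : List (ℤ × ℤ)) : List.IsChain (fun l l' => l.1 ≠ l'.1) (letters L) := by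
  induction L with
  | nil => exact List.IsChain.nil
  | cons m L ih =>
    rw [letters_cons]
    refine List.IsChain.cons_cons (by simp) ?_
    cases L with
    | nil => exact List.IsChain.singleton _
    | cons m' L => rw [letters_cons] at ih ⊢; exact List.IsChain.cons_cons (by simp) ih

lemma letters_ne (L : List (ℤ × ℤ)) (h : ∀ m ∈ L, m.1 ≠ 0 ∧ m.2 ≠ 0) : ∀ l ∈ letters L, l.2 ≠ 1 := by
  intro l hl
  rw [letters, List.mem_flatMap] at hl
  obtain ⟨m, hm, hl⟩ := hl
  simp only [List.mem_cons, List.not_mem_nil, or_false] at hl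
  rcases hl with rfl | rfl
  · exact fun h0 => (h m hm).1 (ofAdd_eq_one.1 h0)
  · exact fun h0 => (h m hm).2 (ofAdd_eq_one.1 h0)

/-- hom to the free product -/
def toCP : FreeGroup (Fin 2) →* Monoid.CoprodI (fun _ : Fin 2 => Multiplicative ℤ) :=
  FreeGroup.lift fun i => Monoid.CoprodI.of (M := fun _ : Fin 2 => Multiplicative ℤ) (i := i) (Multiplicative.ofAdd 1)

lemma toCP_pow (i : Fin 2) (k : ℤ) : toCP (FreeGroup.of i ^ k) =
    Monoid.CoprodI.of (M := fun _ : Fin 2 => Multiplicative ℤ) (i := i) (Multiplicative.ofAdd k) := by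
  rw [map_zpow, toCP, FreeGroup.lift_apply_of, ← map_zpow, ← ofAdd_zsmul]
  simp

lemma toCP_wordL (L : List (ℤ × ℤ)) : toCP (wordL L) =
    ((letters L).map fun l => Monoid.CoprodI.of (M := fun _ : Fin 2 => Multiplicative ℤ) (i := l.1) l.2).prod := by
  induction L with
  | nil => simp [wordL, letters]
  | cons m L ih =>
    rw [letters_cons, List.map_cons, List.map_cons, List.prod_cons, List.prod_cons, ← ih, wordL, List.map_cons, List.prod_cons,
      map_mul, map_mul, toCP_pow, toCP_pow, mul_assoc]
    rfl

lemma wordL_inj {L L' : List (ℤ × ℤ)} (h : ∀ m ∈ L, m.1 ≠ 0 ∧ m.2 ≠ 0) (h' : ∀ m ∈ L', m.1 ≠ 0 ∧ m.2 ≠ 0)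
    (he : wordL L = wordL L') : L = L' := by
  classical
  have e := congrArg toCP he
  rw [toCP_wordL, toCP_wordL] at e
  let W : Monoid.CoprodI.Word (fun _ : Fin 2 => Multiplicative ℤ) := ⟨letters L, letters_ne L h, letters_chain L⟩
  let W' : Monoid.CoprodI.Word (fun _ : Fin 2 => Multiplicative ℤ) := ⟨letters L', letters_ne L' h', letters_chain L'⟩
  have : W = W' := Monoid.CoprodI.Word.equiv.symm.injective e
  exact letters_inj (congrArg Monoid.CoprodI.Word.toList this)

lemma wordOf_inj {r : ℕ} {a b a' b' : Fin r → ℤ} (h : ∀ i, a i ≠ 0 ∧ b i ≠ 0) (h' : ∀ i, a' i ≠ 0 ∧ b' i ≠ 0)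
    (he : wordOf a b = wordOf a' b') : ∀ i, a i = a' i ∧ b i = b' i := by
  rw [wordOf_eq, wordOf_eq] at he
  have key := wordL_inj ?_ ?_ he
  · have := List.ofFn_injective key
    intro i
    have := congrFun this i
    exact Prod.mk.injEq _ _ _ _ ▸ this
  · intro m hm
    rw [List.mem_ofFn'] at hm
    obtain ⟨i, rfl⟩ := hm
    exact h i
  · intro m hm
    rw [List.mem_ofFn'] at hm
    obtain ⟨i, rfl⟩ := hm
    exact h' i

lemma RWords_finite (N : ℕ) : (RWords N).Finite := by
  have : RWords N ⊆ ⋃ r ∈ Set.Iic N, (fun z : (Fin r → ℤ) × (Fin r → ℤ) => wordOf z.1 z.2) ''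
      ((Set.Icc (fun _ => -(N : ℤ)) (fun _ => (N : ℤ))) ×ˢ (Set.Icc (fun _ => -(N : ℤ)) (fun _ => (N : ℤ)))) := by
    rintro w ⟨r, hr, a, b, hnz, rfl, hN⟩
    have hle : ∀ i, (a i).natAbs + (b i).natAbs ≤ N := fun i =>
      (Finset.single_le_sum (f := fun i => (a i).natAbs + (b i).natAbs) (fun _ _ => Nat.zero_le _) (Finset.mem_univ i)).trans hN
    rw [Set.mem_iUnion₂]
    refine ⟨r, ?_, (a, b), ⟨⟨?_, ?_⟩, ?_, ?_⟩, rfl⟩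
    · refine le_trans ?_ hN
      calc r = ∑ i : Fin r, 1 := by simp
        _ ≤ _ := Finset.sum_le_sum fun i _ => by have := hnz i; omega
    all_goals intro i; have := hle i; show _ ≤ _; simp only; omega
  refine Set.Finite.subset ?_ this
  exact (Set.finite_Iic N).biUnion fun r _ => ((Set.finite_Icc _ _).prod (Set.finite_Icc _ _)).image _

/-- signed value -/
def sval (s : Bool) (p : ℕ) : ℤ := if s then (p + 1 : ℤ) else -(p + 1 : ℤ)

lemma sval_abs (s : Bool) (p : ℕ) : (sval s p).natAbs = p + 1 := by
  unfold sval; split_ifs <;> omega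

lemma sval_inj {s s' : Bool} {p p' : ℕ} (h : sval s p = sval s' p') : s = s' ∧ p = p' := by
  cases s <;> cases s' <;> simp [sval] at h ⊢ <;> omega

lemma lower (N r : ℕ) (hr : r.Prime) (hrN : 2 * r ≤ N) : 4 ^ r * N.choose (2 * r) ≤ Nat.card (RWords N) := by
  classical
  have : Finite (RWords N) := RWords_finite N
  let D := {P : Option (Fin r × Bool) → ℕ // ∑ i, P i = N - 2 * r} × (Fin r × Bool → Bool)
  have hsum : ∀ P : Option (Fin r × Bool) → ℕ, ∑ i, P i = P none + ∑ i : Fin r, (P (some (i, true)) + P (some (i, false))) := by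
    intro P
    rw [Fintype.sum_option, Fintype.sum_prod_type]
    congr 1
  let A : D → Fin r → ℤ := fun d i => sval (d.2 (i, true)) (d.1.1 (some (i, true)))
  let B : D → Fin r → ℤ := fun d i => sval (d.2 (i, false)) (d.1.1 (some (i, false)))
  have hnz : ∀ d i, A d i ≠ 0 ∧ B d i ≠ 0 := by
    intro d i
    constructor
    · have := sval_abs (d.2 (i, true)) (d.1.1 (some (i, true)))
      intro h; change (A d i).natAbs = _ at this; rw [h] at this; simp at this
    · have := sval_abs (d.2 (i, false)) (d.1.1 (some (i, false)))
      intro h; change (B d i).natAbs = _ at this; rw [h] at this; simp at this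
  let f : D → RWords N := fun d => ⟨wordOf (A d) (B d), r, hr, A d, B d, hnz d, rfl, by
    have h1 := d.1.2
    rw [hsum] at h1
    have h2 : ∑ i, ((A d i).natAbs + (B d i).natAbs) = 2 * r + ∑ i : Fin r, (d.1.1 (some (i, true)) + d.1.1 (some (i, false))) := by
      rw [Finset.sum_congr rfl fun i _ => show (A d i).natAbs + (B d i).natAbs = 2 + (d.1.1 (some (i, true)) + d.1.1 (some (i, false))) by
        simp only [A, B, sval_abs]; ring, Finset.sum_add_distrib]
      simp [mul_comm]
    rw [h2]; omega⟩
  have hf : Function.Injective f := by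
    intro d d' h
    have h := wordOf_inj (hnz d) (hnz d') (congrArg Subtype.val h)
    have k1 := fun i => sval_inj (h i).1
    have k2 := fun i => sval_inj (h i).2
    have hs : ∀ i, d.1.1 (some i) = d'.1.1 (some i) := by
      rintro ⟨i, _ | _⟩
      · exact (k2 i).2
      · exact (k1 i).2
    refine Prod.ext (Subtype.ext (funext ?_)) (funext ?_)
    · rintro (_ | i)
      · have h1 := d.1.2
        have h2 := d'.1.2
        rw [Fintype.sum_option] at h1 h2
        rw [Finset.sum_congr rfl fun i _ => hs i] at h1
        omega
      · exact hs i
    · rintro ⟨i, _ | _⟩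
      · exact (k2 i).1
      · exact (k1 i).1
  refine le_trans (le_of_eq ?_) (Nat.card_le_card_of_injective f hf)
  rw [Nat.card_prod, Nat.card_congr (Sym.equivNatSumOfFintype (Option (Fin r × Bool)) (N - 2 * r)).symm,
    Nat.card_eq_fintype_card, Nat.card_eq_fintype_card, Sym.card_sym_eq_choose]
  simp only [Fintype.card_option, Fintype.card_prod, Fintype.card_fin, Fintype.card_bool, Fintype.card_fun]
  rw [show r * 2 + 1 + (N - 2 * r) - 1 = N by omega, Nat.choose_symm hrN, mul_comm r 2, pow_mul, mul_comm]
  rfl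

lemma upper (N : ℕ) : Nat.card ↑(RWords N \ SWords N) ≤ (N + 1) ^ 3 * 2 ^ N := by
  let M := N / 2
  let D := Fin (N + 1) × Fin (N + 1) × Fin (N + 1) × (Fin M → Bool) × (Fin M → Bool)
  let ext : (Fin M → Bool) → ℕ → Bool := fun s i => if h : i < M then s ⟨i, h⟩ else true
  let sg : Bool → ℕ → ℤ := fun s p => if s then (p : ℤ) else -(p : ℤ)
  let g : D → FreeGroup (Fin 2) := fun d => wordOf (r := d.1.1) (fun i => sg (ext d.2.2.2.1 i) d.2.1) (fun i => sg (ext d.2.2.2.2 i) d.2.2.1)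
  have hsub : RWords N \ SWords N ⊆ Set.range g := by
    intro w hw
    obtain ⟨r, hr, a, b, α, β, hα, hβ, hab, rfl, hN⟩ := bad_form hw
    have hr2 : r ≤ M := by
      have : r * 2 ≤ N := le_trans (Nat.mul_le_mul_left r (by omega)) hN
      show r ≤ N / 2
      omega
    have hr1 := hr.pos
    have hαβ : α + β ≤ N := le_trans (Nat.le_mul_of_pos_left _ hr1) hN
    have hrN : r ≤ N := le_trans hr2 (Nat.div_le_self _ _)
    refine ⟨(⟨r, by omega⟩, ⟨α, by omega⟩, ⟨β, by omega⟩, fun i => if h : i.1 < r then decide (0 ≤ a ⟨i, h⟩) else true,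
      fun i => if h : i.1 < r then decide (0 ≤ b ⟨i, h⟩) else true), ?_⟩
    show wordOf (r := r) _ _ = _
    congr 1
    · funext i
      have h1 : i.1 < M := lt_of_lt_of_le (show i.1 < r from i.2) hr2
      have h0 : i.1 < r := i.2
      have h2 := (hab i).1
      simp only [ext, sg, h1, h0, dif_pos, decide_eq_true_eq, Fin.eta]
      split_ifs <;> omega
    · funext i
      have h1 : i.1 < M := lt_of_lt_of_le (show i.1 < r from i.2) hr2
      have h0 : i.1 < r := i.2
      have h2 := (hab i).2
      simp only [ext, sg, h1, h0, dif_pos, decide_eq_true_eq, Fin.eta]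
      split_ifs <;> omega
  refine (Nat.card_mono (Set.finite_range g) hsub).trans ((Finite.card_range_le g).trans ?_)
  have hc : Nat.card D = (N + 1) ^ 3 * (2 ^ M * 2 ^ M) := by
    simp only [D, Nat.card_eq_fintype_card, Fintype.card_prod, Fintype.card_fin, Fintype.card_bool, Fintype.card_fun]
    ring
  rw [hc, ← pow_add]
  exact Nat.mul_le_mul_left _ (Nat.pow_le_pow_right (by norm_num) (by show N / 2 + N / 2 ≤ N; omega))

lemma choose_three (k : ℕ) : 3 * 5 ^ k ≤ 5 * (3 * k).choose k := by
  induction k with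
  | zero => norm_num
  | succ k ih =>
    rcases Nat.eq_zero_or_pos k with rfl | hk
    · norm_num
    have e1 := Nat.add_one_mul_choose_eq (3 * k + 2) k
    have e2 := Nat.choose_mul_succ_eq (3 * k + 1) k
    have e3 := Nat.choose_mul_succ_eq (3 * k) k
    rw [show 3 * k + 1 + 1 - k = 2 * k + 2 by omega] at e2
    rw [show 3 * k + 1 - k = 2 * k + 1 by omega] at e3
    rw [show 3 * (k + 1) = 3 * k + 2 + 1 by ring]
    have e1' : (3 * k + 2 + 1).choose (k + 1) = 3 * (3 * k + 2).choose k := by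
      apply Nat.eq_of_mul_eq_mul_right (Nat.succ_pos k)
      rw [Nat.succ_eq_add_one, ← e1]; ring
    have e4 : (3 * k + 2).choose k * ((2 * k + 2) * (2 * k + 1)) = (3 * k).choose k * ((3 * k + 1) * (3 * k + 2)) := by
      calc (3 * k + 2).choose k * ((2 * k + 2) * (2 * k + 1)) = ((3 * k + 1 + 1).choose k * (2 * k + 2)) * (2 * k + 1) := by ring
        _ = ((3 * k + 1).choose k * (2 * k + 1)) * (3 * k + 2) := by rw [← e2]; ring
        _ = _ := by rw [← e3]; ring
    have e5 : 5 * (3 * k).choose k ≤ 3 * (3 * k + 2).choose k := by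
      have hpos : 0 < (2 * k + 2) * (2 * k + 1) := by positivity
      apply Nat.le_of_mul_le_mul_right _ hpos
      rw [mul_assoc 3, e4]
      have : 5 * ((2 * k + 2) * (2 * k + 1)) ≤ 3 * ((3 * k + 1) * (3 * k + 2)) := by nlinarith
      calc _ = (3 * k).choose k * (5 * ((2 * k + 2) * (2 * k + 1))) := by ring
        _ ≤ (3 * k).choose k * (3 * ((3 * k + 1) * (3 * k + 2))) := Nat.mul_le_mul_left _ this
        _ = _ := by ring
    rw [e1', pow_succ]
    omega

lemma choose_mid (m j : ℕ) : ∀ k, j ≤ k → k ≤ m / 2 → m.choose j ≤ m.choose k := by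
  intro k hk
  induction k, hk using Nat.le_induction with
  | base => intro _; exact le_rfl
  | succ k hk ih => intro h; exact (ih (by omega)).trans (Nat.choose_le_succ_of_lt_half_left (by omega))

lemma lower2 (N n : ℕ) (hn : n ≠ 0) (hN : 6 * n ≤ N) : 3 * 100 ^ n ≤ 5 * Nat.card (RWords N) := by
  obtain ⟨r, hr, h1, h2⟩ := Nat.exists_prime_lt_and_le_two_mul n hn
  have hl := lower N r hr (by omega)
  have hc : (6 * n).choose (2 * n) ≤ N.choose (2 * r) := by
    refine le_trans ?_ (Nat.choose_le_choose _ hN)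
    rcases le_or_gt (2 * r) (3 * n) with h | h
    · exact choose_mid _ _ _ (by omega) (by omega)
    · rw [← Nat.choose_symm (show 2 * r ≤ 6 * n by omega)]
      exact choose_mid _ _ _ (by omega) (by omega)
  have h3 := choose_three (2 * n)
  rw [show 3 * (2 * n) = 6 * n by ring] at h3
  have h4 : 4 ^ n ≤ 4 ^ r := Nat.pow_le_pow_right (by norm_num) h1.le
  calc 3 * 100 ^ n = 4 ^ n * (3 * 5 ^ (2 * n)) := by
        rw [pow_mul, show (100 : ℕ) = 4 * 5 ^ 2 by norm_num, mul_pow]; ring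
    _ ≤ 4 ^ r * (5 * (6 * n).choose (2 * n)) := Nat.mul_le_mul h4 h3
    _ ≤ 4 ^ r * (5 * N.choose (2 * r)) := Nat.mul_le_mul_left _ (Nat.mul_le_mul_left _ hc)
    _ = 5 * (4 ^ r * N.choose (2 * r)) := by ring
    _ ≤ _ := Nat.mul_le_mul_left _ hl

lemma lower3 (N : ℕ) (hN : 4 ≤ N) : (2.15 : ℝ) ^ N ≤ 200 * Nat.card (RWords N) := by
  rcases lt_or_ge N 6 with h | h
  · have hl := lower N 2 Nat.prime_two (by omega)
    have hp : 0 < N.choose (2 * 2) := Nat.choose_pos (by omega)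
    have : 16 ≤ Nat.card (RWords N) := by omega
    have : (16 : ℝ) ≤ Nat.card (RWords N) := by exact_mod_cast this
    have h5 : (2.15 : ℝ) ^ N ≤ 2.15 ^ 5 := pow_le_pow_right₀ (by norm_num) (by omega)
    have : (2.15 : ℝ) ^ 5 ≤ 200 * 16 := by norm_num
    linarith
  · have hl := lower2 N (N / 6) (by omega) (by omega)
    have hl : (3 : ℝ) * 100 ^ (N / 6) ≤ 5 * Nat.card (RWords N) := by exact_mod_cast hl
    have h1 : (2.15 : ℝ) ^ N ≤ 2.15 ^ (6 * (N / 6) + 5) := pow_le_pow_right₀ (by norm_num) (by omega)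
    have h2 : ((2.15 : ℝ) ^ 6) ^ (N / 6) ≤ 100 ^ (N / 6) := pow_le_pow_left₀ (by norm_num) (by norm_num) _
    rw [pow_add, pow_mul] at h1
    have h3 : (2.15 : ℝ) ^ 5 ≤ 60 := by norm_num
    have h0 : (0 : ℝ) ≤ (2.15 ^ 6) ^ (N / 6) := by positivity
    nlinarith

lemma poly_bd : ∃ M : ℝ, 0 < M ∧ ∀ N : ℕ, ((N : ℝ) + 1) ^ 3 * 2 ^ N ≤ M * 2.0425 ^ N := by
  have h := tendsto_pow_const_mul_const_pow_of_abs_lt_one 3 (r := (2 / 2.0425 : ℝ)) (by rw [abs_of_pos] <;> norm_num)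
  obtain ⟨M, hM⟩ := h.bddAbove_range
  refine ⟨max M 1 * 2, by positivity, fun N => ?_⟩
  have h1 := hM ⟨N + 1, rfl⟩
  simp only at h1
  have h2 := h1.trans (le_max_left M 1)
  push_cast at h2
  rw [pow_succ (2 / 2.0425 : ℝ), div_pow] at h2
  have hp : (0 : ℝ) < 2.0425 ^ N := by positivity
  have h3 : (2 : ℝ) ^ N / 2.0425 ^ N * (2 / 2.0425) * 2.0425 ^ N = 2 ^ N * (2 / 2.0425) := by field_simp
  have h4 := mul_le_mul_of_nonneg_right h2 hp.le
  rw [mul_assoc, h3] at h4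
  have h5 : (0 : ℝ) ≤ ((N : ℝ) + 1) ^ 3 * 2 ^ N := by positivity
  have h6 : (1 : ℝ) / 2 ≤ 2 / 2.0425 := by norm_num
  have h7 := mul_le_mul_of_nonneg_left h6 h5
  nlinarith

end EqW

theorem equidistributed_words_exponentially_generic :
    ∃ C : ℝ, 0 < C ∧ ∃ c : ℝ, 0 < c ∧ c < 1 ∧
      ∀ N : ℕ, 4 ≤ N →
        (Nat.card ((RWords N \ SWords N : Set (FreeGroup (Fin 2)))) : ℝ) ≤
          C * c ^ N * (Nat.card (RWords N) : ℝ) := by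
  obtain ⟨M, hM, h⟩ := EqW.poly_bd
  refine ⟨200 * M, by positivity, 0.95, by norm_num, by norm_num, fun N hN => ?_⟩
  have h1 := EqW.upper N
  have h1 : (Nat.card ↑(RWords N \ SWords N) : ℝ) ≤ ((N : ℝ) + 1) ^ 3 * 2 ^ N := by exact_mod_cast h1
  have h2 := EqW.lower3 N hN
  have h3 : (2.0425 : ℝ) ^ N = 0.95 ^ N * 2.15 ^ N := by rw [← mul_pow]; norm_num
  have h4 : (0 : ℝ) ≤ M * 0.95 ^ N := by positivity
  have h5 := mul_le_mul_of_nonneg_left h2 h4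
  have h6 := h N
  rw [h3] at h6
  calc (Nat.card ↑(RWords N \ SWords N) : ℝ) ≤ M * (0.95 ^ N * 2.15 ^ N) := h1.trans h6
    _ = M * 0.95 ^ N * 2.15 ^ N := by ring
    _ ≤ M * 0.95 ^ N * (200 * Nat.card (RWords N)) := h5
    _ = _ := by ring
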